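/- Let K be a field, t ∈ K^× and κ ∈ Z^ℓ a multicharge, and suppose (K,t) separates Std(P_n). Let α = {α_r(t)} be a seminormal coefficient system and choose a nonzero scalar γ_{t^λ} ∈ K^× for each ℓ-multipartition λ of n. Then there exist elements f_{st} ∈ H_n(K,t,κ), one for each pair (s,t) of standard tableaux of the same shape, and nonzero scalars γ_t ∈ K^× for t ∈ Std(P_n) with γ_{t^λ} as chosen, such that: (i) the f_{st} form a K-basis of H_n(K,t,κ); (ii) f_{st} L_k = [c_k(t)]_t f_{st} and L_k f_{st} = [c_k(s)]_t f_{st} for 1 ≤ k ≤ n; (iii) f_{st} T_r = α_r(t) f_{sv} − (1/[ρ_r(t)]_t) f_{st} and T_r f_{st} = α_r(s) f_{ut} − (1/[ρ_r(s)]_t) f_{st} for 1 ≤ r < n, where v = t(r,r+1), u = s(r,r+1), and f_{sv} = 0 (resp. f_{ut} = 0) if v (resp. u) is not standard; (iv) f_{st} f_{uv} = δ_{tu} γ_t f_{sv} for all same-shape pairs (s,t), (u,v). Moreover the family (f_{st}) with these properties is uniquely determined by α and the chosen scalars {γ_{t^λ}}. -/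

import Mathlib

open scoped BigOperators
open scoped Classical

namespace Paper

/-! ## Quantum integers -/

/-- The quantum integer `[d]_x` in a field, for `d ∈ ℤ`. -/
noncomputable def qint {K : Type*} [Field K] (x : K) (d : ℤ) : K :=
  if 0 ≤ d then ∑ k ∈ Finset.range d.toNat, x ^ k
  else -∑ k ∈ Finset.range (-d).toNat, x ^ (-((k : ℤ) + 1))

/-- The quantum integer `[d]_t` in a commutative ring, for an invertible `t` and `d ∈ ℤ`. -/
def qintU {O : Type*} [CommRing O] (t : Oˣ) (d : ℤ) : O :=
  if 0 ≤ d then ∑ k ∈ Finset.range d.toNat, (t : O) ^ k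
  else -∑ k ∈ Finset.range (-d).toNat, ((t ^ (-((k : ℤ) + 1)) : Oˣ) : O)

/-! ## Nodes, multipartitions and standard tableaux -/

/-- A node `(l, r, c)`: component `l`, row `r`, column `c` (all `0`-based). -/
abbrev Node : Type := ℕ × ℕ × ℕ

/-- `nodeBelow A B` holds when `B` is strictly below `A`, i.e. `A < B` lexicographically. -/
def nodeBelow (A B : Node) : Prop :=
  A.1 < B.1 ∨ (A.1 = B.1 ∧ (A.2.1 < B.2.1 ∨ (A.2.1 = B.2.1 ∧ A.2.2 < B.2.2)))

/-- An `ℓ`-multipartition of `n`. -/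
structure Multipartition (ℓ n : ℕ) : Type where
  part : ℕ → ℕ → ℕ
  comp_bound : ∀ l, ℓ ≤ l → ∀ r, part l r = 0
  antitone : ∀ l, Antitone (part l)
  row_bound : ∀ l r, n ≤ r → part l r = 0
  size : (∑ l ∈ Finset.range ℓ, ∑ r ∈ Finset.range n, part l r) = n

/-- The diagram of a multipartition. -/
def Multipartition.diagram {ℓ n : ℕ} (μ : Multipartition ℓ n) : Set Node :=
  {A | A.2.2 < μ.part A.1 A.2.1}

/-- A standard tableau: a bijection from the diagram of its shape onto `{1, …, n}`
that increases along rows and down columns of each component (it takes the value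
`0` off the diagram, so that it is determined by its entries). -/
structure StdTableau (ℓ n : ℕ) : Type where
  shape : Multipartition ℓ n
  entry : Node → ℕ
  entry_zero : ∀ A, A ∉ shape.diagram → entry A = 0
  bijOn : Set.BijOn entry shape.diagram (Set.Icc 1 n)
  row_inc : ∀ l r c, (l, r, c + 1) ∈ shape.diagram → entry (l, r, c) < entry (l, r, c + 1)
  col_inc : ∀ l r c, (l, r + 1, c) ∈ shape.diagram → entry (l, r, c) < entry (l, r + 1, c)

/-- The node of a standard tableau containing the entry `k`. -/
noncomputable def StdTableau.node {ℓ n : ℕ} (T : StdTableau ℓ n) (k : ℕ) : Node :=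
  Function.invFunOn T.entry T.shape.diagram k

/-- The content `c_k(T) = κ_l + c - r` of the entry `k` in the tableau `T`
(`1 ≤ k ≤ n`). -/
noncomputable def content {ℓ n : ℕ} (κ : ℕ → ℤ) (T : StdTableau ℓ n) (k : ℕ) : ℤ :=
  κ (T.node k).1 + ((T.node k).2.2 : ℤ) - ((T.node k).2.1 : ℤ)

/-- The residue sequence of a standard tableau, in `I^n` with `I = ℤ/eℤ`. -/
noncomputable def resSeq {ℓ n : ℕ} (e : ℕ) (κ : ℕ → ℤ) (T : StdTableau ℓ n) :
    Fin n → ZMod e :=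
  fun k => ((content κ T (k.1 + 1) : ℤ) : ZMod e)

/-- The residue of a node. -/
def resNode (e : ℕ) (κ : ℕ → ℤ) (A : Node) : ZMod e :=
  ((κ A.1 + (A.2.2 : ℤ) - (A.2.1 : ℤ) : ℤ) : ZMod e)

/-- A set of nodes is the diagram of a multipartition (with at most `ℓ` components)
iff it is finite and downward closed in rows and columns. -/
def IsDiagramSet (ℓ : ℕ) (S : Set Node) : Prop :=
  S.Finite ∧ (∀ A ∈ S, A.1 < ℓ) ∧
    (∀ l r c, (l, r, c + 1) ∈ S → (l, r, c) ∈ S) ∧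
    (∀ l r c, (l, r + 1, c) ∈ S → (l, r, c) ∈ S)

/-- `A` is an addable node of the diagram `S`. -/
def Addable (ℓ : ℕ) (S : Set Node) (A : Node) : Prop :=
  A ∉ S ∧ IsDiagramSet ℓ (S ∪ {A})

/-- `A` is a removable node of the diagram `S`. -/
def Removable (ℓ : ℕ) (S : Set Node) (A : Node) : Prop :=
  A ∈ S ∧ IsDiagramSet ℓ (S \ {A})

/-- `d_A(S)`: the number of addable nodes of `S` of the same residue as `A` strictly
below `A`, minus the number of removable ones. -/
noncomputable def dNode (ℓ e : ℕ) (κ : ℕ → ℤ) (S : Set Node) (A : Node) : ℤ :=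
  (Set.ncard {B | Addable ℓ S B ∧ resNode e κ B = resNode e κ A ∧ nodeBelow A B} : ℤ) -
    (Set.ncard {B | Removable ℓ S B ∧ resNode e κ B = resNode e κ A ∧ nodeBelow A B} : ℤ)

/-- The Brundan–Kleshchev–Wang degree `deg_e(T)` of a standard tableau, written as the
telescoping sum of the recursion `deg_e(T) = deg_e(T↓(n-1)) + d_A(Shape(T))`. -/
noncomputable def degE {ℓ n : ℕ} (e : ℕ) (κ : ℕ → ℤ) (T : StdTableau ℓ n) : ℤ :=
  ∑ m ∈ Finset.Icc 1 n,
    dNode ℓ e κ {A | A ∈ T.shape.diagram ∧ T.entry A ≤ m} (T.node m)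

/-- The restriction of the diagram of `T` to entries `≤ m` (the diagram of `Shape(T↓m)`). -/
def restDiag {ℓ n : ℕ} (T : StdTableau ℓ n) (m : ℕ) : Set Node :=
  {A | A ∈ T.shape.diagram ∧ T.entry A ≤ m}

/-- Dominance order on standard tableaux: `domTab S T` iff `S ⊵ T`. -/
def domTab {ℓ n : ℕ} (S T : StdTableau ℓ n) : Prop :=
  ∀ m l i : ℕ,
    Set.ncard {A | A ∈ restDiag T m ∧ (A.1 < l ∨ (A.1 = l ∧ A.2.1 ≤ i))} ≤
      Set.ncard {A | A ∈ restDiag S m ∧ (A.1 < l ∨ (A.1 = l ∧ A.2.1 ≤ i))}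

/-- Interchange the entries `r` and `r + 1` in an entry function. -/
def swapEntry (f : Node → ℕ) (r : ℕ) : Node → ℕ :=
  fun A => if f A = r then r + 1 else if f A = r + 1 then r else f A

/-- `ρ_r(T) = c_r(T) - c_{r+1}(T)`, the axial distance. -/
noncomputable def rhoTab {ℓ n : ℕ} (κ : ℕ → ℤ) (T : StdTableau ℓ n) (r : ℕ) : ℤ :=
  content κ T r - content κ T (r + 1)

/-- The entry function of the row-reading initial tableau `t^λ`. -/
noncomputable def tlamEntry {ℓ n : ℕ} (μ : Multipartition ℓ n) (A : Node) : ℕ :=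
  if A ∈ μ.diagram then
    (∑ l ∈ Finset.range A.1, ∑ r ∈ Finset.range n, μ.part l r) +
      (∑ r ∈ Finset.range A.2.1, μ.part A.1 r) + A.2.2 + 1
  else 0

/-- The finite set of possible contents of standard tableaux of size `n`. -/
noncomputable def contFinset (ℓ n : ℕ) (κ : ℕ → ℤ) : Finset ℤ :=
  ((Finset.range ℓ ×ˢ Finset.range n ×ˢ Finset.range n).image
      (fun x => κ x.1 + (x.2.2 : ℤ) - (x.2.1 : ℤ))).filter
    (fun c => ∃ T : StdTableau ℓ n, ∃ k, 1 ≤ k ∧ k ≤ n ∧ content κ T k = c)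

/-- The standard tableau (if any) obtained from `T` by interchanging the entries
`r` and `r + 1`; i.e. `T·s_r` if it is standard, and `none` otherwise. -/
noncomputable def oSwapO {ℓ n : ℕ} (T : StdTableau ℓ n) (r : ℕ) :
    Option (StdTableau ℓ n) :=
  if h : ∃ V : StdTableau ℓ n, V.entry = swapEntry T.entry r then some (Classical.choose h)
  else none

/-- `oSwap` extended to `Option`. -/
noncomputable def oSwap {ℓ n : ℕ} (X : Option (StdTableau ℓ n)) (r : ℕ) :
    Option (StdTableau ℓ n) :=
  X.bind fun T => oSwapO T r

/-- Evaluate a seminormal coefficient system on an optional tableau (by `0` if none). -/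
noncomputable def aE {ℓ n : ℕ} {K : Type*} [Field K] (α : ℕ → StdTableau ℓ n → K) (r : ℕ)
    (X : Option (StdTableau ℓ n)) : K :=
  X.elim 0 (α r)

/-! ## Separation and idempotent subrings -/

/-- `(K, t)` separates `Std(P_n)` (field version):
`[n]!_t ∏_{1 ≤ l < m ≤ ℓ} ∏_{-n < d < n} [κ_l - κ_m + d]_t ≠ 0`. -/
def SeparatesF {K : Type*} [Field K] (t : Kˣ) (n ℓ : ℕ) (κ : ℕ → ℤ) : Prop :=
  ((∏ d ∈ Finset.Icc 1 n, qint (t : K) (d : ℤ)) *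
      ∏ l ∈ Finset.range ℓ, ∏ m ∈ Finset.Ioo l ℓ,
        ∏ d ∈ Finset.Ioo (-(n : ℤ)) (n : ℤ), qint (t : K) (κ l - κ m + d)) ≠ 0

/-- `(O, t)` separates `Std(P_n)` (subring version): the separation element is a unit. -/
def SeparatesU {O : Type*} [CommRing O] (t : Oˣ) (n ℓ : ℕ) (κ : ℕ → ℤ) : Prop :=
  IsUnit ((∏ d ∈ Finset.Icc 1 n, qintU t (d : ℤ)) *
      ∏ l ∈ Finset.range ℓ, ∏ m ∈ Finset.Ioo l ℓ,
        ∏ d ∈ Finset.Ioo (-(n : ℤ)) (n : ℤ), qintU t (κ l - κ m + d))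

/-- `(O, t)` is an `e`-idempotent subring of the field `K`. -/
def IsIdempotentSubring {K : Type*} [Field K] (O : Subring K) (t : Oˣ) (e n ℓ : ℕ)
    (κ : ℕ → ℤ) : Prop :=
  SeparatesU t n ℓ κ ∧
    (∀ k : ℤ, ¬(e : ℤ) ∣ k → IsUnit (qintU t k)) ∧
    (∀ k : ℤ, (e : ℤ) ∣ k → qintU t k ∈ Ideal.jacobson (⊥ : Ideal O))

/-! ## The cyclotomic Hecke algebra, by generators and relations -/

/-- Generators `L_1, …, L_n`, `T_1, …, T_{n-1}` (here `0`-based). -/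
inductive HeckeGen (n : ℕ) : Type
  | L : Fin n → HeckeGen n
  | T : Fin (n - 1) → HeckeGen n

/-- The position `r` of the pair `(r, r+1)` interchanged by the `r`-th transposition. -/
def pL {n : ℕ} (r : Fin (n - 1)) : Fin n := ⟨r.1, by have := r.2; omega⟩

/-- The position `r + 1` of the pair interchanged by the `r`-th transposition. -/
def pR {n : ℕ} (r : Fin (n - 1)) : Fin n := ⟨r.1 + 1, by have := r.2; omega⟩

/-- The position `r + 2`, used in braid relations. -/
def pM {n : ℕ} (r : Fin (n - 1)) (hr : r.1 + 1 < n - 1) : Fin n := ⟨r.1 + 2, by omega⟩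

/-- The free algebra generator `L_k`. -/
def hL (R : Type*) [CommRing R] {n : ℕ} (k : Fin n) : FreeAlgebra R (HeckeGen n) :=
  FreeAlgebra.ι R (HeckeGen.L k)

/-- The free algebra generator `T_r`. -/
def hT (R : Type*) [CommRing R] {n : ℕ} (r : Fin (n - 1)) : FreeAlgebra R (HeckeGen n) :=
  FreeAlgebra.ι R (HeckeGen.T r)

/-- The defining relations of the integral cyclotomic Hecke algebra `H_n(R, t, κ)`. -/
inductive HeckeRel (R : Type*) [CommRing R] (t : Rˣ) (n ℓ : ℕ) (κ : ℕ → ℤ) :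
    FreeAlgebra R (HeckeGen n) → FreeAlgebra R (HeckeGen n) → Prop
  | cyc (h : 0 < n) :
      HeckeRel R t n ℓ κ
        (((List.range ℓ).map fun l =>
          hL R (⟨0, h⟩ : Fin n) - algebraMap R _ (qintU t (κ l))).prod) 0
  | quad (r : Fin (n - 1)) :
      HeckeRel R t n ℓ κ ((hT R r + 1) * (hT R r - algebraMap R _ (t : R))) 0
  | LL (k m : Fin n) : HeckeRel R t n ℓ κ (hL R k * hL R m) (hL R m * hL R k)
  | TTfar (r s : Fin (n - 1)) (h : r.1 + 1 < s.1 ∨ s.1 + 1 < r.1) :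
      HeckeRel R t n ℓ κ (hT R r * hT R s) (hT R s * hT R r)
  | braid (r s : Fin (n - 1)) (h : s.1 = r.1 + 1) :
      HeckeRel R t n ℓ κ (hT R r * hT R s * hT R r) (hT R s * hT R r * hT R s)
  | TL (r : Fin (n - 1)) (k : Fin n) (h : k.1 ≠ r.1 ∧ k.1 ≠ r.1 + 1) :
      HeckeRel R t n ℓ κ (hT R r * hL R k) (hL R k * hT R r)
  | LT (r : Fin (n - 1)) :
      HeckeRel R t n ℓ κ (hL R (pR r) * (hT R r - algebraMap R _ (t : R) + 1))
        (hT R r * hL R (pL r) + 1)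

/-- The integral cyclotomic Hecke algebra of type `A`, `H_n(R, t, κ)`. -/
noncomputable abbrev CycHecke (R : Type*) [CommRing R] (t : Rˣ) (n ℓ : ℕ) (κ : ℕ → ℤ) :
    Type _ :=
  RingQuot (HeckeRel R t n ℓ κ)

/-- The generator `L_k` of the cyclotomic Hecke algebra. -/
noncomputable def Lgen (R : Type*) [CommRing R] (t : Rˣ) (n ℓ : ℕ) (κ : ℕ → ℤ)
    (k : Fin n) : CycHecke R t n ℓ κ :=
  RingQuot.mkAlgHom R (HeckeRel R t n ℓ κ) (hL R k)

/-- The generator `T_r` of the cyclotomic Hecke algebra. -/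
noncomputable def Tgen (R : Type*) [CommRing R] (t : Rˣ) (n ℓ : ℕ) (κ : ℕ → ℤ)
    (r : Fin (n - 1)) : CycHecke R t n ℓ κ :=
  RingQuot.mkAlgHom R (HeckeRel R t n ℓ κ) (hT R r)

end Paper
/-! ## Quiver Hecke (KLR) algebras, by generators and relations -/

namespace Paper

/-- Generators `e(i)` (`i ∈ I^n`), `ψ_1, …, ψ_{n-1}`, `y_1, …, y_n` (here `0`-based). -/
inductive KLRGen (n e : ℕ) : Type
  | idem : (Fin n → ZMod e) → KLRGen n e
  | psi : Fin (n - 1) → KLRGen n e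
  | y : Fin n → KLRGen n e

/-- The free algebra generator `e(i)`. -/
def kE (R : Type*) [CommRing R] {n e : ℕ} (i : Fin n → ZMod e) :
    FreeAlgebra R (KLRGen n e) :=
  FreeAlgebra.ι R (KLRGen.idem i)

/-- The free algebra generator `ψ_r`. -/
def kPsi (R : Type*) [CommRing R] {n e : ℕ} (r : Fin (n - 1)) :
    FreeAlgebra R (KLRGen n e) :=
  FreeAlgebra.ι R (KLRGen.psi r)

/-- The free algebra generator `y_k`. -/
def kY (R : Type*) [CommRing R] {n e : ℕ} (k : Fin n) : FreeAlgebra R (KLRGen n e) :=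
  FreeAlgebra.ι R (KLRGen.y k)

/-- `s_r · i`: interchange the entries of `i` at positions `r` and `r + 1`. -/
def swapSeq {n e : ℕ} (i : Fin n → ZMod e) (r : Fin (n - 1)) : Fin n → ZMod e :=
  fun k => if k = pL r then i (pR r) else if k = pR r then i (pL r) else i k

/-- The defining relations of the cyclotomic quiver Hecke algebra `R_n^Λ(R)` where
`Λ = Σ_l Λ_{κ_l mod e}`. -/
inductive KLRRel (R : Type*) [CommRing R] (n e ℓ : ℕ) [NeZero e] (κ : ℕ → ℤ) :
    FreeAlgebra R (KLRGen n e) → FreeAlgebra R (KLRGen n e) → Prop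
  | cyc (h : 0 < n) (i : Fin n → ZMod e) :
      KLRRel R n e ℓ κ
        ((kY R (⟨0, h⟩ : Fin n)) ^
            (((Finset.range ℓ).filter fun l => ((κ l : ZMod e) = i ⟨0, h⟩)).card) *
          kE R i) 0
  | orth (i j : Fin n → ZMod e) (h : i ≠ j) : KLRRel R n e ℓ κ (kE R i * kE R j) 0
  | idem (i : Fin n → ZMod e) : KLRRel R n e ℓ κ (kE R i * kE R i) (kE R i)
  | complete : KLRRel R n e ℓ κ (∑ i : Fin n → ZMod e, kE R i) 1
  | yE (k : Fin n) (i : Fin n → ZMod e) :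
      KLRRel R n e ℓ κ (kY R k * kE R i) (kE R i * kY R k)
  | psiE (r : Fin (n - 1)) (i : Fin n → ZMod e) :
      KLRRel R n e ℓ κ (kPsi R r * kE R i) (kE R (swapSeq i r) * kPsi R r)
  | yy (k m : Fin n) : KLRRel R n e ℓ κ (kY R k * kY R m) (kY R m * kY R k)
  | psiyEq (r : Fin (n - 1)) (i : Fin n → ZMod e) (h : i (pL r) = i (pR r)) :
      KLRRel R n e ℓ κ (kPsi R r * kY R (pR r) * kE R i)
        ((kY R (pL r) * kPsi R r + 1) * kE R i)
  | psiyNe (r : Fin (n - 1)) (i : Fin n → ZMod e) (h : i (pL r) ≠ i (pR r)) :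
      KLRRel R n e ℓ κ (kPsi R r * kY R (pR r) * kE R i)
        (kY R (pL r) * kPsi R r * kE R i)
  | ypsiEq (r : Fin (n - 1)) (i : Fin n → ZMod e) (h : i (pL r) = i (pR r)) :
      KLRRel R n e ℓ κ (kY R (pR r) * kPsi R r * kE R i)
        ((kPsi R r * kY R (pL r) + 1) * kE R i)
  | ypsiNe (r : Fin (n - 1)) (i : Fin n → ZMod e) (h : i (pL r) ≠ i (pR r)) :
      KLRRel R n e ℓ κ (kY R (pR r) * kPsi R r * kE R i)
        (kPsi R r * kY R (pL r) * kE R i)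
  | psiyFar (r : Fin (n - 1)) (k : Fin n) (h : k.1 ≠ r.1 ∧ k.1 ≠ r.1 + 1) :
      KLRRel R n e ℓ κ (kPsi R r * kY R k) (kY R k * kPsi R r)
  | psipsiFar (r s : Fin (n - 1)) (h : r.1 + 1 < s.1 ∨ s.1 + 1 < r.1) :
      KLRRel R n e ℓ κ (kPsi R r * kPsi R s) (kPsi R s * kPsi R r)
  | quadEq (r : Fin (n - 1)) (i : Fin n → ZMod e) (h : i (pL r) = i (pR r)) :
      KLRRel R n e ℓ κ (kPsi R r ^ 2 * kE R i) 0
  | quadR (r : Fin (n - 1)) (i : Fin n → ZMod e)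
      (h1 : i (pR r) = i (pL r) + 1) (h2 : i (pL r) ≠ i (pR r) + 1) :
      KLRRel R n e ℓ κ (kPsi R r ^ 2 * kE R i) ((kY R (pL r) - kY R (pR r)) * kE R i)
  | quadL (r : Fin (n - 1)) (i : Fin n → ZMod e)
      (h1 : i (pL r) = i (pR r) + 1) (h2 : i (pR r) ≠ i (pL r) + 1) :
      KLRRel R n e ℓ κ (kPsi R r ^ 2 * kE R i) ((kY R (pR r) - kY R (pL r)) * kE R i)
  | quadBoth (r : Fin (n - 1)) (i : Fin n → ZMod e)
      (h1 : i (pR r) = i (pL r) + 1) (h2 : i (pL r) = i (pR r) + 1) :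
      KLRRel R n e ℓ κ (kPsi R r ^ 2 * kE R i)
        ((kY R (pR r) - kY R (pL r)) * (kY R (pL r) - kY R (pR r)) * kE R i)
  | quadNone (r : Fin (n - 1)) (i : Fin n → ZMod e) (h1 : i (pL r) ≠ i (pR r))
      (h2 : i (pR r) ≠ i (pL r) + 1) (h3 : i (pL r) ≠ i (pR r) + 1) :
      KLRRel R n e ℓ κ (kPsi R r ^ 2 * kE R i) (kE R i)
  | braidR (r : Fin (n - 1)) (hr : r.1 + 1 < n - 1) (i : Fin n → ZMod e)
      (h0 : i (pM r hr) = i (pL r)) (h1 : i (pR r) = i (pL r) + 1)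
      (h2 : i (pL r) ≠ i (pR r) + 1) :
      KLRRel R n e ℓ κ (kPsi R r * kPsi R ⟨r.1 + 1, hr⟩ * kPsi R r * kE R i)
        ((kPsi R ⟨r.1 + 1, hr⟩ * kPsi R r * kPsi R ⟨r.1 + 1, hr⟩ - 1) * kE R i)
  | braidL (r : Fin (n - 1)) (hr : r.1 + 1 < n - 1) (i : Fin n → ZMod e)
      (h0 : i (pM r hr) = i (pL r)) (h1 : i (pL r) = i (pR r) + 1)
      (h2 : i (pR r) ≠ i (pL r) + 1) :
      KLRRel R n e ℓ κ (kPsi R r * kPsi R ⟨r.1 + 1, hr⟩ * kPsi R r * kE R i)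
        ((kPsi R ⟨r.1 + 1, hr⟩ * kPsi R r * kPsi R ⟨r.1 + 1, hr⟩ + 1) * kE R i)
  | braidBoth (r : Fin (n - 1)) (hr : r.1 + 1 < n - 1) (i : Fin n → ZMod e)
      (h0 : i (pM r hr) = i (pL r)) (h1 : i (pR r) = i (pL r) + 1)
      (h2 : i (pL r) = i (pR r) + 1) :
      KLRRel R n e ℓ κ (kPsi R r * kPsi R ⟨r.1 + 1, hr⟩ * kPsi R r * kE R i)
        ((kPsi R ⟨r.1 + 1, hr⟩ * kPsi R r * kPsi R ⟨r.1 + 1, hr⟩ +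
            kY R (pL r) - 2 * kY R (pR r) + kY R (pM r hr)) * kE R i)
  | braidNone (r : Fin (n - 1)) (hr : r.1 + 1 < n - 1) (i : Fin n → ZMod e)
      (h : ¬(i (pM r hr) = i (pL r) ∧
        (i (pR r) = i (pL r) + 1 ∨ i (pL r) = i (pR r) + 1))) :
      KLRRel R n e ℓ κ (kPsi R r * kPsi R ⟨r.1 + 1, hr⟩ * kPsi R r * kE R i)
        (kPsi R ⟨r.1 + 1, hr⟩ * kPsi R r * kPsi R ⟨r.1 + 1, hr⟩ * kE R i)

/-- The cyclotomic quiver Hecke algebra `R_n^Λ(R)`, `Λ = Σ_l Λ_{κ_l mod e}`. -/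
noncomputable abbrev KLR (R : Type*) [CommRing R] (n e ℓ : ℕ) [NeZero e] (κ : ℕ → ℤ) :
    Type _ :=
  RingQuot (KLRRel R n e ℓ κ)

/-- The generator `e(i)` of the cyclotomic quiver Hecke algebra. -/
noncomputable def KeGen (R : Type*) [CommRing R] (n e ℓ : ℕ) [NeZero e] (κ : ℕ → ℤ)
    (i : Fin n → ZMod e) : KLR R n e ℓ κ :=
  RingQuot.mkAlgHom R (KLRRel R n e ℓ κ) (kE R i)

/-- The generator `ψ_r` of the cyclotomic quiver Hecke algebra. -/
noncomputable def KpsiGen (R : Type*) [CommRing R] (n e ℓ : ℕ) [NeZero e] (κ : ℕ → ℤ)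
    (r : Fin (n - 1)) : KLR R n e ℓ κ :=
  RingQuot.mkAlgHom R (KLRRel R n e ℓ κ) (kPsi R r)

/-- The generator `y_k` of the cyclotomic quiver Hecke algebra. -/
noncomputable def KyGen (R : Type*) [CommRing R] (n e ℓ : ℕ) [NeZero e] (κ : ℕ → ℤ)
    (k : Fin n) : KLR R n e ℓ κ :=
  RingQuot.mkAlgHom R (KLRRel R n e ℓ κ) (kY R k)

end Paper
/-! ## The deformed cyclotomic quiver Hecke algebra -/

namespace Paper

/-- `y_k^⟨d⟩ = t^d y_k + [d]_t` in the free algebra. -/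
def ydot (R : Type*) [CommRing R] (t : Rˣ) {n e : ℕ} (d : ℤ) (k : Fin n) :
    FreeAlgebra R (KLRGen n e) :=
  algebraMap R _ ((t ^ d : Rˣ) : R) * kY R k + algebraMap R _ (qintU t d)

/-- `ρ_r(i) = î_r - î_{r+1}` for `i ∈ I^n`. -/
def rhoI {n e : ℕ} (i : Fin n → ZMod e) (r : Fin (n - 1)) : ℤ :=
  ((i (pL r)).val : ℤ) - ((i (pR r)).val : ℤ)

/-- The defining relations of the deformed cyclotomic quiver Hecke algebra `R_n(O)`. -/
inductive DefKLRRel (R : Type*) [CommRing R] (t : Rˣ) (n e ℓ : ℕ) [NeZero e] (κ : ℕ → ℤ) :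
    FreeAlgebra R (KLRGen n e) → FreeAlgebra R (KLRGen n e) → Prop
  | cyc (h : 0 < n) (i : Fin n → ZMod e) :
      DefKLRRel R t n e ℓ κ
        ((((List.range ℓ).map fun l =>
            if ((κ l : ZMod e) = i ⟨0, h⟩) then
              kY R (⟨0, h⟩ : Fin n) -
                algebraMap R _ (qintU t (κ l - ((i ⟨0, h⟩).val : ℤ)))
            else 1).prod) * kE R i) 0
  | orth (i j : Fin n → ZMod e) (h : i ≠ j) : DefKLRRel R t n e ℓ κ (kE R i * kE R j) 0
  | idem (i : Fin n → ZMod e) : DefKLRRel R t n e ℓ κ (kE R i * kE R i) (kE R i)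
  | complete : DefKLRRel R t n e ℓ κ (∑ i : Fin n → ZMod e, kE R i) 1
  | yE (k : Fin n) (i : Fin n → ZMod e) :
      DefKLRRel R t n e ℓ κ (kY R k * kE R i) (kE R i * kY R k)
  | psiE (r : Fin (n - 1)) (i : Fin n → ZMod e) :
      DefKLRRel R t n e ℓ κ (kPsi R r * kE R i) (kE R (swapSeq i r) * kPsi R r)
  | yy (k m : Fin n) : DefKLRRel R t n e ℓ κ (kY R k * kY R m) (kY R m * kY R k)
  | psiyEq (r : Fin (n - 1)) (i : Fin n → ZMod e) (h : i (pL r) = i (pR r)) :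
      DefKLRRel R t n e ℓ κ (kPsi R r * kY R (pR r) * kE R i)
        ((kY R (pL r) * kPsi R r + 1) * kE R i)
  | psiyNe (r : Fin (n - 1)) (i : Fin n → ZMod e) (h : i (pL r) ≠ i (pR r)) :
      DefKLRRel R t n e ℓ κ (kPsi R r * kY R (pR r) * kE R i)
        (kY R (pL r) * kPsi R r * kE R i)
  | ypsiEq (r : Fin (n - 1)) (i : Fin n → ZMod e) (h : i (pL r) = i (pR r)) :
      DefKLRRel R t n e ℓ κ (kY R (pR r) * kPsi R r * kE R i)
        ((kPsi R r * kY R (pL r) + 1) * kE R i)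
  | ypsiNe (r : Fin (n - 1)) (i : Fin n → ZMod e) (h : i (pL r) ≠ i (pR r)) :
      DefKLRRel R t n e ℓ κ (kY R (pR r) * kPsi R r * kE R i)
        (kPsi R r * kY R (pL r) * kE R i)
  | psiyFar (r : Fin (n - 1)) (k : Fin n) (h : k.1 ≠ r.1 ∧ k.1 ≠ r.1 + 1) :
      DefKLRRel R t n e ℓ κ (kPsi R r * kY R k) (kY R k * kPsi R r)
  | psipsiFar (r s : Fin (n - 1)) (h : r.1 + 1 < s.1 ∨ s.1 + 1 < r.1) :
      DefKLRRel R t n e ℓ κ (kPsi R r * kPsi R s) (kPsi R s * kPsi R r)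
  | quadEq (r : Fin (n - 1)) (i : Fin n → ZMod e) (h : i (pL r) = i (pR r)) :
      DefKLRRel R t n e ℓ κ (kPsi R r ^ 2 * kE R i) 0
  | quadR (r : Fin (n - 1)) (i : Fin n → ZMod e)
      (h1 : i (pR r) = i (pL r) + 1) (h2 : i (pL r) ≠ i (pR r) + 1) :
      DefKLRRel R t n e ℓ κ (kPsi R r ^ 2 * kE R i)
        ((ydot R t (1 + rhoI i r) (pL r) - kY R (pR r)) * kE R i)
  | quadL (r : Fin (n - 1)) (i : Fin n → ZMod e)
      (h1 : i (pL r) = i (pR r) + 1) (h2 : i (pR r) ≠ i (pL r) + 1) :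
      DefKLRRel R t n e ℓ κ (kPsi R r ^ 2 * kE R i)
        ((ydot R t (1 - rhoI i r) (pR r) - kY R (pL r)) * kE R i)
  | quadBoth (r : Fin (n - 1)) (i : Fin n → ZMod e)
      (h1 : i (pR r) = i (pL r) + 1) (h2 : i (pL r) = i (pR r) + 1) :
      DefKLRRel R t n e ℓ κ (kPsi R r ^ 2 * kE R i)
        ((ydot R t (1 + rhoI i r) (pL r) - kY R (pR r)) *
          (ydot R t (1 - rhoI i r) (pR r) - kY R (pL r)) * kE R i)
  | quadNone (r : Fin (n - 1)) (i : Fin n → ZMod e) (h1 : i (pL r) ≠ i (pR r))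
      (h2 : i (pR r) ≠ i (pL r) + 1) (h3 : i (pL r) ≠ i (pR r) + 1) :
      DefKLRRel R t n e ℓ κ (kPsi R r ^ 2 * kE R i) (kE R i)
  | braidBoth (r : Fin (n - 1)) (hr : r.1 + 1 < n - 1) (i : Fin n → ZMod e)
      (h0 : i (pM r hr) = i (pL r)) (h1 : i (pR r) = i (pL r) + 1)
      (h2 : i (pL r) = i (pR r) + 1) :
      DefKLRRel R t n e ℓ κ
        ((kPsi R r * kPsi R ⟨r.1 + 1, hr⟩ * kPsi R r -
            kPsi R ⟨r.1 + 1, hr⟩ * kPsi R r * kPsi R ⟨r.1 + 1, hr⟩) * kE R i)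
        ((ydot R t (1 + rhoI i r) (pL r) + ydot R t (1 + rhoI i r) (pM r hr) -
            ydot R t (1 + rhoI i r) (pR r) - ydot R t (1 - rhoI i r) (pR r)) * kE R i)
  | braidR (r : Fin (n - 1)) (hr : r.1 + 1 < n - 1) (i : Fin n → ZMod e)
      (h0 : i (pM r hr) = i (pL r)) (h1 : i (pR r) = i (pL r) + 1)
      (h2 : i (pL r) ≠ i (pR r) + 1) :
      DefKLRRel R t n e ℓ κ
        ((kPsi R r * kPsi R ⟨r.1 + 1, hr⟩ * kPsi R r -
            kPsi R ⟨r.1 + 1, hr⟩ * kPsi R r * kPsi R ⟨r.1 + 1, hr⟩) * kE R i)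
        (algebraMap R _ (-(((t ^ (1 + rhoI i r) : Rˣ) : R))) * kE R i)
  | braidL (r : Fin (n - 1)) (hr : r.1 + 1 < n - 1) (i : Fin n → ZMod e)
      (h0 : i (pM r hr) = i (pL r)) (h1 : i (pL r) = i (pR r) + 1)
      (h2 : i (pR r) ≠ i (pL r) + 1) :
      DefKLRRel R t n e ℓ κ
        ((kPsi R r * kPsi R ⟨r.1 + 1, hr⟩ * kPsi R r -
            kPsi R ⟨r.1 + 1, hr⟩ * kPsi R r * kPsi R ⟨r.1 + 1, hr⟩) * kE R i)
        (kE R i)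
  | braidNone (r : Fin (n - 1)) (hr : r.1 + 1 < n - 1) (i : Fin n → ZMod e)
      (h : ¬(i (pM r hr) = i (pL r) ∧
        (i (pR r) = i (pL r) + 1 ∨ i (pL r) = i (pR r) + 1))) :
      DefKLRRel R t n e ℓ κ
        ((kPsi R r * kPsi R ⟨r.1 + 1, hr⟩ * kPsi R r -
            kPsi R ⟨r.1 + 1, hr⟩ * kPsi R r * kPsi R ⟨r.1 + 1, hr⟩) * kE R i) 0

/-- The deformed cyclotomic quiver Hecke algebra `R_n(R)`. -/
noncomputable abbrev DefKLR (R : Type*) [CommRing R] (t : Rˣ) (n e ℓ : ℕ) [NeZero e]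
    (κ : ℕ → ℤ) : Type _ :=
  RingQuot (DefKLRRel R t n e ℓ κ)

/-- The generator `f_i` of the deformed cyclotomic quiver Hecke algebra. -/
noncomputable def DfGen (R : Type*) [CommRing R] (t : Rˣ) (n e ℓ : ℕ) [NeZero e]
    (κ : ℕ → ℤ) (i : Fin n → ZMod e) : DefKLR R t n e ℓ κ :=
  RingQuot.mkAlgHom R (DefKLRRel R t n e ℓ κ) (kE R i)

/-- The generator `ψ_r` of the deformed cyclotomic quiver Hecke algebra. -/
noncomputable def DpsiGen (R : Type*) [CommRing R] (t : Rˣ) (n e ℓ : ℕ) [NeZero e]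
    (κ : ℕ → ℤ) (r : Fin (n - 1)) : DefKLR R t n e ℓ κ :=
  RingQuot.mkAlgHom R (DefKLRRel R t n e ℓ κ) (kPsi R r)

/-- The generator `y_k` of the deformed cyclotomic quiver Hecke algebra. -/
noncomputable def DyGen (R : Type*) [CommRing R] (t : Rˣ) (n e ℓ : ℕ) [NeZero e]
    (κ : ℕ → ℤ) (k : Fin n) : DefKLR R t n e ℓ κ :=
  RingQuot.mkAlgHom R (DefKLRRel R t n e ℓ κ) (kY R k)

/-! ## Seminormal idempotents -/

/-- The seminormal idempotent `F_T` of the semisimple cyclotomic Hecke algebra: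
`F_T = ∏_{k=1}^n ∏_{c ∈ Cont(n), [c_k(T)] ≠ [c]} (L_k - [c]) / ([c_k(T)] - [c])`. -/
noncomputable def Fidem (K : Type*) [Field K] (tK : Kˣ) (n ℓ : ℕ) (κ : ℕ → ℤ)
    (T : StdTableau ℓ n) : CycHecke K tK n ℓ κ :=
  ((List.finRange n).map (fun k =>
    (((contFinset ℓ n κ).sort (· ≤ ·)).map (fun c =>
      if qint (tK : K) (content κ T (k.1 + 1)) ≠ qint (tK : K) c then
        (Lgen K tK n ℓ κ k - algebraMap K _ (qint (tK : K) c)) *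
          algebraMap K _ ((qint (tK : K) (content κ T (k.1 + 1)) - qint (tK : K) c)⁻¹)
      else 1)).prod)).prod

/-- The residue idempotent `f_i = Σ_{T ∈ Std(i)} F_T`. -/
noncomputable def fres (K : Type*) [Field K] (tK : Kˣ) (n ℓ e : ℕ) (κ : ℕ → ℤ)
    (i : Fin n → ZMod e) : CycHecke K tK n ℓ κ :=
  ∑ᶠ T : {T : StdTableau ℓ n // resSeq e κ T = i}, Fidem K tK n ℓ κ T.1

/-- The simultaneous two-sided eigenspace `H_{S,T}` of the Jucys–Murphy elements. -/
noncomputable def eigSub (K : Type*) [Field K] (tK : Kˣ) (n ℓ : ℕ) (κ : ℕ → ℤ)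
    (S T : StdTableau ℓ n) : Submodule K (CycHecke K tK n ℓ κ) where
  carrier := {h | ∀ k : Fin n,
      Lgen K tK n ℓ κ k * h = qint (tK : K) (content κ S (k.1 + 1)) • h ∧
      h * Lgen K tK n ℓ κ k = qint (tK : K) (content κ T (k.1 + 1)) • h}
  add_mem' := by
    intro a b ha hb
    intro k
    obtain ⟨h1, h2⟩ := ha k
    obtain ⟨h3, h4⟩ := hb k
    exact ⟨by rw [mul_add, h1, h3, smul_add], by rw [add_mul, h2, h4, smul_add]⟩
  zero_mem' := by intro k; simp
  smul_mem' := by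
    intro c a ha
    intro k
    obtain ⟨h1, h2⟩ := ha k
    constructor
    · rw [mul_smul_comm, h1, smul_comm]
    · rw [smul_mul_assoc, h2, smul_comm]

end Paper

namespace Paper

/-- The properties of a `∗`-seminormal basis `{f_{S,T}}` with structure coefficients
given by the seminormal coefficient system `α` and `γ`-coefficients `γ` normalised by
`γ_{t^λ} = γ₀(λ)`:
(i) it is a `K`-basis of `H_n(K, t, κ)`;
(ii) `f_{S,T} L_k = [c_k(T)] f_{S,T}` and `L_k f_{S,T} = [c_k(S)] f_{S,T}`;
(iii) `f_{S,T} T_r = α_r(T) f_{S,V} - [ρ_r(T)]⁻¹ f_{S,T}` with `V = T(r, r+1)`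
(and `f_{S,V} = 0` if `V` is not standard), together with the left-handed analogue;
(iv) `f_{S,T} f_{U,V} = δ_{T,U} γ_T f_{S,V}`. -/
def SeminormalProps (K : Type) [Field K] (t : Kˣ) (n ℓ : ℕ) (κ : ℕ → ℤ)
    (α : ℕ → StdTableau ℓ n → K) (γ0 : Multipartition ℓ n → Kˣ)
    (f : StdTableau ℓ n → StdTableau ℓ n → CycHecke K t n ℓ κ)
    (γ : StdTableau ℓ n → Kˣ) : Prop :=
  (LinearIndependent K
      (fun p : {p : StdTableau ℓ n × StdTableau ℓ n // p.1.shape = p.2.shape} =>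
        f p.1.1 p.1.2) ∧
    Submodule.span K
      (Set.range
        (fun p : {p : StdTableau ℓ n × StdTableau ℓ n // p.1.shape = p.2.shape} =>
          f p.1.1 p.1.2)) = ⊤) ∧
  (∀ S T : StdTableau ℓ n, S.shape = T.shape → ∀ k : Fin n,
      f S T * Lgen K t n ℓ κ k = qint (t : K) (content κ T (k.1 + 1)) • f S T ∧
      Lgen K t n ℓ κ k * f S T = qint (t : K) (content κ S (k.1 + 1)) • f S T) ∧
  (∀ S T : StdTableau ℓ n, S.shape = T.shape → ∀ r : Fin (n - 1),
      (∀ V, oSwapO T (r.1 + 1) = some V →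
        f S T * Tgen K t n ℓ κ r =
          α (r.1 + 1) T • f S V -
            (qint (t : K) (rhoTab κ T (r.1 + 1)))⁻¹ • f S T) ∧
      (oSwapO T (r.1 + 1) = none →
        f S T * Tgen K t n ℓ κ r =
          -((qint (t : K) (rhoTab κ T (r.1 + 1)))⁻¹ • f S T))) ∧
  (∀ S T : StdTableau ℓ n, S.shape = T.shape → ∀ r : Fin (n - 1),
      (∀ U, oSwapO S (r.1 + 1) = some U →
        Tgen K t n ℓ κ r * f S T =
          α (r.1 + 1) S • f U T -
            (qint (t : K) (rhoTab κ S (r.1 + 1)))⁻¹ • f S T) ∧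
      (oSwapO S (r.1 + 1) = none →
        Tgen K t n ℓ κ r * f S T =
          -((qint (t : K) (rhoTab κ S (r.1 + 1)))⁻¹ • f S T))) ∧
  (∀ S T U V : StdTableau ℓ n, S.shape = T.shape → U.shape = V.shape →
      (T = U → f S T * f U V = (γ T : K) • f S V) ∧
      (T ≠ U → f S T * f U V = 0)) ∧
  (∀ T : StdTableau ℓ n, T.entry = tlamEntry T.shape → γ T = γ0 T.shape)

/-!
Letting `L_k` act diagonally and `T_r` through `-1 / [ρ_r]_t` and `α_r` gives matrices, indexed by
standard tableaux, that satisfy the relations of the Hecke algebra, hence a homomorphism `ρ` from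
`H_n` to a matrix algebra. A seminormal basis has to consist of the elements with
`ρ (f S T) = γ T • single S T 1`, so the point is that `ρ` is injective and that its image contains
the matrix units for pairs of tableaux of the same shape.

Both rest on the spectrum of the Jucys–Murphy elements: in any algebra satisfying the relations, a
vector whose `L_1, …, L_m`-eigenvalues are the contents along a path in Young's lattice is a sum of
vectors whose `L_{m+1}`-eigenvalues are the contents of addable nodes. Hence `H_n` is spanned by
weight vectors attached to standard tableaux, and the separation condition makes these weights
distinct. The component of `1` in the weight of `T` is the preimage of the diagonal matrix unit at
`T`, and the `T_r` move it to the other entries. For injectivity, a weight vector attached to an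
initial tableau generates a seminormal family, because intertwiners transport it consistently along
removals of descents; an element of the kernel of `ρ` kills every such family.

The same consistency of transport, applied to the scalars relating `γ_t` and `γ_{t s_r}`, produces
the `γ_t` from the prescribed `γ_{t^λ}`.
-/

section QuantumIntegers

variable {K : Type*} [Field K] {x : K}

theorem qint_zero (x : K) : qint x 0 = 0 := by simp [qint]

theorem qint_one (x : K) : qint x 1 = 1 := by simp [qint]

theorem qint_natCast (x : K) (d : ℕ) : qint x d = ∑ k ∈ Finset.range d, x ^ k := by
  simp [qint]

theorem qint_neg_natCast (x : K) (d : ℕ) :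
    qint x (-d) = -∑ k ∈ Finset.range d, x ^ (-((k : ℤ) + 1)) := by
  rcases Nat.eq_zero_or_pos d with rfl | hd
  · simp [qint]
  · rw [qint, if_neg (by omega), neg_neg, Int.toNat_natCast]

theorem qint_add_one (x : K) (d : ℤ) : qint x (d + 1) = qint x d + x ^ d := by
  rcases le_or_gt 0 d with h | h
  · lift d to ℕ using h
    rw [← Nat.cast_succ, qint_natCast, qint_natCast, Finset.sum_range_succ, zpow_natCast]
  · obtain ⟨m, rfl⟩ : ∃ m : ℕ, d = -((m + 1 : ℕ) : ℤ) := ⟨(-d - 1).toNat, by omega⟩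
    have hsucc : -((m + 1 : ℕ) : ℤ) + 1 = -(m : ℤ) := by push_cast; ring
    rw [hsucc, qint_neg_natCast, qint_neg_natCast, Finset.sum_range_succ]
    push_cast
    ring

theorem qint_add (hx : x ≠ 0) (a b : ℤ) : qint x (a + b) = qint x a + x ^ a * qint x b := by
  induction b using Int.induction_on with
  | zero => simp [qint_zero]
  | succ i ih =>
    rw [← add_assoc, qint_add_one x, ih, qint_add_one x, zpow_add₀ hx]; ring
  | pred i ih =>
    have hleft := qint_add_one x (a + (-(i : ℤ) - 1))
    have hright := qint_add_one x (-(i : ℤ) - 1)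
    rw [add_assoc, sub_add_cancel, ih, zpow_add₀ hx] at hleft
    rw [sub_add_cancel] at hright
    linear_combination x ^ a * hright - hleft

theorem qint_add_one' (hx : x ≠ 0) (d : ℤ) : qint x (d + 1) = x * qint x d + 1 := by
  rw [add_comm d, qint_add hx, qint_one, zpow_one, add_comm]

theorem zpow_eq_one_add_mul_qint (hx : x ≠ 0) (d : ℤ) : x ^ d = 1 + (x - 1) * qint x d := by
  have hright := qint_add hx d 1
  have hleft := qint_add hx 1 d
  rw [add_comm 1 d, zpow_one] at hleft
  rw [qint_one] at hleft hright
  linear_combination hleft - hright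

theorem qint_sub_qint (hx : x ≠ 0) (a b : ℤ) : qint x a - qint x b = x ^ b * qint x (a - b) := by
  have h := qint_add hx b (a - b)
  rw [add_sub_cancel] at h
  linear_combination h

theorem qint_eq_qint_iff (hx : x ≠ 0) {a b : ℤ} : qint x a = qint x b ↔ qint x (a - b) = 0 := by
  rw [← sub_eq_zero, qint_sub_qint hx, mul_eq_zero, or_iff_right (zpow_ne_zero _ hx)]

theorem qint_neg_eq_zero_iff (hx : x ≠ 0) {a : ℤ} : qint x (-a) = 0 ↔ qint x a = 0 := by
  rw [← zero_sub, ← qint_eq_qint_iff hx, qint_zero, eq_comm]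

theorem qintU_eq_qint (t : Kˣ) (d : ℤ) : qintU t d = qint (t : K) d := by
  simp only [qintU, qint, Units.val_zpow_eq_zpow_val]

end QuantumIntegers

section Separation

variable {K : Type*} [Field K] {t : Kˣ} {n ℓ : ℕ} {κ : ℕ → ℤ}

theorem SeparatesF.qint_ne_zero (hs : SeparatesF t n ℓ κ) {d : ℤ} (hd : d ≠ 0) (hn : |d| ≤ n) :
    qint (t : K) d ≠ 0 := by
  have hpos (e : ℕ) (he : 0 < e) (hen : e ≤ n) : qint (t : K) e ≠ 0 :=
    Finset.prod_ne_zero_iff.1 (left_ne_zero_of_mul hs) e (Finset.mem_Icc.2 ⟨he, hen⟩)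
  obtain ⟨e, rfl | rfl⟩ := d.eq_nat_or_neg
  · exact hpos e (by omega) (by simpa using hn)
  · rw [Ne, qint_neg_eq_zero_iff t.ne_zero]
    exact hpos e (by omega) (by simpa using hn)

theorem SeparatesF.qint_sub_add_ne_zero (hs : SeparatesF t n ℓ κ) {l m : ℕ} (hl : l < ℓ)
    (hm : m < ℓ) (hlm : l ≠ m) {d : ℤ} (hd : |d| < n) : qint (t : K) (κ l - κ m + d) ≠ 0 := by
  have hlt {i j : ℕ} (hj : j < ℓ) (hij : i < j) {e : ℤ} (he : |e| < n) :
      qint (t : K) (κ i - κ j + e) ≠ 0 := by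
    have hprod := right_ne_zero_of_mul hs
    simp only [Finset.prod_ne_zero_iff] at hprod
    exact hprod i (Finset.mem_range.2 (hij.trans hj)) j (Finset.mem_Ioo.2 ⟨hij, hj⟩) e
      (Finset.mem_Ioo.2 (abs_lt.1 he))
  rcases hlm.lt_or_gt with h | h
  · exact hlt hm h hd
  · rw [show κ l - κ m + d = -(κ m - κ l + -d) by ring, Ne, qint_neg_eq_zero_iff t.ne_zero]
    exact hlt hl h (by rwa [abs_neg])

end Separation

section Diagrams

variable {ℓ : ℕ} {S : Set Node}

theorem IsDiagramSet.mem_of_le (hS : IsDiagramSet ℓ S) {l r c r' c' : ℕ} (h : (l, r, c) ∈ S)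
    (hr : r' ≤ r) (hc : c' ≤ c) : (l, r', c') ∈ S := by
  have hrow : (l, r', c) ∈ S := Nat.decreasingInduction
    (motive := fun i _ => (l, i, c) ∈ S) (fun i _ hi => hS.2.2.2 l i c hi) h hr
  exact Nat.decreasingInduction
    (motive := fun j _ => (l, r', j) ∈ S) (fun j _ hj => hS.2.2.1 l r' j hj) hrow hc

theorem Addable.finite {B : Node} (hB : Addable ℓ S B) : S.Finite :=
  hB.2.1.subset Set.subset_union_left

theorem Addable.fst_lt {B : Node} (hB : Addable ℓ S B) : B.1 < ℓ :=
  hB.2.2.1 B (Set.mem_union_right S rfl)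

theorem Addable.mem_of_le {l r c r' c' : ℕ} (hB : Addable ℓ S (l, r, c)) (hr : r' ≤ r)
    (hc : c' ≤ c) (hne : (r', c') ≠ (r, c)) : (l, r', c') ∈ S :=
  (hB.2.mem_of_le (Set.mem_union_right S rfl) hr hc).resolve_right
    fun h => hne (congrArg Prod.snd h)

theorem IsDiagramSet.addable_iff (hS : IsDiagramSet ℓ S) {B : Node} :
    Addable ℓ S B ↔ B ∉ S ∧ B.1 < ℓ ∧ (∀ c, B.2.2 = c + 1 → (B.1, B.2.1, c) ∈ S) ∧
      ∀ r, B.2.1 = r + 1 → (B.1, r, B.2.2) ∈ S := by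
  constructor
  · rintro hB
    exact ⟨hB.1, hB.fst_lt,
      fun c hc => hB.mem_of_le le_rfl (hc ▸ c.le_succ) (by simp [hc]),
      fun r hr => hB.mem_of_le (hr ▸ r.le_succ) le_rfl (by simp [hr])⟩
  · rintro ⟨hB, hl, hrow, hcol⟩
    refine ⟨hB, hS.1.union (Set.finite_singleton B), ?_, ?_, ?_⟩
    · rintro A (hA | rfl)
      exacts [hS.2.1 A hA, hl]
    · rintro l r c (h | h)
      · exact Or.inl (hS.2.2.1 l r c h)
      · subst h; exact Or.inl (hrow c rfl)
    · rintro l r c (h | h)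
      · exact Or.inl (hS.2.2.2 l r c h)
      · subst h; exact Or.inl (hcol r rfl)

theorem IsDiagramSet.union {S' : Set Node} (hS : IsDiagramSet ℓ S) (hS' : IsDiagramSet ℓ S') :
    IsDiagramSet ℓ (S ∪ S') :=
  ⟨hS.1.union hS'.1, fun A => Or.rec (hS.2.1 A) (hS'.2.1 A),
    fun l r c => Or.imp (hS.2.2.1 l r c) (hS'.2.2.1 l r c),
    fun l r c => Or.imp (hS.2.2.2 l r c) (hS'.2.2.2 l r c)⟩

theorem Addable.union_singleton {B C : Node} (hB : Addable ℓ S B) (hC : Addable ℓ S C)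
    (hne : B ≠ C) : Addable ℓ (S ∪ {C}) B := by
  refine ⟨?_, ?_⟩
  · rintro (h | h)
    exacts [hB.1 h, hne h]
  · rw [Set.union_assoc, Set.union_comm {C}, Set.union_union_distrib_left]
    exact hB.2.union hC.2

theorem Addable.image_row_subset {l r c : ℕ} (hB : Addable ℓ S (l, r, c)) :
    (fun j => (l, 0, j)) '' Set.Iio c ⊆ S := by
  rintro _ ⟨j, hj, rfl⟩
  exact hB.mem_of_le (Nat.zero_le r) (Set.mem_Iio.1 hj).le
    fun h => (Set.mem_Iio.1 hj).ne (congrArg Prod.snd h)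

theorem Addable.image_col_subset {l r c : ℕ} (hB : Addable ℓ S (l, r, c)) :
    (fun i => (l, i, 0)) '' Set.Iio r ⊆ S := by
  rintro _ ⟨i, hi, rfl⟩
  exact hB.mem_of_le (Set.mem_Iio.1 hi).le (Nat.zero_le c)
    fun h => (Set.mem_Iio.1 hi).ne (congrArg Prod.fst h)

theorem ncard_image_row (l c : ℕ) : ((fun j => ((l, 0, j) : Node)) '' Set.Iio c).ncard = c := by
  rw [Set.ncard_image_of_injective _ fun a b hab => by simpa using hab, Set.ncard_Iio_nat]

theorem ncard_image_col (l r : ℕ) : ((fun i => ((l, i, 0) : Node)) '' Set.Iio r).ncard = r := by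
  rw [Set.ncard_image_of_injective _ fun a b hab => by simpa using hab, Set.ncard_Iio_nat]

theorem Addable.col_le_ncard {B : Node} (hB : Addable ℓ S B) : B.2.2 ≤ S.ncard :=
  (ncard_image_row B.1 B.2.2).symm.trans_le (Set.ncard_le_ncard hB.image_row_subset hB.finite)

theorem Addable.row_le_ncard {B : Node} (hB : Addable ℓ S B) : B.2.1 ≤ S.ncard :=
  (ncard_image_col B.1 B.2.1).symm.trans_le (Set.ncard_le_ncard hB.image_col_subset hB.finite)

/- The first row of the component of `B` and the first column of the component of `C` lie in `S`,
and they meet in at most one node, which happens only if the components agree. -/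
theorem Addable.col_add_row_le {B C : Node} (hB : Addable ℓ S B) (hC : Addable ℓ S C) :
    B.2.2 + C.2.1 ≤ S.ncard + if B.1 = C.1 then 1 else 0 := by
  set row : Set Node := (fun j => (B.1, 0, j)) '' Set.Iio B.2.2 with hrow
  set col : Set Node := (fun i => (C.1, i, 0)) '' Set.Iio C.2.1 with hcol
  have hunion : (row ∪ col).ncard ≤ S.ncard :=
    Set.ncard_le_ncard (Set.union_subset hB.image_row_subset hC.image_col_subset) hB.finite
  have hinter : (row ∩ col).ncard ≤ if B.1 = C.1 then 1 else 0 := by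
    have hmem {x : Node} (hx : x ∈ row ∩ col) : B.1 = C.1 ∧ x = (B.1, 0, 0) := by
      obtain ⟨⟨j, _, rfl⟩, i, _, h⟩ := hx
      simp only [Prod.mk.injEq] at h
      simp [h.1, ← h.2.2]
    split_ifs with h
    · have hfin : (row ∩ col).Finite := ((Set.finite_Iio _).image _).inter_of_left _
      exact (Set.ncard_le_one_iff hfin).2 fun ha hb => (hmem ha).2.trans (hmem hb).2.symm
    · rw [Set.eq_empty_of_forall_notMem fun x hx => h (hmem hx).1, Set.ncard_empty]
  have hadd := Set.ncard_union_add_ncard_inter row col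
  rw [hrow, hcol, ncard_image_row, ncard_image_col, ← hrow, ← hcol] at hadd
  omega

theorem Addable.lt_and_lt_or {l r c r' c' : ℕ} (hB : Addable ℓ S (l, r, c))
    (hC : Addable ℓ S (l, r', c')) (hne : (r, c) ≠ (r', c')) :
    (r < r' ∧ c' < c) ∨ (r' < r ∧ c < c') := by
  have hBC : ¬ (r ≤ r' ∧ c ≤ c') := fun h => hB.1 (hC.mem_of_le h.1 h.2 hne)
  have hCB : ¬ (r' ≤ r ∧ c' ≤ c) := fun h => hC.1 (hB.mem_of_le h.1 h.2 hne.symm)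
  omega

end Diagrams

section Contents

variable {K : Type*} [Field K] {t : Kˣ} {n ℓ : ℕ} {κ : ℕ → ℤ} {S : Set Node} {B C : Node}

/-- The content `κ_l + c - r` of a node `(l, r, c)`. -/
def nodeContent (κ : ℕ → ℤ) (A : Node) : ℤ := κ A.1 + (A.2.2 : ℤ) - (A.2.1 : ℤ)

/-- The quantum content `[κ_l + c - r]_t` of a node: the eigenvalue of a Jucys–Murphy element. -/
noncomputable def qcontent (t : Kˣ) (κ : ℕ → ℤ) (A : Node) : K := qint (t : K) (nodeContent κ A)

theorem qcontent_right (t : Kˣ) (κ : ℕ → ℤ) (l r c : ℕ) :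
    (qcontent t κ (l, r, c + 1) : K) = t * qcontent t κ (l, r, c) + 1 := by
  rw [qcontent, qcontent, ← qint_add_one' t.ne_zero]
  congr 1
  simp only [nodeContent]
  push_cast
  ring

theorem qcontent_eq_below (t : Kˣ) (κ : ℕ → ℤ) (l r c : ℕ) :
    (qcontent t κ (l, r, c) : K) = t * qcontent t κ (l, r + 1, c) + 1 := by
  rw [qcontent, qcontent, ← qint_add_one' t.ne_zero]
  congr 1
  simp only [nodeContent]
  push_cast
  ring

theorem SeparatesF.qint_nodeContent_sub_add_ne_zero (hs : SeparatesF t n ℓ κ)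
    (hB : Addable ℓ S B) (hC : Addable ℓ S C) (hne : B ≠ C) {ε : ℤ} (hε : |ε| ≤ 1)
    (hn : S.ncard + 1 + |ε| ≤ n) :
    qint (t : K) (nodeContent κ B - nodeContent κ C + ε) ≠ 0 := by
  have hBC := hB.col_add_row_le hC
  have hCB := hC.col_add_row_le hB
  obtain ⟨l, r, c⟩ := B
  obtain ⟨l', r', c'⟩ := C
  have hε' := abs_le.1 (le_refl |ε|)
  by_cases hl : l = l'
  · subst hl
    have hpos := hB.lt_and_lt_or hC fun h => hne (by rw [h])
    simp only [if_true] at hBC hCB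
    refine hs.qint_ne_zero ?_ (abs_le.2 ?_) <;> simp only [nodeContent] <;> omega
  · simp only [if_neg hl, if_neg (Ne.symm hl)] at hBC hCB
    have hcomp : nodeContent κ (l, r, c) - nodeContent κ (l', r', c') + ε
        = κ l - κ l' + ((c : ℤ) - r - c' + r' + ε) := by simp only [nodeContent]; ring
    rw [hcomp]
    exact hs.qint_sub_add_ne_zero hB.fst_lt hC.fst_lt hl (abs_lt.2 (by omega))

theorem SeparatesF.eq_of_qcontent_eq (hs : SeparatesF t n ℓ κ) (hB : Addable ℓ S B)
    (hC : Addable ℓ S C) (hn : S.ncard < n) (h : qcontent t κ B = qcontent t κ C) : B = C := by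
  by_contra hne
  refine hs.qint_nodeContent_sub_add_ne_zero hB hC hne (ε := 0) (by simp) (by simp; omega) ?_
  rw [add_zero]
  exact (qint_eq_qint_iff t.ne_zero).1 h

theorem SeparatesF.qcontent_ne_qint_add (hs : SeparatesF t n ℓ κ) (hB : Addable ℓ S B)
    (hC : Addable ℓ S C) (hn : S.ncard + 2 ≤ n) {ε : ℤ} (hε : |ε| = 1) :
    qcontent t κ B ≠ qint (t : K) (nodeContent κ C + ε) := by
  rw [qcontent, Ne, qint_eq_qint_iff t.ne_zero, ← sub_sub, sub_eq_add_neg _ ε]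
  by_cases hne : B = C
  · rw [hne, sub_self, zero_add]
    refine hs.qint_ne_zero ?_ ?_
    · rintro h
      simp [neg_eq_zero.1 h] at hε
    · rw [abs_neg, hε]
      omega
  · exact hs.qint_nodeContent_sub_add_ne_zero hB hC hne (by rw [abs_neg, hε])
      (by rw [abs_neg, hε]; omega)

/-- `Adjacent A B`: the node `B` is immediately to the right of `A` or immediately below `A`. -/
def Adjacent (A B : Node) : Prop := B = (A.1, A.2.1, A.2.2 + 1) ∨ B = (A.1, A.2.1 + 1, A.2.2)

theorem Adjacent.exists_nodeContent_eq (h : Adjacent B C) (κ : ℕ → ℤ) :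
    ∃ ε : ℤ, |ε| = 1 ∧ nodeContent κ C = nodeContent κ B + ε := by
  rcases h with rfl | rfl
  · exact ⟨1, by simp, by simp only [nodeContent]; push_cast; ring⟩
  · exact ⟨-1, by simp, by simp only [nodeContent]; push_cast; ring⟩

end Contents

section Paths

variable {ℓ m k : ℕ} {A A' : ℕ → Node}

/-- `A 0, …, A (m - 1)` is a path of length `m` in Young's lattice of `ℓ`-multipartitions,
starting from the empty one: adding these nodes one at a time gives a diagram at each step. -/
def IsPath (ℓ m : ℕ) (A : ℕ → Node) : Prop := ∀ k < m, Addable ℓ (A '' Set.Iio k) (A k)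

theorem image_Iio_succ (A : ℕ → Node) (k : ℕ) :
    A '' Set.Iio (k + 1) = A '' Set.Iio k ∪ {A k} := by
  rw [← Order.succ_eq_add_one, Order.Iio_succ, ← Set.Iio_insert, Set.image_insert_eq,
    Set.union_singleton]

theorem ncard_image_Iio_le (A : ℕ → Node) (k : ℕ) : (A '' Set.Iio k).ncard ≤ k :=
  (Set.ncard_image_le (Set.finite_Iio k)).trans_eq (Set.ncard_Iio_nat k)

theorem IsPath.mono (h : IsPath ℓ m A) (hk : k ≤ m) : IsPath ℓ k A :=
  fun j hj => h j (hj.trans_le hk)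

theorem IsPath.injOn (h : IsPath ℓ m A) : Set.InjOn A (Set.Iio m) := by
  have hne {i j : ℕ} (hj : j < m) (hij : i < j) : A i ≠ A j :=
    fun e => (h j hj).1 ⟨i, hij, e⟩
  intro i hi j hj e
  exact (lt_trichotomy i j).elim (fun hij => absurd e (hne hj hij)) fun hij =>
    hij.elim id fun hji => absurd e.symm (hne hi hji)

theorem IsPath.congr (h : IsPath ℓ m A) (e : Set.EqOn A A' (Set.Iio m)) : IsPath ℓ m A' := by
  intro k hk
  rw [← e hk, ← (e.mono (Set.Iio_subset_Iio hk.le)).image_eq]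
  exact h k hk

theorem IsPath.isDiagramSet (h : IsPath ℓ m A) : IsDiagramSet ℓ (A '' Set.Iio m) := by
  rcases m with - | k
  · simp [IsDiagramSet]
  · rw [image_Iio_succ]
    exact (h k k.lt_succ_self).2

theorem IsPath.row_lt (h : IsPath ℓ m A) (hk : k < m) : (A k).2.1 < m :=
  (((h k hk).row_le_ncard).trans (ncard_image_Iio_le A k)).trans_lt hk

theorem IsPath.col_lt (h : IsPath ℓ m A) (hk : k < m) : (A k).2.2 < m :=
  (((h k hk).col_le_ncard).trans (ncard_image_Iio_le A k)).trans_lt hk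

theorem swap_image_Iio (hm : m ≠ k + 1) : Equiv.swap k (k + 1) '' Set.Iio m = Set.Iio m := by
  ext j
  rw [Equiv.image_eq_preimage_symm, Set.mem_preimage, Equiv.symm_swap, Equiv.swap_apply_def,
    Set.mem_Iio, Set.mem_Iio]
  split_ifs <;> omega

theorem image_comp_swap_Iio (A : ℕ → Node) (hm : m ≠ k + 1) :
    (A ∘ Equiv.swap k (k + 1)) '' Set.Iio m = A '' Set.Iio m := by
  rw [Set.image_comp, swap_image_Iio hm]

theorem IsPath.comp_swap (h : IsPath ℓ m A) (hk : k + 1 < m)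
    (hadd : Addable ℓ (A '' Set.Iio k) (A (k + 1))) :
    IsPath ℓ m (A ∘ Equiv.swap k (k + 1)) := by
  intro j hj
  rcases eq_or_ne j (k + 1) with rfl | hj1
  · have hdiag := (h.mono (m := m) (show k + 2 ≤ m by omega)).isDiagramSet
    rw [← image_comp_swap_Iio A (show k + 2 ≠ k + 1 by omega), image_Iio_succ] at hdiag
    refine ⟨?_, hdiag⟩
    rintro ⟨i, hi, e⟩
    have := (Equiv.swap k (k + 1)).injective (h.injOn (x₁ := Equiv.swap k (k + 1) i)
      (by rw [Equiv.swap_apply_def, Set.mem_Iio] at *; split_ifs <;> omega)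
      (by simp; omega) e)
    exact (Set.mem_Iio.1 hi).ne this
  · rw [image_comp_swap_Iio A hj1]
    rcases eq_or_ne j k with rfl | hjk
    · simpa using hadd
    · rw [Function.comp_apply, Equiv.swap_apply_of_ne_of_ne hjk hj1]
      exact h j hj

theorem IsPath.addable_succ_iff (h : IsPath ℓ m A) (hk : k + 1 < m) :
    Addable ℓ (A '' Set.Iio k) (A (k + 1)) ↔ ¬ Adjacent (A k) (A (k + 1)) := by
  have hnext := h (k + 1) hk
  rw [(h.mono hk.le).isDiagramSet.addable_iff, image_Iio_succ] at hnext
  rw [(h.mono (by omega : k ≤ m)).isDiagramSet.addable_iff]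
  obtain ⟨hmem, hcomp, hrow, hcol⟩ := hnext
  have hAk : A k ∉ A '' Set.Iio k := (h k (by omega)).1
  constructor
  · rintro ⟨-, -, hrow', hcol'⟩ (hadj | hadj)
    · exact hAk (by simpa [hadj] using hrow' (A k).2.2 (by rw [hadj]))
    · exact hAk (by simpa [hadj] using hcol' (A k).2.1 (by rw [hadj]))
  · intro hadj
    refine ⟨fun hm => hmem (Or.inl hm), hcomp, fun c hc => ?_, fun r hr => ?_⟩
    · refine (hrow c hc).resolve_right fun e => hadj (Or.inl ?_)
      rw [← Set.mem_singleton_iff.1 e, ← hc]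
    · refine (hcol r hr).resolve_right fun e => hadj (Or.inr ?_)
      rw [← Set.mem_singleton_iff.1 e, ← hr]

theorem IsPath.isPath_comp_swap_iff (h : IsPath ℓ m A) (hk : k + 1 < m) :
    IsPath ℓ m (A ∘ Equiv.swap k (k + 1)) ↔ ¬ Adjacent (A k) (A (k + 1)) := by
  rw [← h.addable_succ_iff hk]
  refine ⟨fun h' => ?_, h.comp_swap hk⟩
  have hadd := h' k (by omega)
  rwa [image_comp_swap_Iio A k.succ_ne_self.symm, Function.comp_apply,
    Equiv.swap_apply_left] at hadd

end Paths

section MultipartitionOfDiagram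

variable {ℓ n : ℕ}

theorem Multipartition.ext_diagram {μ ν : Multipartition ℓ n} (h : μ.diagram = ν.diagram) :
    μ = ν := by
  have hpart : μ.part = ν.part := by
    funext l r
    refine eq_of_forall_lt_iff fun c => ?_
    exact Set.ext_iff.1 h (l, r, c)
  cases μ
  cases ν
  congr

theorem Multipartition.mem_of_le (μ : Multipartition ℓ n) {l r c r' c' : ℕ}
    (h : (l, r, c) ∈ μ.diagram) (hr : r' ≤ r) (hc : c' ≤ c) : (l, r', c') ∈ μ.diagram :=
  (hc.trans_lt h).trans_le (μ.antitone l hr)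

theorem Multipartition.fst_lt (μ : Multipartition ℓ n) {A : Node} (h : A ∈ μ.diagram) :
    A.1 < ℓ := by
  by_contra hl
  exact Nat.not_lt_zero _ ((μ.comp_bound _ (not_lt.1 hl) _).subst (motive := (A.2.2 < ·)) h)

theorem Multipartition.row_lt (μ : Multipartition ℓ n) {A : Node} (h : A ∈ μ.diagram) :
    A.2.1 < n := by
  by_contra hr
  exact Nat.not_lt_zero _ ((μ.row_bound _ _ (not_lt.1 hr)).subst (motive := (A.2.2 < ·)) h)

/-- The length of row `r` of component `l` of a diagram. -/
noncomputable def rowLength (S : Set Node) (l r : ℕ) : ℕ := sInf {c | (l, r, c) ∉ S}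

theorem IsDiagramSet.lt_rowLength_iff {S : Set Node} (hS : IsDiagramSet ℓ S) {l r c : ℕ} :
    c < rowLength S l r ↔ (l, r, c) ∈ S := by
  refine ⟨fun h => not_not.1 (Nat.notMem_of_lt_sInf h), fun h => ?_⟩
  by_contra hc
  have hfin : {c | (l, r, c) ∈ S}.Finite := hS.1.preimage fun a _ b _ hab => by simpa using hab
  exact Nat.sInf_mem hfin.infinite_compl.nonempty (hS.mem_of_le h le_rfl (not_lt.1 hc))

theorem IsDiagramSet.sum_rowLength {S : Set Node} (hS : IsDiagramSet ℓ S) {m : ℕ}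
    (hrow : ∀ A ∈ S, A.2.1 < m) :
    ∑ l ∈ Finset.range ℓ, ∑ r ∈ Finset.range m, rowLength S l r = S.ncard := by
  rw [Set.ncard_eq_toFinset_card S hS.1, ← Finset.sum_product',
    Finset.card_eq_sum_card_fiberwise (f := fun A : Node => (A.1, A.2.1))
      (t := Finset.range ℓ ×ˢ Finset.range m)
      fun A hA => by
        rw [Finset.mem_coe, Set.Finite.mem_toFinset] at hA
        simpa using ⟨hS.2.1 A hA, hrow A hA⟩]
  refine Finset.sum_congr rfl fun ⟨l, r⟩ _ => ?_
  rw [← Finset.card_range (rowLength S l r),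
    ← Finset.card_image_of_injective (f := fun c => ((l, r, c) : Node)) (Finset.range _)
      fun a b hab => by simpa using hab]
  refine congrArg Finset.card (Finset.ext fun ⟨l', r', c⟩ => ?_)
  simp only [Finset.mem_image, Finset.mem_range, hS.lt_rowLength_iff, Finset.mem_filter,
    Set.Finite.mem_toFinset, Prod.mk.injEq]
  constructor
  · rintro ⟨c, hc, rfl, rfl, rfl⟩
    exact ⟨hc, rfl, rfl⟩
  · rintro ⟨hc, rfl, rfl⟩
    exact ⟨c, hc, rfl, rfl, rfl⟩

theorem IsDiagramSet.exists_multipartition {S : Set Node} (hS : IsDiagramSet ℓ S)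
    (hcard : S.ncard = n) (hrow : ∀ A ∈ S, A.2.1 < n) :
    ∃ μ : Multipartition ℓ n, μ.diagram = S := by
  have hzero {l r : ℕ} (h : (l, r, 0) ∉ S) : rowLength S l r = 0 :=
    Nat.eq_zero_of_not_pos fun hpos => h (hS.lt_rowLength_iff.1 hpos)
  exact ⟨{
    part := rowLength S
    comp_bound := fun l hl r => hzero fun h => hl.not_gt (hS.2.1 _ h)
    antitone := fun l r r' hr => le_of_forall_lt fun c hc =>
      hS.lt_rowLength_iff.2 (hS.mem_of_le (hS.lt_rowLength_iff.1 hc) hr le_rfl)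
    row_bound := fun l r hr => hzero fun h => hr.not_gt (hrow _ h)
    size := (hS.sum_rowLength hrow).trans hcard },
    Set.ext fun A => hS.lt_rowLength_iff⟩

end MultipartitionOfDiagram

section TableauxAsPaths

variable {ℓ n : ℕ} {S T : StdTableau ℓ n} {j k : ℕ} {A : Node}

theorem StdTableau.mem_diagram_iff : A ∈ T.shape.diagram ↔ T.entry A ≠ 0 :=
  ⟨fun h => Nat.one_le_iff_ne_zero.1 (T.bijOn.mapsTo h).1,
    fun h => by_contra fun hA => h (T.entry_zero A hA)⟩

theorem StdTableau.ext_entry (h : S.entry = T.entry) : S = T := by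
  have hshape : S.shape = T.shape := Multipartition.ext_diagram <| Set.ext fun A => by
    rw [S.mem_diagram_iff, T.mem_diagram_iff, h]
  cases S
  cases T
  congr

/-- The node containing the entry `k + 1`, so that `T.path 0, …, T.path (n - 1)` is the path in
Young's lattice described by `T`. -/
noncomputable def StdTableau.path (T : StdTableau ℓ n) (k : ℕ) : Node := T.node (k + 1)

theorem StdTableau.path_mem (T : StdTableau ℓ n) (hk : k < n) : T.path k ∈ T.shape.diagram :=
  Function.invFunOn_mem (T.bijOn.surjOn ⟨Nat.succ_pos k, hk⟩)

theorem StdTableau.entry_path (T : StdTableau ℓ n) (hk : k < n) : T.entry (T.path k) = k + 1 :=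
  Function.invFunOn_eq (T.bijOn.surjOn ⟨Nat.succ_pos k, hk⟩)

theorem StdTableau.path_eq_iff (hk : k < n) : T.path k = A ↔ T.entry A = k + 1 := by
  constructor
  · rintro rfl
    exact T.entry_path hk
  · intro h
    refine T.bijOn.injOn (T.path_mem hk) (T.mem_diagram_iff.2 (by omega)) ?_
    rw [T.entry_path hk, h]

theorem StdTableau.exists_path_eq (T : StdTableau ℓ n) (hA : A ∈ T.shape.diagram) :
    ∃ k < n, T.path k = A := by
  have hentry := T.bijOn.mapsTo hA
  refine ⟨T.entry A - 1, by grind, (path_eq_iff (by grind)).2 (by grind)⟩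

theorem StdTableau.exists_path_eq_of_entry_lt (T : StdTableau ℓ n) {B : Node}
    (hB : B ∈ T.path '' Set.Iio k) (hk : k ≤ n) (hA : A ∈ T.shape.diagram)
    (h : T.entry A < T.entry B) : A ∈ T.path '' Set.Iio k := by
  obtain ⟨j, hj, rfl⟩ := hB
  obtain ⟨i, hi, rfl⟩ := T.exists_path_eq hA
  rw [T.entry_path hi, T.entry_path (hj.trans_le hk)] at h
  exact ⟨i, (Nat.succ_lt_succ_iff.1 h).trans hj, rfl⟩

theorem StdTableau.isDiagramSet_path_image (T : StdTableau ℓ n) (hk : k ≤ n) :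
    IsDiagramSet ℓ (T.path '' Set.Iio k) := by
  have hmem : ∀ A ∈ T.path '' Set.Iio k, A ∈ T.shape.diagram := by
    rintro _ ⟨j, hj, rfl⟩
    exact T.path_mem (hj.trans_le hk)
  refine ⟨(Set.finite_Iio k).image _, fun A hA => T.shape.fst_lt (hmem A hA), ?_, ?_⟩
  · intro l r c h
    exact T.exists_path_eq_of_entry_lt h hk
      (T.shape.mem_of_le (hmem _ h) le_rfl c.le_succ) (T.row_inc l r c (hmem _ h))
  · intro l r c h
    exact T.exists_path_eq_of_entry_lt h hk
      (T.shape.mem_of_le (hmem _ h) r.le_succ le_rfl) (T.col_inc l r c (hmem _ h))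

theorem StdTableau.isPath_path (T : StdTableau ℓ n) : IsPath ℓ n T.path := by
  intro k hk
  refine ⟨?_, image_Iio_succ T.path k ▸ T.isDiagramSet_path_image hk⟩
  rintro ⟨j, hj, h⟩
  have hentry := T.entry_path hk
  rw [← h, T.entry_path ((Set.mem_Iio.1 hj).trans hk)] at hentry
  exact (Set.mem_Iio.1 hj).ne (Nat.succ_injective hentry)

theorem StdTableau.diagram_eq_path_image (T : StdTableau ℓ n) :
    T.shape.diagram = T.path '' Set.Iio n := by
  ext A
  refine ⟨T.exists_path_eq, ?_⟩
  rintro ⟨k, hk, rfl⟩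
  exact T.path_mem hk

theorem StdTableau.ext_path (h : Set.EqOn S.path T.path (Set.Iio n)) : S = T := by
  refine ext_entry (funext fun A => ?_)
  by_cases hA : A ∈ T.shape.diagram
  · obtain ⟨k, hk, rfl⟩ := T.exists_path_eq hA
    rw [T.entry_path hk, ← path_eq_iff hk, h hk]
  · have hA' : A ∉ S.shape.diagram := by
      rwa [S.diagram_eq_path_image, h.image_eq, ← T.diagram_eq_path_image]
    rw [S.entry_zero A hA', T.entry_zero A hA]

theorem StdTableau.shape_eq_of_path_image_eq
    (h : S.path '' Set.Iio n = T.path '' Set.Iio n) : S.shape = T.shape :=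
  Multipartition.ext_diagram <| by
    rw [S.diagram_eq_path_image, T.diagram_eq_path_image, h]

/-- The entry function of the tableau described by a path: `A k` contains `k + 1`. -/
noncomputable def pathEntry (n : ℕ) (A : ℕ → Node) (B : Node) : ℕ :=
  if B ∈ A '' Set.Iio n then Function.invFunOn A (Set.Iio n) B + 1 else 0

theorem IsPath.pathEntry_apply {A : ℕ → Node} (h : IsPath ℓ n A) (hk : k < n) :
    pathEntry n A (A k) = k + 1 := by
  rw [pathEntry, if_pos ⟨k, hk, rfl⟩, h.injOn.leftInvOn_invFunOn hk]

theorem IsPath.pathEntry_lt {A : ℕ → Node} (h : IsPath ℓ n A) {l r c r' c' : ℕ}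
    (hmem : (l, r, c) ∈ A '' Set.Iio n) (hr : r' ≤ r) (hc : c' ≤ c) (hne : (r', c') ≠ (r, c)) :
    pathEntry n A (l, r', c') < pathEntry n A (l, r, c) := by
  obtain ⟨k, hk, e⟩ := hmem
  have hadd := h k hk
  rw [e] at hadd
  obtain ⟨j, hj, e'⟩ := hadd.mem_of_le hr hc hne
  rw [← e, ← e', h.pathEntry_apply hk, h.pathEntry_apply ((Set.mem_Iio.1 hj).trans hk)]
  exact Nat.succ_lt_succ hj

theorem IsPath.exists_multipartition {A : ℕ → Node} (h : IsPath ℓ n A) :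
    ∃ μ : Multipartition ℓ n, μ.diagram = A '' Set.Iio n :=
  h.isDiagramSet.exists_multipartition
    (by rw [h.injOn.ncard_image, Set.ncard_Iio_nat])
    (by rintro _ ⟨k, hk, rfl⟩; exact h.row_lt hk)

theorem IsPath.exists_path_eqOn {A : ℕ → Node} (h : IsPath ℓ n A) :
    ∃ T : StdTableau ℓ n, Set.EqOn T.path A (Set.Iio n) := by
  obtain ⟨μ, hμ⟩ := h.exists_multipartition
  let T : StdTableau ℓ n :=
    { shape := μ
      entry := pathEntry n A
      entry_zero := fun B hB => if_neg (hμ ▸ hB)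
      bijOn := by
        rw [hμ]
        refine ⟨?_, ?_, ?_⟩
        · rintro _ ⟨k, hk, rfl⟩
          rw [h.pathEntry_apply hk]
          exact ⟨Nat.succ_pos k, hk⟩
        · rintro _ ⟨j, hj, rfl⟩ _ ⟨k, hk, rfl⟩ e
          rw [h.pathEntry_apply hj, h.pathEntry_apply hk] at e
          rw [Nat.succ_injective e]
        · rintro k ⟨hk, hkn⟩
          refine ⟨A (k - 1), ⟨k - 1, by grind, rfl⟩, ?_⟩
          rw [h.pathEntry_apply (by omega), Nat.sub_add_cancel hk]
      row_inc := fun l r c hc =>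
        h.pathEntry_lt (hμ ▸ hc) le_rfl c.le_succ (by simp)
      col_inc := fun l r c hc =>
        h.pathEntry_lt (hμ ▸ hc) r.le_succ le_rfl (by simp) }
  exact ⟨T, fun k hk => (StdTableau.path_eq_iff hk).2 (h.pathEntry_apply hk)⟩

instance StdTableau.instFinite : Finite (StdTableau ℓ n) := by
  have hbound (T : StdTableau ℓ n) (k : Fin n) :
      T.path k ∈ (Finset.range ℓ ×ˢ Finset.range n ×ˢ Finset.range n : Finset Node) := by
    simpa using ⟨T.shape.fst_lt (T.path_mem k.2), T.isPath_path.row_lt k.2,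
      T.isPath_path.col_lt k.2⟩
  refine Finite.of_injective (β := Fin n → (Finset.range ℓ ×ˢ Finset.range n ×ˢ Finset.range n :
    Finset Node)) (fun T k => ⟨T.path k, hbound T k⟩) fun S T h => ext_path fun k hk => ?_
  exact congrArg Subtype.val (congrFun h ⟨k, hk⟩)

noncomputable instance StdTableau.instFintype : Fintype (StdTableau ℓ n) := Fintype.ofFinite _

end TableauxAsPaths

section Swaps

variable {ℓ n : ℕ} {T V : StdTableau ℓ n} {j k : ℕ}

theorem swap_apply_lt (hk : k + 1 < n) (hj : j < n) : Equiv.swap k (k + 1) j < n := by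
  rw [Equiv.swap_apply_def]
  split_ifs <;> omega

/-- Interchanging the entries `k + 1` and `k + 2` of `T` gives a standard tableau. -/
def StdTableau.Swappable (T : StdTableau ℓ n) (k : ℕ) : Prop :=
  k + 1 < n ∧ ¬ Adjacent (T.path k) (T.path (k + 1))

/-- The tableau obtained from `T` by interchanging the entries `k + 1` and `k + 2` if it is
standard, and `T` itself otherwise. -/
noncomputable def StdTableau.swap (T : StdTableau ℓ n) (k : ℕ) : StdTableau ℓ n :=
  if h : T.Swappable k then
    ((T.isPath_path.isPath_comp_swap_iff h.1).2 h.2).exists_path_eqOn.choose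
  else T

theorem StdTableau.swap_of_not_swappable (h : ¬ T.Swappable k) : T.swap k = T :=
  dif_neg h

theorem StdTableau.Swappable.path_swap (h : T.Swappable k) (hj : j < n) :
    (T.swap k).path j = T.path (Equiv.swap k (k + 1) j) := by
  rw [swap, dif_pos h]
  exact ((T.isPath_path.isPath_comp_swap_iff h.1).2 h.2).exists_path_eqOn.choose_spec hj

theorem StdTableau.Swappable.path_swap_left (h : T.Swappable k) :
    (T.swap k).path k = T.path (k + 1) := by
  rw [h.path_swap (Nat.lt_of_succ_lt h.1), Equiv.swap_apply_left]

theorem StdTableau.Swappable.path_swap_right (h : T.Swappable k) :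
    (T.swap k).path (k + 1) = T.path k := by
  rw [h.path_swap h.1, Equiv.swap_apply_right]

theorem StdTableau.path_swap_of_ne (T : StdTableau ℓ n) (hj : j < n) (h0 : j ≠ k)
    (h1 : j ≠ k + 1) : (T.swap k).path j = T.path j := by
  by_cases h : T.Swappable k
  · rw [h.path_swap hj, Equiv.swap_apply_of_ne_of_ne h0 h1]
  · rw [swap_of_not_swappable h]

theorem StdTableau.Swappable.swap_eq_iff (h : T.Swappable k) :
    T.swap k = V ↔ ∀ j < n, V.path j = T.path (Equiv.swap k (k + 1) j) := by
  refine ⟨?_, fun hV => ext_path fun j hj => ?_⟩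
  · rintro rfl j hj
    exact h.path_swap hj
  · rw [h.path_swap hj, hV j hj]

theorem StdTableau.shape_swap (T : StdTableau ℓ n) (k : ℕ) : (T.swap k).shape = T.shape := by
  by_cases h : T.Swappable k
  · have heq : Set.EqOn (T.swap k).path (T.path ∘ Equiv.swap k (k + 1)) (Set.Iio n) :=
      fun j hj => h.path_swap hj
    exact shape_eq_of_path_image_eq (heq.image_eq.trans (image_comp_swap_Iio T.path h.1.ne'))
  · rw [swap_of_not_swappable h]

theorem StdTableau.Swappable.swappable_swap (h : T.Swappable k) : (T.swap k).Swappable k := by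
  refine ⟨h.1, ?_⟩
  rw [h.path_swap_left, h.path_swap_right]
  have hkey : IsPath ℓ n ((T.swap k).path ∘ Equiv.swap k (k + 1)) :=
    T.isPath_path.congr fun j hj => by
      rw [Function.comp_apply, h.path_swap (swap_apply_lt h.1 hj), Equiv.swap_apply_self]
  rw [(T.swap k).isPath_path.isPath_comp_swap_iff h.1, h.path_swap_left, h.path_swap_right] at hkey
  exact hkey

theorem StdTableau.Swappable.swap_swap (h : T.Swappable k) : (T.swap k).swap k = T :=
  h.swappable_swap.swap_eq_iff.2 fun j hj => by
    rw [h.path_swap (swap_apply_lt h.1 hj), Equiv.swap_apply_self]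

theorem StdTableau.swappable_swap_iff_of_far (T : StdTableau ℓ n)
    (hjk : j + 1 < k ∨ k + 1 < j) : (T.swap j).Swappable k ↔ T.Swappable k := by
  refine and_congr_right fun hk => ?_
  rw [T.path_swap_of_ne (by omega) (by omega) (by omega),
    T.path_swap_of_ne hk (by omega) (by omega)]

theorem StdTableau.Swappable.swap_comm (hj : T.Swappable j) (hk : T.Swappable k)
    (hjk : j + 1 < k ∨ k + 1 < j) : (T.swap j).swap k = (T.swap k).swap j := by
  have hjk' := (T.swappable_swap_iff_of_far hjk).2 hk
  have hkj' := (T.swappable_swap_iff_of_far hjk.symm).2 hj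
  refine hjk'.swap_eq_iff.2 fun i hi => ?_
  rw [hkj'.path_swap hi, hk.path_swap (swap_apply_lt hj.1 hi),
    hj.path_swap (swap_apply_lt hk.1 hi)]
  simp only [Equiv.swap_apply_def]
  grind

theorem StdTableau.Swappable.swap_braid (h₁ : T.Swappable j) (h₂ : (T.swap j).Swappable (j + 1))
    (h₃ : ((T.swap j).swap (j + 1)).Swappable j) (h₁' : T.Swappable (j + 1))
    (h₂' : (T.swap (j + 1)).Swappable j) (h₃' : ((T.swap (j + 1)).swap j).Swappable (j + 1)) :
    ((T.swap j).swap (j + 1)).swap j = ((T.swap (j + 1)).swap j).swap (j + 1) := by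
  refine h₃.swap_eq_iff.2 fun i hi => ?_
  have hlt {i : ℕ} (hi : i < n) := swap_apply_lt h₁.1 hi
  have hlt' {i : ℕ} (hi : i < n) := swap_apply_lt h₁'.1 hi
  rw [h₃'.path_swap hi, h₂'.path_swap (hlt' hi), h₁'.path_swap (hlt (hlt' hi)),
    h₂.path_swap (hlt hi), h₁.path_swap (hlt' (hlt hi))]
  have hleft := Equiv.swap_mul_swap_mul_swap (x := j + 2) (y := j + 1) (z := j)
    (by omega) (by omega)
  have hright := Equiv.swap_mul_swap_mul_swap (x := j) (y := j + 1) (z := j + 2)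
    (by omega) (by omega)
  rw [Equiv.swap_comm (j + 1) j, Equiv.swap_comm (j + 2) (j + 1), Equiv.swap_comm j (j + 2),
    ← hright] at hleft
  exact congrArg T.path (DFunLike.congr_fun hleft i).symm

theorem StdTableau.Swappable.entry_swap (h : T.Swappable k) :
    (T.swap k).entry = swapEntry T.entry (k + 1) := by
  funext A
  by_cases hA : A ∈ T.shape.diagram
  · obtain ⟨i, hi, rfl⟩ := T.exists_path_eq hA
    have hpath : (T.swap k).path (Equiv.swap k (k + 1) i) = T.path i := by
      rw [h.path_swap (swap_apply_lt h.1 hi), Equiv.swap_apply_self]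
    rw [(path_eq_iff (swap_apply_lt h.1 hi)).1 hpath, swapEntry, T.entry_path hi,
      Equiv.swap_apply_def]
    grind
  · rw [(T.swap k).entry_zero A (T.shape_swap k ▸ hA), swapEntry, T.entry_zero A hA]
    simp

theorem StdTableau.swappable_of_entry_eq (hk : k + 1 < n)
    (h : V.entry = swapEntry T.entry (k + 1)) : T.Swappable k := by
  refine ⟨hk, (T.isPath_path.isPath_comp_swap_iff hk).1 (V.isPath_path.congr fun j hj => ?_)⟩
  have hlt := swap_apply_lt hk hj
  rw [Function.comp_apply, path_eq_iff hj, h, swapEntry, T.entry_path hlt, Equiv.swap_apply_def]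
  grind

theorem StdTableau.Swappable.oSwapO_eq_some (h : T.Swappable k) :
    oSwapO T (k + 1) = some (T.swap k) := by
  have hex : ∃ V : StdTableau ℓ n, V.entry = swapEntry T.entry (k + 1) := ⟨_, h.entry_swap⟩
  rw [oSwapO, dif_pos hex]
  exact congrArg some (ext_entry (hex.choose_spec.trans h.entry_swap.symm))

theorem StdTableau.oSwapO_eq_none (hk : k + 1 < n) (h : ¬ T.Swappable k) :
    oSwapO T (k + 1) = none :=
  dif_neg fun ⟨_, hV⟩ => h (swappable_of_entry_eq hk hV)

end Swaps

section Descents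

variable {ℓ n : ℕ} {S T : StdTableau ℓ n} {k : ℕ}

/-- Nodes ordered lexicographically by component, row and column. -/
def nodeKey (A : Node) : ℕ ×ₗ ℕ ×ₗ ℕ := toLex (A.1, toLex A.2)

theorem nodeKey_injective : Function.Injective nodeKey := fun _ _ h => h

theorem nodeBelow_iff_nodeKey_lt {A B : Node} : nodeBelow A B ↔ nodeKey A < nodeKey B := by
  simp [nodeBelow, nodeKey, Prod.Lex.toLex_lt_toLex]

theorem Adjacent.nodeBelow {A B : Node} (h : Adjacent A B) : nodeBelow A B := by
  rcases h with rfl | rfl <;> simp [Paper.nodeBelow]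

/-- The entry `k + 2` of `T` occurs before `k + 1` in reading order. -/
def StdTableau.IsDescent (T : StdTableau ℓ n) (k : ℕ) : Prop :=
  k + 1 < n ∧ nodeBelow (T.path (k + 1)) (T.path k)

theorem StdTableau.IsDescent.swappable (h : T.IsDescent k) : T.Swappable k :=
  ⟨h.1, fun hadj => lt_asymm (nodeBelow_iff_nodeKey_lt.1 h.2)
    (nodeBelow_iff_nodeKey_lt.1 hadj.nodeBelow)⟩

theorem StdTableau.nodeBelow_or_isDescent (T : StdTableau ℓ n) (hk : k + 1 < n) :
    nodeBelow (T.path k) (T.path (k + 1)) ∨ T.IsDescent k := by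
  have hne : T.path k ≠ T.path (k + 1) :=
    T.isPath_path.injOn.ne (Nat.lt_of_succ_lt hk) hk k.succ_ne_self.symm
  rcases lt_or_gt_of_ne (nodeKey_injective.ne hne) with h | h
  · exact Or.inl (nodeBelow_iff_nodeKey_lt.2 h)
  · exact Or.inr ⟨hk, nodeBelow_iff_nodeKey_lt.2 h⟩

theorem StdTableau.Swappable.isDescent_or (h : T.Swappable k) :
    T.IsDescent k ∨ (T.swap k).IsDescent k := by
  refine (T.nodeBelow_or_isDescent h.1).symm.imp_right fun hbelow => ⟨h.1, ?_⟩
  rwa [h.path_swap_left, h.path_swap_right]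

theorem StdTableau.wellFounded_swap_isDescent :
    WellFounded fun S T : StdTableau ℓ n => ∃ k, T.IsDescent k ∧ S = T.swap k := by
  refine Subrelation.wf (r := InvImage (· < ·) fun T : StdTableau ℓ n =>
    toLex fun j : Fin n => nodeKey (T.path j)) ?_ (InvImage.wf _ wellFounded_lt)
  rintro _ T ⟨k, h, rfl⟩
  have hword : (fun j : Fin n => nodeKey ((T.swap k).path j)) =
      (fun j : Fin n => nodeKey (T.path j)) ∘
        Equiv.swap ⟨k, Nat.lt_of_succ_lt h.1⟩ ⟨k + 1, h.1⟩ := by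
    funext j
    rw [h.swappable.path_swap j.2, Function.comp_apply, Equiv.swap_apply_def, Equiv.swap_apply_def]
    simp only [Fin.ext_iff]
    split_ifs <;> rfl
  rw [InvImage, hword]
  exact Pi.lex_desc (Fin.mk_le_mk.2 k.le_succ) (nodeBelow_iff_nodeKey_lt.1 h.2)

@[elab_as_elim]
theorem StdTableau.induction_isDescent {p : StdTableau ℓ n → Prop} (T : StdTableau ℓ n)
    (h : ∀ T, (∀ k, T.IsDescent k → p (T.swap k)) → p T) : p T :=
  wellFounded_swap_isDescent.induction T fun T ih => h T fun k hk => ih _ ⟨k, hk, rfl⟩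

/-- `T` is the initial tableau `t^λ` of its shape: it has no descents. -/
def StdTableau.IsInitial (T : StdTableau ℓ n) : Prop := ∀ k, ¬ T.IsDescent k

theorem StdTableau.exists_isInitial (T : StdTableau ℓ n) :
    ∃ I : StdTableau ℓ n, I.shape = T.shape ∧ I.IsInitial := by
  induction T using induction_isDescent with
  | h T ih =>
    by_cases hT : T.IsInitial
    · exact ⟨T, rfl, hT⟩
    · obtain ⟨k, hk⟩ := not_forall_not.1 hT
      exact (ih k hk).imp fun I hI => ⟨hI.1.trans (T.shape_swap k), hI.2⟩

end Descents

section InitialTableaux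

variable {ℓ n : ℕ} {μ : Multipartition ℓ n} {S T : StdTableau ℓ n} {A B : Node}

theorem sum_range_part_add_lt {l r c s : ℕ} (hmem : (l, r, c) ∈ μ.diagram) (hs : r < s) :
    ∑ i ∈ Finset.range r, μ.part l i + c < ∑ i ∈ Finset.range s, μ.part l i :=
  calc ∑ i ∈ Finset.range r, μ.part l i + c
      < ∑ i ∈ Finset.range (r + 1), μ.part l i := by
        rw [Finset.sum_range_succ]
        exact Nat.add_lt_add_left hmem _
    _ ≤ _ := Finset.sum_le_sum_of_subset (Finset.range_mono hs)

theorem tlamEntry_le_sum_range (hA : A ∈ μ.diagram) {m : ℕ} (hm : A.1 < m) :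
    tlamEntry μ A ≤ ∑ l ∈ Finset.range m, ∑ r ∈ Finset.range n, μ.part l r := by
  obtain ⟨l, r, c⟩ := A
  have hcomp := sum_range_part_add_lt hA (μ.row_lt hA)
  calc tlamEntry μ (l, r, c)
      ≤ ∑ l ∈ Finset.range (l + 1), ∑ r ∈ Finset.range n, μ.part l r := by
        rw [tlamEntry, if_pos hA, Finset.sum_range_succ]
        dsimp only
        omega
    _ ≤ _ := Finset.sum_le_sum_of_subset (Finset.range_mono hm)

theorem tlamEntry_le (hA : A ∈ μ.diagram) : tlamEntry μ A ≤ n :=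
  (tlamEntry_le_sum_range hA (μ.fst_lt hA)).trans_eq μ.size

theorem tlamEntry_lt_of_nodeBelow (hA : A ∈ μ.diagram) (hB : B ∈ μ.diagram)
    (h : nodeBelow A B) : tlamEntry μ A < tlamEntry μ B := by
  obtain ⟨l, r, c⟩ := A
  obtain ⟨l', r', c'⟩ := B
  rcases h with h | ⟨rfl, h⟩
  · have hle := tlamEntry_le_sum_range hA h
    rw [tlamEntry.eq_def μ (l', r', c'), if_pos hB]
    dsimp only at hle ⊢
    omega
  · rw [tlamEntry, tlamEntry, if_pos hA, if_pos hB]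
    dsimp only at h ⊢
    rcases h with h | ⟨rfl, h⟩
    · have := sum_range_part_add_lt hA h
      omega
    · omega

theorem eq_succ_of_lt_succ_of_le {n : ℕ} {f : ℕ → ℕ} (hstep : ∀ k, k + 1 < n → f k < f (k + 1))
    (hle : ∀ k < n, f k ≤ n) (hpos : 0 < n → 0 < f 0) {k : ℕ} (hk : k < n) : f k = k + 1 := by
  have hlow (k : ℕ) (hk : k < n) : k + 1 ≤ f k := by
    induction k with
    | zero => exact hpos hk
    | succ k ih => exact (Nat.succ_le_succ (ih (by omega))).trans (hstep k hk)
  refine (hlow k hk).antisymm' ?_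
  induction hk' : n - 1 - k generalizing k with
  | zero => have := hle k hk; omega
  | succ d ih =>
    have := ih (show k + 1 < n by omega) (by omega)
    have := hstep k (by omega)
    omega

theorem StdTableau.entry_eq_tlamEntry_iff : T.entry = tlamEntry T.shape ↔ T.IsInitial := by
  constructor
  · rintro h k ⟨hk, hbelow⟩
    have hlt := tlamEntry_lt_of_nodeBelow (T.path_mem hk) (T.path_mem (by omega)) hbelow
    rw [← h, T.entry_path hk, T.entry_path (by omega)] at hlt
    omega
  · intro h
    funext A
    by_cases hA : A ∈ T.shape.diagram
    · obtain ⟨k, hk, rfl⟩ := T.exists_path_eq hA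
      rw [T.entry_path hk]
      refine (eq_succ_of_lt_succ_of_le (f := fun k => tlamEntry T.shape (T.path k)) (fun k hk => ?_)
        (fun k hk => tlamEntry_le (T.path_mem hk)) (fun hn => ?_) hk).symm
      · exact tlamEntry_lt_of_nodeBelow (T.path_mem (by omega)) (T.path_mem hk)
          ((T.nodeBelow_or_isDescent hk).resolve_right (h k))
      · rw [tlamEntry, if_pos (T.path_mem hn)]
        exact Nat.succ_pos _
    · rw [T.entry_zero A hA, tlamEntry, if_neg hA]

theorem StdTableau.IsInitial.eq_of_shape_eq (hS : S.IsInitial) (hT : T.IsInitial)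
    (h : S.shape = T.shape) : S = T :=
  ext_entry <| by rw [entry_eq_tlamEntry_iff.2 hS, entry_eq_tlamEntry_iff.2 hT, h]

theorem StdTableau.swap_induction {p : StdTableau ℓ n → Prop} {U : StdTableau ℓ n}
    (h : S.shape = U.shape) (hS : p S)
    (hswap : ∀ V k, V.Swappable k → V.shape = S.shape → p V → p (V.swap k)) : p U := by
  have hinit (V : StdTableau ℓ n) (hV : V.shape = S.shape) :
      ∃ I : StdTableau ℓ n, I.shape = S.shape ∧ I.IsInitial ∧ (p I ↔ p V) := by
    induction V using induction_isDescent with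
    | h V ih =>
      by_cases hVI : V.IsInitial
      · exact ⟨V, hV, hVI, Iff.rfl⟩
      · obtain ⟨k, hk⟩ := not_forall_not.1 hVI
        have hk' := hk.swappable
        have hV' := (V.shape_swap k).trans hV
        obtain ⟨I, hIS, hI, hpI⟩ := ih k hk hV'
        exact ⟨I, hIS, hI, hpI.trans
          ⟨fun h => hk'.swap_swap ▸ hswap _ k hk'.swappable_swap hV' h, hswap V k hk' hV⟩⟩
  obtain ⟨I, hIS, hI, hpS⟩ := hinit S rfl
  obtain ⟨J, hJS, hJ, hpU⟩ := hinit U h.symm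
  rw [← hpU, ← hI.eq_of_shape_eq hJ (hIS.trans hJS.symm), hpS]
  exact hS

end InitialTableaux

section SeparationOfTableaux

variable {K : Type*} [Field K] {t : Kˣ} {n ℓ : ℕ} {κ : ℕ → ℤ}

theorem SeparatesF.eq_of_qcontent_path_eq (hs : SeparatesF t n ℓ κ) {S T : StdTableau ℓ n}
    (h : ∀ k < n, qcontent t κ (S.path k) = qcontent t κ (T.path k)) : S = T := by
  refine StdTableau.ext_path fun k hk => ?_
  induction k using Nat.strong_induction_on with
  | _ k ih =>
    have hk : k < n := hk
    refine hs.eq_of_qcontent_eq (S.isPath_path k hk) ?_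
      ((ncard_image_Iio_le _ _).trans_lt hk) (h k hk)
    have heq : Set.EqOn S.path T.path (Set.Iio k) := fun j hj =>
      ih j hj ((Set.mem_Iio.1 hj).trans hk)
    rw [heq.image_eq]
    exact T.isPath_path k hk

theorem SeparatesF.qcontent_ne_succ (hs : SeparatesF t n ℓ κ) {A : ℕ → Node} {m k : ℕ}
    (hA : IsPath ℓ m A) (hm : m ≤ n) (hk : k + 1 < m) :
    qcontent t κ (A k) ≠ (qcontent t κ (A (k + 1)) : K) := by
  have hadd := hA k (by omega)
  have hcard := ncard_image_Iio_le A k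
  by_cases h : Adjacent (A k) (A (k + 1))
  · obtain ⟨ε, hε, e⟩ := h.exists_nodeContent_eq κ
    rw [qcontent.eq_def t κ (A (k + 1)), e]
    exact hs.qcontent_ne_qint_add hadd hadd (by omega) hε
  · intro e
    have hpath := hs.eq_of_qcontent_eq hadd ((hA.addable_succ_iff hk).2 h) (by omega) e
    exact k.succ_ne_self.symm (hA.injOn (by simp; omega) (by simpa using hk) hpath)

theorem SeparatesF.qcontent_path_ne_succ (hs : SeparatesF t n ℓ κ) (T : StdTableau ℓ n) {k : ℕ}
    (hk : k + 1 < n) : qcontent t κ (T.path k) ≠ (qcontent t κ (T.path (k + 1)) : K) :=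
  hs.qcontent_ne_succ T.isPath_path le_rfl hk

theorem IsPath.abs_nodeContent_sub_eq_two_of_adjacent {A : ℕ → Node} {k : ℕ}
    (hA : IsPath ℓ (k + 3) A) (h₁ : Adjacent (A k) (A (k + 1)))
    (h₂ : Adjacent (A (k + 1)) (A (k + 2))) :
    |nodeContent κ (A k) - nodeContent κ (A (k + 2))| = 2 := by
  have hAk := hA k (by omega)
  have hA2 := hA (k + 2) (by omega)
  -- A mixed pair of steps would make `(r + 1, c + 1)` addable with a neighbour missing.
  have hmixed {l r c : ℕ} (e : A k = (l, r, c)) (hne : A (k + 2) = (l, r + 1, c + 1)) : False := by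
    rw [e] at hAk
    rw [hne] at hA2
    have hdown := hA2.mem_of_le (r' := r + 1) (c' := c) le_rfl c.le_succ (by simp)
    have hright := hA2.mem_of_le (r' := r) (c' := c + 1) r.le_succ le_rfl (by simp)
    have hdiag := (hA.mono (m := k + 3) (show k ≤ k + 3 by omega)).isDiagramSet
    rw [image_Iio_succ, image_Iio_succ, e] at hdown hright
    have hd : (l, r + 1, c) ∉ A '' Set.Iio k := fun h =>
      hAk.1 (hdiag.mem_of_le h r.le_succ le_rfl)
    have hr : (l, r, c + 1) ∉ A '' Set.Iio k := fun h =>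
      hAk.1 (hdiag.mem_of_le h le_rfl c.le_succ)
    simp only [Set.mem_union, hd, hr, Set.mem_singleton_iff, false_or] at hdown hright
    have heq := (hdown.resolve_left (by simp)).trans (hright.resolve_left (by simp)).symm
    simp at heq
  rcases hcell : A k with ⟨l, r, c⟩
  rcases h₁ with h₁ | h₁ <;> rcases h₂ with h₂ | h₂ <;> rw [h₁, hcell] at h₂ <;> dsimp only at h₂
  · rw [h₂, nodeContent, nodeContent]
    grind
  · exact (hmixed hcell h₂).elim
  · exact (hmixed hcell h₂).elim
  · rw [h₂, nodeContent, nodeContent]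
    grind

theorem SeparatesF.qcontent_path_ne_add_two (hs : SeparatesF t n ℓ κ) (T : StdTableau ℓ n)
    {k : ℕ} (hk : k + 2 < n) :
    qcontent t κ (T.path k) ≠ (qcontent t κ (T.path (k + 2)) : K) := by
  by_cases h₁ : T.Swappable k
  · have hne := hs.qcontent_path_ne_succ (T.swap k) (k := k + 1) hk
    rwa [h₁.path_swap_right, T.path_swap_of_ne hk (by omega) (by omega)] at hne
  by_cases h₂ : T.Swappable (k + 1)
  · have hne := hs.qcontent_path_ne_succ (T.swap (k + 1)) (k := k) (by omega)
    rwa [h₂.path_swap_left, T.path_swap_of_ne (by omega) (by omega) (by omega)] at hne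
  have hpath := T.isPath_path.mono (show k + 3 ≤ n by omega)
  have hdist := hpath.abs_nodeContent_sub_eq_two_of_adjacent (κ := κ)
    (by_contra fun h => h₁ ⟨by omega, h⟩) (by_contra fun h => h₂ ⟨hk, h⟩)
  rw [qcontent, qcontent, Ne, qint_eq_qint_iff t.ne_zero]
  refine hs.qint_ne_zero (fun h => ?_) (by omega)
  rw [h] at hdist
  simp at hdist

end SeparationOfTableaux

section Eigenvectors

open Polynomial

variable {K H : Type*} [Field K] [Ring H] [Algebra K H] {Y Z u v φ : H} {a y : K} {s : Finset K}
  {E E' : Set K}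

theorem semiconjBy_aeval (h : SemiconjBy φ Y Z) (p : K[X]) :
    SemiconjBy φ (aeval Y p) (aeval Z p) := by
  induction p using Polynomial.induction_on' with
  | add p q hp hq => simpa only [map_add] using hp.add_right hq
  | monomial k a =>
    simpa only [aeval_monomial] using
      SemiconjBy.mul_right (Algebra.commutes a φ).symm (h.pow_right k)

theorem pow_mul_of_mul_eq_smul (h : Y * v = y • v) (k : ℕ) : Y ^ k * v = y ^ k • v := by
  induction k with
  | zero => simp
  | succ k ih => rw [pow_succ, mul_assoc, h, mul_smul_comm, ih, smul_smul, pow_succ']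

theorem aeval_mul_of_mul_eq_smul (h : Y * v = y • v) (p : K[X]) :
    aeval Y p * v = p.eval y • v := by
  induction p using Polynomial.induction_on' with
  | add p q hp hq => rw [map_add, add_mul, hp, hq, eval_add, add_smul]
  | monomial k a =>
    rw [aeval_monomial, mul_assoc, eval_monomial, mul_smul, ← Algebra.smul_def,
      pow_mul_of_mul_eq_smul h]

theorem aeval_X_sub_C_mul (Y v : H) (a : K) : aeval Y (X - C a) * v = Y * v - a • v := by
  rw [map_sub, aeval_X, aeval_C, sub_mul, ← Algebra.smul_def]

theorem eval_prod_X_sub_C_eq_zero_iff : (∏ x ∈ s, (X - C x)).eval y = 0 ↔ y ∈ s := by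
  simp [eval_prod, Finset.prod_eq_zero_iff, sub_eq_zero]

/-- The element `v` is a sum of eigenvectors of left multiplication by `Y` with eigenvalues in `E`,
expressed by the existence of an annihilating polynomial with simple roots in `E`. -/
def IsEigenSum (Y v : H) (E : Set K) : Prop :=
  ∃ s : Finset K, ↑s ⊆ E ∧ aeval Y (∏ x ∈ s, (X - C x)) * v = 0

theorem IsEigenSum.mem_of_mul_eq_smul (h : IsEigenSum Y v E) (hv : Y * v = y • v) (h0 : v ≠ 0) :
    y ∈ E := by
  obtain ⟨s, hs, h⟩ := h
  rw [aeval_mul_of_mul_eq_smul hv] at h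
  exact hs (eval_prod_X_sub_C_eq_zero_iff.1 ((smul_eq_zero.1 h).resolve_right h0))

theorem IsEigenSum.eq_zero_of_mul_eq_smul_add (h : IsEigenSum Y v E) (hv : Y * v = a • v + u)
    (hu : Y * u = a • u) : u = 0 := by
  obtain ⟨s, -, h⟩ := h
  have huv : aeval Y (X - C a) * v = u := by
    rw [aeval_X_sub_C_mul, hv]
    abel
  -- `u` is killed by the part of the annihilating polynomial of `v` that is nonzero at `a`.
  have hsu : aeval Y (∏ x ∈ s.erase a, (X - C x)) * u = 0 := by
    rw [← huv, ← mul_assoc, ← map_mul]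
    by_cases ha : a ∈ s
    · rwa [Finset.prod_erase_mul s _ ha]
    · rw [Finset.erase_eq_of_notMem ha, mul_comm, map_mul, mul_assoc, h, mul_zero]
  rw [aeval_mul_of_mul_eq_smul hu] at hsu
  exact (smul_eq_zero.1 hsu).resolve_left
    (eval_prod_X_sub_C_eq_zero_iff.not.2 (Finset.notMem_erase a s))

theorem exists_eq_sum_aeval_mul (h : aeval Y (∏ x ∈ s, (X - C x)) * v = 0) :
    ∃ p : K → K[X], v = ∑ x ∈ s, aeval Y (p x) * v ∧
      ∀ x ∈ s, Y * (aeval Y (p x) * v) = x • (aeval Y (p x) * v) := by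
  refine ⟨fun x => Lagrange.basis s id x, ?_, fun x hx => ?_⟩
  · rcases s.eq_empty_or_nonempty with rfl | hs
    · simpa using h
    · rw [← Finset.sum_mul, ← map_sum, Lagrange.sum_basis Function.injective_id.injOn hs, map_one,
        one_mul]
  · have hbasis : (X - C x) * Lagrange.basis s id x =
        C (∏ y ∈ s.erase x, (x - y)⁻¹) * ∏ y ∈ s, (X - C y) := by
      rw [← Finset.mul_prod_erase s _ hx, Lagrange.basis]
      simp only [Lagrange.basisDivisor, id]
      rw [Finset.prod_mul_distrib, map_prod]
      ring
    rw [← sub_eq_zero, ← aeval_X_sub_C_mul, ← mul_assoc, ← map_mul, hbasis, map_mul, mul_assoc, h,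
      mul_zero]

theorem IsEigenSum.of_forall_eigenvector (h : IsEigenSum Y v E)
    (hE : ∀ (p : K[X]) (x : K), x ∈ E → Y * (aeval Y p * v) = x • (aeval Y p * v) →
      aeval Y p * v ≠ 0 → x ∈ E') : IsEigenSum Y v E' := by
  obtain ⟨s, hs, h⟩ := h
  obtain ⟨p, hsum, hp⟩ := exists_eq_sum_aeval_mul h
  refine ⟨{x ∈ s | aeval Y (p x) * v ≠ 0}, fun x hx => ?_, ?_⟩
  · obtain ⟨hxs, hx0⟩ := Finset.mem_filter.1 hx
    exact hE (p x) x (hs hxs) (hp x hxs) hx0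
  · have hmul (Q : H) : Q * v = ∑ x ∈ s, Q * (aeval Y (p x) * v) := by
      rw [← Finset.mul_sum, ← hsum]
    rw [hmul]
    refine Finset.sum_eq_zero fun x hx => ?_
    by_cases h0 : aeval Y (p x) * v = 0
    · rw [h0, mul_zero]
    · rw [aeval_mul_of_mul_eq_smul (hp x hx),
        eval_prod_X_sub_C_eq_zero_iff.2 (Finset.mem_filter.2 ⟨hx, h0⟩), zero_smul]

end Eigenvectors

section HeckeRelations

open Polynomial

/-- The relations of the integral cyclotomic Hecke algebra for elements `L 0, …, L (n - 1)` and
`T 0, …, T (n - 2)` of a `K`-algebra; the values of `L` and `T` beyond these indices are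
irrelevant. -/
structure HeckeRelations {K H : Type*} [Field K] [Ring H] [Algebra K H] (t : Kˣ) (n ℓ : ℕ)
    (κ : ℕ → ℤ) (L T : ℕ → H) : Prop where
  L_mul_L : ∀ j k, j < n → k < n → L j * L k = L k * L j
  T_mul_self : ∀ k, k + 1 < n → T k * T k = ((t : K) - 1) • T k + (t : K) • 1
  T_mul_T : ∀ j k, j + 1 < n → k + 1 < n → (j + 1 < k ∨ k + 1 < j) → T j * T k = T k * T j
  braid : ∀ k, k + 2 < n → T k * T (k + 1) * T k = T (k + 1) * T k * T (k + 1)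
  T_mul_L : ∀ k j, k + 1 < n → j < n → j ≠ k → j ≠ k + 1 → T k * L j = L j * T k
  L_succ_mul_T : ∀ k, k + 1 < n → L (k + 1) * T k = T k * L k + 1 + ((t : K) - 1) • L (k + 1)
  cyclotomic : 0 < n → aeval (L 0) (∏ l ∈ Finset.range ℓ, (X - C (qint (t : K) (κ l)))) = 0

variable {K H : Type*} [Field K] [Ring H] [Algebra K H] {t : Kˣ} {n ℓ : ℕ} {κ : ℕ → ℤ}
  {L T : ℕ → H} {j k : ℕ}

namespace HeckeRelations

theorem T_mul_L_succ (hH : HeckeRelations t n ℓ κ L T) (hk : k + 1 < n) :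
    T k * L (k + 1) = L k * T k + 1 + ((t : K) - 1) • L (k + 1) := by
  have hquad := hH.T_mul_self k hk
  have hLT := hH.L_succ_mul_T k hk
  have htL : (t : K) • L (k + 1) = T k * L k * T k + T k := by
    have h : L (k + 1) * (T k * T k) = (T k * L k + 1 + ((t : K) - 1) • L (k + 1)) * T k := by
      rw [← hLT, mul_assoc]
    rw [hquad, add_mul, add_mul, smul_mul_assoc, one_mul, mul_add, mul_smul_comm, mul_smul_comm,
      mul_one] at h
    linear_combination (norm := module) h
  have h : (t : K) • (T k * L (k + 1)) =
      (t : K) • (L k * T k + 1 + ((t : K) - 1) • L (k + 1)) := by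
    rw [← mul_smul_comm, htL, mul_add, ← mul_assoc, ← mul_assoc, hquad, add_mul, add_mul,
      smul_mul_assoc, smul_mul_assoc, smul_mul_assoc, smul_mul_assoc, one_mul]
    linear_combination (norm := module) -(((t : K) - 1) • htL)
  exact smul_right_injective H t.ne_zero h

theorem eq_of_T_mul_eq_smul (hH : HeckeRelations t n ℓ κ L T) (hk : k + 2 < n) {v : H} {b b' : K}
    (hb : T k * v = b • v) (hb' : T (k + 1) * v = b' • v) (hv : v ≠ 0) :
    b = b' ∧ (b + 1) * (b - t) = 0 := by
  have hquad : (b + 1) * (b - t) = 0 := by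
    have h := congrArg (· * v) (hH.T_mul_self k (by omega))
    simp only [add_mul, mul_assoc, hb, mul_smul_comm, smul_mul_assoc, one_mul] at h
    refine (smul_eq_zero.1 (?_ : ((b + 1) * (b - t)) • v = 0)).resolve_right hv
    linear_combination (norm := module) h
  have hquad' : (b' + 1) * (b' - t) = 0 := by
    have h := congrArg (· * v) (hH.T_mul_self (k + 1) (by omega))
    simp only [add_mul, mul_assoc, hb', mul_smul_comm, smul_mul_assoc, one_mul] at h
    refine (smul_eq_zero.1 (?_ : ((b' + 1) * (b' - t)) • v = 0)).resolve_right hv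
    linear_combination (norm := module) h
  have hbraid : b * b' * (b - b') = 0 := by
    have h := congrArg (· * v) (hH.braid k hk)
    simp only [mul_assoc, hb, hb', mul_smul_comm] at h
    refine (smul_eq_zero.1 (?_ : (b * b' * (b - b')) • v = 0)).resolve_right hv
    linear_combination (norm := module) h
  have ht := t.ne_zero
  refine ⟨sub_eq_zero.1 ((mul_eq_zero.1 hbraid).resolve_left (mul_ne_zero ?_ ?_)), hquad⟩
  · rintro rfl
    simp [ht] at hquad
  · rintro rfl
    simp [ht] at hquad'

end HeckeRelations

/-- The scalar `b` for which `T k * v - b • v` is again a common eigenvector of `L k` and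
`L (k + 1)` when `L k * v = x • v` and `L (k + 1) * v = y • v`. For `x = [c]_t` and `y = [d]_t` it
is `-1 / [c - d]_t`. -/
noncomputable def intertwinerCoeff {K : Type*} [Field K] (t x y : K) : K :=
  (1 + (t - 1) * y) / (y - x)

end HeckeRelations

section IntertwinerCoeff

variable {K : Type*} [Field K] (τ : K) {x y z : K}

theorem intertwinerCoeff_mul_sub (h : x ≠ y) :
    intertwinerCoeff τ x y * (y - x) = 1 + (τ - 1) * y :=
  div_mul_cancel₀ _ (sub_ne_zero.2 h.symm)

theorem intertwinerCoeff_swap (h : x ≠ y) :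
    intertwinerCoeff τ y x = τ - 1 - intertwinerCoeff τ x y := by
  have hyx : y - x ≠ 0 := sub_ne_zero.2 h.symm
  have hxy : x - y ≠ 0 := sub_ne_zero.2 h
  unfold intertwinerCoeff
  field_simp
  ring

theorem add_intertwinerCoeff_mul_intertwinerCoeff (h : x ≠ y) :
    τ + intertwinerCoeff τ x y * intertwinerCoeff τ y x =
      (τ * x + 1 - y) * (τ * y + 1 - x) / -(y - x) ^ 2 := by
  have hyx : y - x ≠ 0 := sub_ne_zero.2 h.symm
  have hxy : x - y ≠ 0 := sub_ne_zero.2 h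
  unfold intertwinerCoeff
  field_simp
  ring

/-- The scalar identity behind the braid relation for intertwiners. -/
theorem intertwinerCoeff_braid (hxy : x ≠ y) (hyz : y ≠ z) (hxz : x ≠ z) :
    intertwinerCoeff τ x y * intertwinerCoeff τ y z +
      intertwinerCoeff τ x z * (τ - 1 - intertwinerCoeff τ x y - intertwinerCoeff τ y z) = 0 := by
  have h₁ : y - x ≠ 0 := sub_ne_zero.2 hxy.symm
  have h₂ : z - y ≠ 0 := sub_ne_zero.2 hyz.symm
  have h₃ : z - x ≠ 0 := sub_ne_zero.2 hxz.symm
  unfold intertwinerCoeff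
  field_simp
  ring

end IntertwinerCoeff

section WeightVectors

variable {K H : Type*} [Field K] [Ring H] [Algebra K H] {t : Kˣ} {n ℓ m : ℕ} {κ : ℕ → ℤ}
  {L T : ℕ → H} {j k : ℕ} {A : ℕ → Node} {v w : H} {x y c : K}

/-- The element `v` is a common eigenvector of `L 0, …, L (m - 1)` under left multiplication, with
eigenvalues the quantum contents of the nodes `A 0, …, A (m - 1)`. -/
def IsWeightVector (t : Kˣ) (κ : ℕ → ℤ) (L : ℕ → H) (A : ℕ → Node) (m : ℕ) (v : H) : Prop :=
  ∀ k < m, L k * v = (qcontent t κ (A k) : K) • v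

theorem IsWeightVector.mono (h : IsWeightVector t κ L A m v) (hj : j ≤ m) :
    IsWeightVector t κ L A j v := fun k hk => h k (hk.trans_le hj)

theorem IsWeightVector.congr {A' : ℕ → Node} (h : IsWeightVector t κ L A m v)
    (e : Set.EqOn A A' (Set.Iio m)) : IsWeightVector t κ L A' m v := fun k hk => by
  rw [← e hk, h k hk]

theorem IsWeightVector.zero : IsWeightVector t κ L A m 0 := fun k _ => by
  rw [mul_zero, smul_zero]

theorem IsWeightVector.add (h : IsWeightVector t κ L A m v) (h' : IsWeightVector t κ L A m w) :
    IsWeightVector t κ L A m (v + w) := fun k hk => by rw [mul_add, h k hk, h' k hk, smul_add]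

theorem IsWeightVector.smul (h : IsWeightVector t κ L A m v) (c : K) :
    IsWeightVector t κ L A m (c • v) := fun k hk => by rw [mul_smul_comm, h k hk, smul_comm]

theorem IsWeightVector.mul_of_commute (h : IsWeightVector t κ L A m v) {φ : H}
    (hφ : ∀ k < m, Commute (L k) φ) : IsWeightVector t κ L A m (φ * v) := fun k hk => by
  rw [← mul_assoc, (hφ k hk).eq, mul_assoc, h k hk, mul_smul_comm]

namespace HeckeRelations

variable (hH : HeckeRelations t n ℓ κ L T)
include hH

theorem commute_L_T (hk : k + 1 < n) (hj : j < k) : Commute (L j) (T k) :=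
  (hH.T_mul_L k j hk (by omega) (by omega) (by omega)).symm

theorem commute_L_aeval (hj : j < n) (hk : k < n) (p : Polynomial K) :
    Commute (L j) (Polynomial.aeval (L k) p) :=
  semiconjBy_aeval (hH.L_mul_L j k hj hk) p

theorem L_mul_T_mul (hk : k + 1 < n) (v : H) :
    L k * (T k * v) = T k * (L (k + 1) * v) - v - ((t : K) - 1) • (L (k + 1) * v) := by
  rw [← mul_assoc, ← mul_assoc, hH.T_mul_L_succ hk, add_mul, add_mul, one_mul, smul_mul_assoc]
  abel

theorem L_succ_mul_T_mul (hk : k + 1 < n) (v : H) :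
    L (k + 1) * (T k * v) = T k * (L k * v) + v + ((t : K) - 1) • (L (k + 1) * v) := by
  rw [← mul_assoc, ← mul_assoc, hH.L_succ_mul_T k hk, add_mul, add_mul, one_mul, smul_mul_assoc]

theorem T_mul_T_mul (hk : k + 1 < n) (v : H) :
    T k * (T k * v) = ((t : K) - 1) • (T k * v) + (t : K) • v := by
  rw [← mul_assoc, hH.T_mul_self k hk, add_mul, smul_mul_assoc, smul_mul_assoc, one_mul]

theorem L_succ_mul_intertwiner (hk : k + 1 < n) (hxy : x ≠ y) (hx : L k * v = x • v)
    (hy : L (k + 1) * v = y • v) :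
    L (k + 1) * (T k * v - intertwinerCoeff (t : K) x y • v) =
      x • (T k * v - intertwinerCoeff (t : K) x y • v) := by
  have hb := congrArg (· • v) (intertwinerCoeff_mul_sub (t : K) hxy)
  rw [mul_sub, hH.L_succ_mul_T_mul hk, hx, mul_smul_comm, mul_smul_comm, hy]
  linear_combination (norm := module) -hb

theorem L_mul_intertwiner (hk : k + 1 < n) (hxy : x ≠ y) (hx : L k * v = x • v)
    (hy : L (k + 1) * v = y • v) :
    L k * (T k * v - intertwinerCoeff (t : K) x y • v) =
      y • (T k * v - intertwinerCoeff (t : K) x y • v) := by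
  have hb := congrArg (· • v) (intertwinerCoeff_mul_sub (t : K) hxy)
  rw [mul_sub, hH.L_mul_T_mul hk, mul_smul_comm, hx, hy, mul_smul_comm]
  linear_combination (norm := module) hb

theorem L_mul_intertwiner_of_ne (hk : k + 1 < n) (hj : j < n) (h₀ : j ≠ k) (h₁ : j ≠ k + 1)
    (hx : L j * v = x • v) : L j * (T k * v - c • v) = x • (T k * v - c • v) := by
  rw [mul_sub, ← mul_assoc, ← hH.T_mul_L k j hk hj h₀ h₁, mul_assoc, hx, mul_smul_comm,
    mul_smul_comm, hx, smul_sub, smul_comm c x]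

theorem intertwiner_intertwiner (hk : k + 1 < n) (hxy : x ≠ y) (v : H) :
    T k * (T k * v - intertwinerCoeff (t : K) x y • v) -
        intertwinerCoeff (t : K) y x • (T k * v - intertwinerCoeff (t : K) x y • v) =
      ((t : K) + intertwinerCoeff (t : K) x y * intertwinerCoeff (t : K) y x) • v := by
  rw [mul_sub, hH.T_mul_T_mul hk, mul_smul_comm, intertwinerCoeff_swap _ hxy]
  module

end HeckeRelations

theorem IsWeightVector.intertwiner (hH : HeckeRelations t n ℓ κ L T)
    (h : IsWeightVector t κ L A m v) (hk : k + 1 < m) (hm : m ≤ n)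
    (hne : qcontent t κ (A k) ≠ (qcontent t κ (A (k + 1)) : K)) :
    IsWeightVector t κ L (A ∘ Equiv.swap k (k + 1)) m
      (T k * v - intertwinerCoeff (t : K) (qcontent t κ (A k)) (qcontent t κ (A (k + 1))) • v) := by
  intro j hj
  rw [Function.comp_apply]
  by_cases h₀ : j = k
  · subst h₀
    rw [Equiv.swap_apply_left]
    exact hH.L_mul_intertwiner (by omega) hne (h _ hj) (h _ hk)
  by_cases h₁ : j = k + 1
  · subst h₁
    rw [Equiv.swap_apply_right]
    exact hH.L_succ_mul_intertwiner (by omega) hne (h _ (by omega)) (h _ hk)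
  · rw [Equiv.swap_apply_of_ne_of_ne h₀ h₁]
    exact hH.L_mul_intertwiner_of_ne (by omega) (by omega) h₀ h₁ (h _ hj)

end WeightVectors

section Spectrum

open Polynomial

variable {K H : Type*} [Field K] [Ring H] [Algebra K H] {t : Kˣ} {n ℓ m : ℕ} {κ : ℕ → ℤ}
  {L T : ℕ → H} {k : ℕ} {A : ℕ → Node} {N : Node} {v w u : H} {a x : K}

theorem SeparatesF.add_intertwinerCoeff_mul_ne_zero (hs : SeparatesF t n ℓ κ) (hA : IsPath ℓ m A)
    (hm : m ≤ n) (hk : k + 1 < m) (hadj : ¬ Adjacent (A k) (A (k + 1))) :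
    (t : K) + intertwinerCoeff (t : K) (qcontent t κ (A k)) (qcontent t κ (A (k + 1))) *
      intertwinerCoeff (t : K) (qcontent t κ (A (k + 1))) (qcontent t κ (A k)) ≠ 0 := by
  have hB := hA k (by omega)
  have hC := (hA.addable_succ_iff hk).2 hadj
  have hcard := ncard_image_Iio_le A k
  have hne := hs.qcontent_ne_succ hA hm hk
  have hBC := hs.qcontent_ne_qint_add hB hC (by omega) (ε := 1) (by simp)
  have hCB := hs.qcontent_ne_qint_add hC hB (by omega) (ε := 1) (by simp)
  rw [qint_add_one' t.ne_zero] at hBC hCB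
  rw [add_intertwinerCoeff_mul_intertwinerCoeff _ hne]
  exact div_ne_zero (mul_ne_zero (sub_ne_zero.2 hCB.symm) (sub_ne_zero.2 hBC.symm))
    (neg_ne_zero.2 (pow_ne_zero _ (sub_ne_zero.2 hne.symm)))

theorem one_add_mul_qcontent_ne_zero (t : Kˣ) (κ : ℕ → ℤ) (B : Node) :
    1 + ((t : K) - 1) * qcontent t κ B ≠ 0 := by
  rw [qcontent, ← zpow_eq_one_add_mul_qint t.ne_zero]
  exact zpow_ne_zero _ t.ne_zero

/-- The statement that `L m` acts on every weight vector attached to a path of length `m` with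
eigenvalues the quantum contents of the nodes by which the path can be extended. -/
def HasAddableSpectrum (t : Kˣ) (ℓ : ℕ) (κ : ℕ → ℤ) (L : ℕ → H) (m : ℕ) : Prop :=
  ∀ ⦃A : ℕ → Node⦄, IsPath ℓ m A → ∀ ⦃v : H⦄, IsWeightVector t κ L A m v →
    IsEigenSum (L m) v (qcontent t κ '' {B | Addable ℓ (A '' Set.Iio m) B})

theorem HasAddableSpectrum.eq_zero_of_mul_eq_smul (h : HasAddableSpectrum t ℓ κ L m)
    (hs : SeparatesF t n ℓ κ) (hm : m + 2 ≤ n) (hA : IsPath ℓ m A)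
    (hv : IsWeightVector t κ L A m v) (hN : Addable ℓ (A '' Set.Iio m) N) {ε : ℤ} (hε : |ε| = 1)
    (hε' : L m * v = qint (t : K) (nodeContent κ N + ε) • v) : v = 0 := by
  by_contra h0
  obtain ⟨B, hB, e⟩ := (h hA hv).mem_of_mul_eq_smul hε' h0
  have hcard := ncard_image_Iio_le A m
  exact hs.qcontent_ne_qint_add hB hN (by omega) hε e

theorem HeckeRelations.eq_zero_of_mul_eq_smul_of_mul_eq_smul (hH : HeckeRelations t n ℓ κ L T)
    (hk : k + 1 < n) {E : Set K} (hE : IsEigenSum (L k) (T k * v) E)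
    (ha : 1 + ((t : K) - 1) * a ≠ 0) (h₀ : L k * v = a • v) (h₁ : L (k + 1) * v = a • v) :
    v = 0 := by
  have hT : L k * (T k * v) = a • (T k * v) + (-(1 + ((t : K) - 1) * a)) • v := by
    rw [hH.L_mul_T_mul hk, h₁, mul_smul_comm]
    module
  exact (smul_eq_zero.1 (hE.eq_zero_of_mul_eq_smul_add hT
    (by rw [mul_smul_comm, h₀, smul_comm]))).resolve_left (neg_ne_zero.2 ha)

theorem HeckeRelations.eq_zero_of_repeated_content (hs : SeparatesF t n ℓ κ)
    (hH : HeckeRelations t n ℓ κ L T) (hk : k + 2 < n) (hspec : HasAddableSpectrum t ℓ κ L k)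
    (hA : IsPath ℓ (k + 2) A) (hv : IsWeightVector t κ L A (k + 2) v)
    (hx : L (k + 2) * v = (qcontent t κ (A k) : K) • v) (hadj : Adjacent (A k) (A (k + 1))) :
    v = 0 := by
  obtain ⟨ε, hε, e⟩ := hadj.exists_nodeContent_eq κ
  have hne := hs.qcontent_ne_succ hA (by omega) (show k + 1 < k + 2 by omega)
  have hAk := hA.mono (show k ≤ k + 2 by omega)
  have hvk := hv k (by omega)
  have hvk1 := hv (k + 1) (by omega)
  have hw : T k * v - intertwinerCoeff (t : K) (qcontent t κ (A k)) (qcontent t κ (A (k + 1))) • v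
      = 0 := by
    refine hspec.eq_zero_of_mul_eq_smul hs (by omega) hAk (fun i hi => ?_)
      (hA k (by omega)) hε ?_
    · exact hH.L_mul_intertwiner_of_ne (by omega) (by omega) (by omega) (by omega)
        (hv i (by omega))
    · rw [← e]
      exact hH.L_mul_intertwiner (by omega) hne hvk hvk1
  have hw' : T (k + 1) * v -
      intertwinerCoeff (t : K) (qcontent t κ (A (k + 1))) (qcontent t κ (A k)) • v = 0 := by
    have hwk (i : ℕ) (hi : i < k + 1) := hH.L_mul_intertwiner_of_ne (k := k + 1) (by omega)
      (by omega) (by omega) (by omega) (hv i (by omega))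
      (c := intertwinerCoeff (t : K) (qcontent t κ (A (k + 1))) (qcontent t κ (A k)))
    refine hH.eq_zero_of_mul_eq_smul_of_mul_eq_smul (show k + 1 < n by omega)
      (hspec hAk ?_) (one_add_mul_qcontent_ne_zero t κ (A k)) (hwk k (by omega))
      (hH.L_mul_intertwiner hk hne.symm hvk1 hx)
    have hweight : IsWeightVector t κ L A k _ := fun i hi => hwk i (by omega)
    exact hweight.mul_of_commute fun i hi => hH.commute_L_T (by omega) hi
  by_contra h0
  obtain ⟨hbb, hb⟩ := hH.eq_of_T_mul_eq_smul hk (sub_eq_zero.1 hw) (sub_eq_zero.1 hw') h0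
  rw [intertwinerCoeff_swap _ hne] at hbb
  have h2 : (t : K) + 1 ≠ 0 := by
    have h := hs.qint_ne_zero (d := 1 + 1) (by norm_num) (by norm_num; omega)
    rwa [qint_add_one' t.ne_zero, qint_one, mul_one] at h
  rcases mul_eq_zero.1 hb with h | h
  · exact h2 (by linear_combination -hbb + 2 * h)
  · exact h2 (by linear_combination hbb - 2 * h)

theorem HeckeRelations.eq_zero_of_repeated_content_of_forall_not_adjacent
    (hs : SeparatesF t n ℓ κ) (hH : HeckeRelations t n ℓ κ L T) (hk : k + 1 < n)
    (hspec : ∀ j < k, HasAddableSpectrum t ℓ κ L j) {j d : ℕ} (hd : j + 1 + d = k)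
    (hA : IsPath ℓ (k + 1) A) (hv : IsWeightVector t κ L A (k + 1) v)
    (hx : L (k + 1) * v = (qcontent t κ (A j) : K) • v) (hadj : Adjacent (A j) (A k))
    (hnadj : ∀ i < k, ¬ Adjacent (A j) (A i)) : v = 0 := by
  induction d generalizing j A v with
  | zero =>
    subst hd
    exact hH.eq_zero_of_repeated_content hs hk (hspec j (by omega)) hA hv hx hadj
  | succ d ih =>
    -- Interchanging `A j` and `A (j + 1)` moves the node `A j` one step closer to `A k`.
    have hj := hnadj (j + 1) (by omega)
    have hne := hs.qcontent_ne_succ hA (by omega) (show j + 1 < k + 1 by omega)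
    have hw := ih (j := j + 1) (by omega) ((hA.isPath_comp_swap_iff (by omega)).2 hj)
      (hv.intertwiner hH (by omega) (by omega) hne)
      (by
        rw [Function.comp_apply, Equiv.swap_apply_right]
        exact hH.L_mul_intertwiner_of_ne (by omega) (by omega) (by omega) (by omega) hx)
      (by
        rw [Function.comp_apply, Equiv.swap_apply_right, Function.comp_apply,
          Equiv.swap_apply_of_ne_of_ne (by omega) (by omega)]
        exact hadj)
      (fun i hi => by
        rw [Function.comp_apply, Equiv.swap_apply_right]
        exact hnadj _ (by rw [Equiv.swap_apply_def]; split_ifs <;> omega))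
    have hsq := hH.intertwiner_intertwiner (k := j) (by omega) hne v
    rw [hw, mul_zero, smul_zero, sub_zero] at hsq
    exact (smul_eq_zero.1 hsq.symm).resolve_left
      (hs.add_intertwinerCoeff_mul_ne_zero hA (by omega) (by omega) hj)

theorem IsPath.addable_or_exists_adjacent (hA : IsPath ℓ (k + 1) A) (hN : Adjacent (A k) N)
    (κ : ℕ → ℤ) : Addable ℓ (A '' Set.Iio (k + 1)) N ∨
      ∃ j < k, nodeContent κ (A j) = nodeContent κ N ∧ Adjacent (A j) (A k) ∧
        ∀ i < k, ¬ Adjacent (A j) (A i) := by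
  have hAk := hA k k.lt_succ_self
  have hlt {i : ℕ} (hi : i < k) : A i ∈ A '' Set.Iio k := ⟨i, hi, rfl⟩
  have hmem {B : Node} (hB : B ∈ A '' Set.Iio k) : B ∈ A '' Set.Iio (k + 1) :=
    Set.image_mono (Set.Iio_subset_Iio k.le_succ) hB
  have hAkmem : A k ∈ A '' Set.Iio (k + 1) := ⟨k, k.lt_succ_self, rfl⟩
  have hNmem : N ∉ A '' Set.Iio (k + 1) := by
    rw [image_Iio_succ]
    rintro (h | h)
    · refine hAk.1 ((hA.mono k.le_succ).isDiagramSet.mem_of_le (r := N.2.1) (c := N.2.2) ?_ ?_ ?_)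
      all_goals rcases hN with rfl | rfl <;> simp_all
    · rcases hN with rfl | rfl <;> simp [Prod.ext_iff] at h
  rw [hA.isDiagramSet.addable_iff, or_iff_not_imp_left]
  generalize hB : A k = B at hAk hN hAkmem
  obtain ⟨l, r, c⟩ := B
  intro hnot
  rcases hN with rfl | rfl
  · obtain ⟨r', rfl, hmiss⟩ : ∃ r', r = r' + 1 ∧ (l, r', c + 1) ∉ A '' Set.Iio (k + 1) := by
      by_contra! hall
      exact hnot ⟨hNmem, hAk.fst_lt, fun c' hc' => by simpa [← Nat.succ.inj hc'] using hAkmem,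
        hall⟩
    obtain ⟨j, hj, ej⟩ := hAk.mem_of_le (r' := r') (c' := c) r'.le_succ le_rfl (by simp)
    refine ⟨j, hj, by rw [ej]; grind [nodeContent], Or.inr (by rw [ej]), ?_⟩
    rintro i hi (h | h) <;> rw [ej] at h
    · exact hmiss (h ▸ hmem (hlt hi))
    · exact hAk.1 (h ▸ hlt hi)
  · obtain ⟨c', rfl, hmiss⟩ : ∃ c', c = c' + 1 ∧ (l, r + 1, c') ∉ A '' Set.Iio (k + 1) := by
      by_contra! hall
      exact hnot ⟨hNmem, hAk.fst_lt, hall, fun r' hr' => by simpa [← Nat.succ.inj hr'] using hAkmem⟩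
    obtain ⟨j, hj, ej⟩ := hAk.mem_of_le (r' := r) (c' := c') le_rfl c'.le_succ (by simp)
    refine ⟨j, hj, by rw [ej]; grind [nodeContent], Or.inl (by rw [ej]), ?_⟩
    rintro i hi (h | h) <;> rw [ej] at h
    · exact hAk.1 (h ▸ hlt hi)
    · exact hmiss (h ▸ hmem (hlt hi))

/-- The contents `[c ± 1]_t` of the neighbours of `A k`, together with the contents of the nodes
that could be added instead of `A k`. -/
def coarseSpectrum {K : Type*} [Field K] (t : Kˣ) (ℓ : ℕ) (κ : ℕ → ℤ) (A : ℕ → Node) (k : ℕ) :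
    Set K :=
  qcontent t κ '' ({N | Adjacent (A k) N} ∪ {B | Addable ℓ (A '' Set.Iio k) B})

theorem HeckeRelations.mem_addable_of_mem_coarseSpectrum (hs : SeparatesF t n ℓ κ)
    (hH : HeckeRelations t n ℓ κ L T) (hk : k + 1 < n)
    (hspec : ∀ j ≤ k, HasAddableSpectrum t ℓ κ L j) (hA : IsPath ℓ (k + 1) A)
    (hu : IsWeightVector t κ L A (k + 1) u) (hx : L (k + 1) * u = x • u) (h0 : u ≠ 0)
    (hmem : x ∈ coarseSpectrum t ℓ κ A k) :
    x ∈ qcontent t κ '' {B | Addable ℓ (A '' Set.Iio (k + 1)) B} := by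
  obtain ⟨B, hB | hB, rfl⟩ := hmem
  · refine ⟨B, (hA.addable_or_exists_adjacent hB κ).resolve_right ?_, rfl⟩
    rintro ⟨j, hj, hcont, hadj, hnadj⟩
    refine h0 (hH.eq_zero_of_repeated_content_of_forall_not_adjacent hs hk
      (fun i hi => hspec i hi.le) (Nat.add_sub_of_le hj) hA hu ?_ hadj hnadj)
    rw [qcontent, hcont, hx, qcontent]
  · refine ⟨B, ?_, rfl⟩
    rw [Set.mem_ofPred_eq, image_Iio_succ]
    refine hB.union_singleton (hA k k.lt_succ_self) ?_
    rintro rfl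
    refine h0 (hH.eq_zero_of_mul_eq_smul_of_mul_eq_smul hk (hspec k le_rfl
      (hA.mono k.le_succ) ?_) (one_add_mul_qcontent_ne_zero t κ _) (hu k k.lt_succ_self) hx)
    exact (hu.mono k.le_succ).mul_of_commute fun i hi => hH.commute_L_T hk hi

theorem HeckeRelations.semiconjBy_intertwiner (hH : HeckeRelations t n ℓ κ L T) (hk : k + 1 < n) :
    SemiconjBy (T k * (L k - L (k + 1)) + 1 + ((t : K) - 1) • L (k + 1)) (L (k + 1)) (L k) := by
  have hcomm := hH.L_mul_L k (k + 1) (by omega) hk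
  have hL : L k * T k = T k * L (k + 1) - 1 - ((t : K) - 1) • L (k + 1) := by
    rw [hH.T_mul_L_succ hk]
    abel
  rw [SemiconjBy, mul_add, mul_add, ← mul_assoc, hL]
  simp only [mul_sub, sub_mul, add_mul, mul_smul_comm, smul_mul_assoc, mul_one, one_mul, mul_assoc,
    hcomm]
  module

theorem HeckeRelations.quadratic_of_intertwiner_mul_eq_zero (hH : HeckeRelations t n ℓ κ L T)
    (hk : k + 1 < n) (ha : L k * u = a • u)
    (hz : (T k * (L k - L (k + 1)) + 1 + ((t : K) - 1) • L (k + 1)) * u = 0) :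
    (t : K) • (L (k + 1) * (L (k + 1) * u)) =
      (t * (2 * a) + (1 + (t - 1) * a) * (t - 1) : K) • (L (k + 1) * u) +
        (1 + (t - 1) * a - t * a ^ 2 : K) • u := by
  have hT : T k * (a • u - L (k + 1) * u) = -(u + ((t : K) - 1) • (L (k + 1) * u)) := by
    rw [add_mul, add_mul, mul_assoc, sub_mul, ha, one_mul, smul_mul_assoc] at hz
    linear_combination (norm := module) hz
  have hTL := hH.L_mul_T_mul hk u
  have hLT := hH.L_succ_mul_T_mul hk u
  rw [ha, mul_smul_comm] at hLT
  have hLTu : L k * (T k * u) = a • (T k * u) := by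
    rw [mul_sub, mul_smul_comm] at hT
    linear_combination (norm := module) hTL - hT
  have hTT := hH.T_mul_T_mul hk (a • u - L (k + 1) * u)
  rw [hT, mul_neg, mul_add, mul_smul_comm] at hTT
  have hTu : (1 + (t - 1) * a : K) • (T k * u) =
      (t : K) • (L (k + 1) * u) - (t * a : K) • u := by
    linear_combination (norm := module) -hTT - ((t : K) - 1) • (hLTu - hTL)
  have h := congrArg (L (k + 1) * ·) hTu
  simp only [mul_sub, mul_smul_comm, hLT] at h
  linear_combination (norm := module) -h + a • hTu

theorem HeckeRelations.aeval_quadratic_mul_eq_zero (hH : HeckeRelations t n ℓ κ L T)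
    (hk : k + 1 < n) (ha : L k * u = a • u)
    (hz : (T k * (L k - L (k + 1)) + 1 + ((t : K) - 1) • L (k + 1)) * u = 0) {x y : K}
    (hx : x = t * a + 1) (hy : a = t * y + 1) :
    aeval (L (k + 1)) ((X - C x) * (X - C y)) * u = 0 := by
  have hquad := hH.quadratic_of_intertwiner_mul_eq_zero hk ha hz
  refine (smul_eq_zero.1 (?_ : (t : K) • _ = (0 : H))).resolve_left t.ne_zero
  rw [map_mul, mul_assoc, aeval_X_sub_C_mul, aeval_X_sub_C_mul, mul_sub, mul_smul_comm, smul_sub,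
    smul_sub, hquad]
  subst hx hy
  module

theorem SeparatesF.qcontent_ne_of_adjacent (hs : SeparatesF t n ℓ κ) {S : Set Node} {B C : Node}
    (hB : Addable ℓ S B) (hC : Addable ℓ S C) (hn : S.ncard + 2 ≤ n) (hN : Adjacent C N) :
    qcontent t κ B ≠ (qcontent t κ N : K) := by
  obtain ⟨ε, hε, e⟩ := hN.exists_nodeContent_eq κ
  rw [qcontent.eq_def _ _ N, e]
  exact hs.qcontent_ne_qint_add hB hC hn hε

theorem SeparatesF.qcontent_right_ne_below (hs : SeparatesF t n ℓ κ) (hn : 2 ≤ n) (l r c : ℕ) :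
    qcontent t κ (l, r, c + 1) ≠ (qcontent t κ (l, r + 1, c) : K) := by
  rw [qcontent, qcontent, Ne, qint_eq_qint_iff t.ne_zero]
  have h2 : nodeContent κ (l, r, c + 1) - nodeContent κ (l, r + 1, c) = 2 := by
    simp only [nodeContent]
    push_cast
    ring
  rw [h2]
  exact hs.qint_ne_zero two_ne_zero (by simpa using hn)

theorem HeckeRelations.isEigenSum_coarseSpectrum (hs : SeparatesF t n ℓ κ)
    (hH : HeckeRelations t n ℓ κ L T) (hk : k + 1 < n) (hspec : HasAddableSpectrum t ℓ κ L k)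
    (hA : IsPath ℓ (k + 1) A) (hv : IsWeightVector t κ L A (k + 1) v) :
    IsEigenSum (L (k + 1)) v (coarseSpectrum t ℓ κ A k) := by
  have hcomm (j : ℕ) (hj : j < k) :
      Commute (L j) (T k * (L k - L (k + 1)) + 1 + ((t : K) - 1) • L (k + 1)) := by
    have hL (i : ℕ) (hi : i < n) : Commute (L j) (L i) := hH.L_mul_L j i (by omega) hi
    exact (((hH.commute_L_T hk hj).mul_right ((hL k (by omega)).sub_right (hL _ hk))).add_right
      (Commute.one_right _)).add_right ((hL _ hk).smul_right _)
  obtain ⟨s, hs₁, hs₂⟩ := hspec (hA.mono k.le_succ) ((hv.mono k.le_succ).mul_of_commute hcomm)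
  rw [← mul_assoc, ← (semiconjBy_aeval (hH.semiconjBy_intertwiner hk) _).eq, mul_assoc] at hs₂
  set u := aeval (L (k + 1)) (∏ x ∈ s, (X - C x)) * v
  have hLu : L k * u = (qcontent t κ (A k) : K) • u :=
    hv.mul_of_commute (fun j hj => hH.commute_L_aeval (by omega) hk _) k k.lt_succ_self
  have hnot {N : Node} (hN : Adjacent (A k) N) : (qcontent t κ N : K) ∉ s := fun h => by
    obtain ⟨B, hB, e⟩ := hs₁ h
    have hcard := ncard_image_Iio_le A k
    exact hs.qcontent_ne_of_adjacent hB (hA k k.lt_succ_self) (by omega) hN e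
  have hright : Adjacent (A k) ((A k).1, (A k).2.1, (A k).2.2 + 1) := Or.inl rfl
  have hbelow : Adjacent (A k) ((A k).1, (A k).2.1 + 1, (A k).2.2) := Or.inr rfl
  refine ⟨insert (qcontent t κ ((A k).1, (A k).2.1, (A k).2.2 + 1))
    (insert (qcontent t κ ((A k).1, (A k).2.1 + 1, (A k).2.2)) s), ?_, ?_⟩
  · rw [Finset.coe_insert, Finset.coe_insert, Set.insert_subset_iff, Set.insert_subset_iff]
    exact ⟨⟨_, Or.inl hright, rfl⟩, ⟨_, Or.inl hbelow, rfl⟩,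
      hs₁.trans (Set.image_mono Set.subset_union_right)⟩
  · rw [Finset.prod_insert (by simp [hs.qcontent_right_ne_below (by omega), hnot hright]),
      Finset.prod_insert (hnot hbelow), ← mul_assoc, map_mul, mul_assoc]
    exact hH.aeval_quadratic_mul_eq_zero hk hLu hs₂ (qcontent_right t κ _ _ _)
      (qcontent_eq_below t κ _ _ _)

theorem HeckeRelations.hasAddableSpectrum_zero (hs : SeparatesF t n ℓ κ)
    (hH : HeckeRelations t n ℓ κ L T) (hn : 0 < n) : HasAddableSpectrum t ℓ κ L 0 := by
  intro A _ v _
  have hadd (l : ℕ) (hl : l < ℓ) : Addable ℓ (A '' Set.Iio 0) (l, 0, 0) := by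
    have hempty : IsDiagramSet ℓ ∅ := by simp [IsDiagramSet]
    have hzero : A '' Set.Iio 0 = ∅ := by simp
    rw [hzero, hempty.addable_iff]
    simpa using hl
  have hinj : Set.InjOn (fun l => (qcontent t κ (l, 0, 0) : K)) (Finset.range ℓ) :=
    fun i hi j hj e => congrArg Prod.fst (hs.eq_of_qcontent_eq (hadd i (Finset.mem_range.1 hi))
      (hadd j (Finset.mem_range.1 hj)) (by simpa using hn) e)
  refine ⟨(Finset.range ℓ).image fun l => qcontent t κ (l, 0, 0), ?_, ?_⟩
  · rintro _ hx
    obtain ⟨l, hl, rfl⟩ := Finset.mem_image.1 (Finset.mem_coe.1 hx)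
    exact ⟨_, hadd l (Finset.mem_range.1 hl), rfl⟩
  · rw [Finset.prod_image hinj]
    have hcyc := hH.cyclotomic hn
    simp only [qcontent, nodeContent, Nat.cast_zero, add_zero, sub_zero]
    rw [hcyc, zero_mul]

theorem HeckeRelations.hasAddableSpectrum (hs : SeparatesF t n ℓ κ)
    (hH : HeckeRelations t n ℓ κ L T) (hm : m < n) : HasAddableSpectrum t ℓ κ L m := by
  induction m using Nat.strong_induction_on with
  | _ m ih =>
    rcases m with - | k
    · exact hH.hasAddableSpectrum_zero hs hm
    · have hspec (j : ℕ) (hj : j ≤ k) : HasAddableSpectrum t ℓ κ L j :=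
        ih j (Nat.lt_succ_of_le hj) (by omega)
      exact fun A hA v hv => (hH.isEigenSum_coarseSpectrum hs hm (hspec k le_rfl) hA
        hv).of_forall_eigenvector fun p x hx hp h0 =>
          hH.mem_addable_of_mem_coarseSpectrum hs hm hspec hA
            (hv.mul_of_commute fun j hj => hH.commute_L_aeval (by omega) hm p) hp h0 hx

theorem HeckeRelations.mem_span_isWeightVector (hs : SeparatesF t n ℓ κ)
    (hH : HeckeRelations t n ℓ κ L T) (hm : m ≤ n) (v : H) :
    v ∈ Submodule.span K {w : H | ∃ A, IsPath ℓ m A ∧ IsWeightVector t κ L A m w} := by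
  induction m with
  | zero => exact Submodule.subset_span ⟨fun _ => (0, 0, 0), by simp [IsPath],
      by simp [IsWeightVector]⟩
  | succ m ih =>
    refine Submodule.span_le.2 ?_ (ih (by omega))
    rintro w ⟨A, hA, hw⟩
    obtain ⟨s, hs₁, hs₂⟩ := hH.hasAddableSpectrum hs hm hA hw
    obtain ⟨p, hsum, hp⟩ := exists_eq_sum_aeval_mul hs₂
    rw [hsum]
    refine Submodule.sum_mem _ fun x hx => Submodule.subset_span ?_
    obtain ⟨B, hB, rfl⟩ := hs₁ hx
    have heq : Set.EqOn A (Function.update A m B) (Set.Iio m) := fun j hj =>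
      (Function.update_of_ne (Set.mem_Iio.1 hj).ne _ _).symm
    have hpath := hA.congr heq
    have hweight := (hw.mul_of_commute fun j hj =>
      hH.commute_L_aeval (by omega) hm (p (qcontent t κ B))).congr heq
    refine ⟨Function.update A m B, fun k hk => ?_, fun k hk => ?_⟩
    · rcases (Nat.lt_succ_iff_lt_or_eq.1 hk) with hk | rfl
      · exact hpath k hk
      · rwa [Function.update_self, ← heq.image_eq]
    · rcases (Nat.lt_succ_iff_lt_or_eq.1 hk) with hk | rfl
      · exact hweight k hk
      · rw [Function.update_self]
        exact hp _ hx

theorem HeckeRelations.exists_eq_sum_isWeightVector (hs : SeparatesF t n ℓ κ)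
    (hH : HeckeRelations t n ℓ κ L T) (v : H) :
    ∃ F : StdTableau ℓ n → H, (∀ S, IsWeightVector t κ L S.path n (F S)) ∧ v = ∑ S, F S := by
  induction hH.mem_span_isWeightVector hs le_rfl v using Submodule.span_induction with
  | mem w hw =>
    obtain ⟨A, hA, hw⟩ := hw
    obtain ⟨S, hS⟩ := hA.exists_path_eqOn
    refine ⟨Pi.single S w, fun U => ?_, by simp⟩
    rcases eq_or_ne U S with rfl | hU
    · rw [Pi.single_eq_same]
      exact hw.congr hS.symm
    · rw [Pi.single_eq_of_ne hU]
      exact IsWeightVector.zero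
  | zero => exact ⟨0, fun S => IsWeightVector.zero, by simp⟩
  | add x y _ _ hx hy =>
    obtain ⟨F, hF, rfl⟩ := hx
    obtain ⟨G, hG, rfl⟩ := hy
    exact ⟨F + G, fun S => (hF S).add (hG S), by simp [Finset.sum_add_distrib]⟩
  | smul c x _ hx =>
    obtain ⟨F, hF, rfl⟩ := hx
    exact ⟨c • F, fun S => (hF S).smul c, by simp [Finset.smul_sum]⟩

end Spectrum

section Coherence

variable {ℓ n : ℕ} {M : Type*} [Monoid M] {T : StdTableau ℓ n} {j k : ℕ}

theorem nodeBelow.trans {A B C : Node} (h : nodeBelow A B) (h' : nodeBelow B C) :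
    nodeBelow A C :=
  nodeBelow_iff_nodeKey_lt.2
    ((nodeBelow_iff_nodeKey_lt.1 h).trans (nodeBelow_iff_nodeKey_lt.1 h'))

theorem StdTableau.IsDescent.swap_of_far (hk : T.IsDescent k)
    (hjk : j + 1 < k ∨ k + 1 < j) : (T.swap j).IsDescent k := by
  have hlt := hk.1
  refine ⟨hlt, ?_⟩
  rw [T.path_swap_of_ne hlt (by omega) (by omega), T.path_swap_of_ne (by omega) (by omega)
    (by omega)]
  exact hk.2

theorem StdTableau.IsDescent.swap_succ (hj : T.IsDescent j) (hj' : T.IsDescent (j + 1)) :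
    (T.swap j).IsDescent (j + 1) := by
  have hlt := hj'.1
  refine ⟨hlt, ?_⟩
  rw [hj.swappable.path_swap_right, T.path_swap_of_ne hlt (by omega) (by omega)]
  exact nodeBelow.trans hj'.2 hj.2

theorem StdTableau.IsDescent.succ_swap (hj : T.IsDescent j) (hj' : T.IsDescent (j + 1)) :
    (T.swap (j + 1)).IsDescent j := by
  have hlt := hj'.1
  refine ⟨hj.1, ?_⟩
  rw [hj'.swappable.path_swap_left, T.path_swap_of_ne (by omega) (by omega) (by omega)]
  exact nodeBelow.trans hj'.2 hj.2

theorem StdTableau.IsDescent.swap_succ_swap (hj : T.IsDescent j) (hj' : T.IsDescent (j + 1)) :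
    ((T.swap j).swap (j + 1)).IsDescent j := by
  have hlt := hj'.1
  refine ⟨hj.1, ?_⟩
  rw [(hj.swap_succ hj').swappable.path_swap_left,
    (T.swap j).path_swap_of_ne (by omega) (by omega) (by omega), hj.swappable.path_swap_left,
    T.path_swap_of_ne hlt (by omega) (by omega)]
  exact hj'.2

theorem StdTableau.IsDescent.succ_swap_succ (hj : T.IsDescent j) (hj' : T.IsDescent (j + 1)) :
    ((T.swap (j + 1)).swap j).IsDescent (j + 1) := by
  have hlt := hj'.1
  refine ⟨hlt, ?_⟩
  rw [(hj.succ_swap hj').swappable.path_swap_right,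
    (T.swap (j + 1)).path_swap_of_ne hlt (by omega) (by omega), hj'.swappable.path_swap_right,
    T.path_swap_of_ne (by omega) (by omega) (by omega)]
  exact hj.2

/-- The elements `φ j T`, thought of as carrying a value at `T.swap j` to a value at `T` whenever
`j` is a descent of `T`, satisfy the commutation and braid relations of adjacent transpositions. -/
structure IsCoherent (φ : ℕ → StdTableau ℓ n → M) : Prop where
  far : ∀ {T j k}, T.IsDescent j → T.IsDescent k → j + 1 < k →
    φ j T * φ k (T.swap j) = φ k T * φ j (T.swap k)
  braid : ∀ {T j}, T.IsDescent j → T.IsDescent (j + 1) →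
    φ j T * φ (j + 1) (T.swap j) * φ j ((T.swap j).swap (j + 1)) =
      φ (j + 1) T * φ j (T.swap (j + 1)) * φ (j + 1) ((T.swap (j + 1)).swap j)

theorem IsCoherent.smul {K H : Type*} [Field K] [Ring H] [Algebra K H]
    {c : ℕ → StdTableau ℓ n → K} {φ : ℕ → StdTableau ℓ n → H} (hc : IsCoherent c)
    (hφ : IsCoherent φ) : IsCoherent fun k T => c k T • φ k T where
  far hj hk hjk := by
    simp only [smul_mul_smul_comm, hc.far hj hk hjk, hφ.far hj hk hjk]
  braid hj hj' := by
    simp only [smul_mul_smul_comm, hc.braid hj hj', hφ.braid hj hj']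

/-- The values `x I` at the initial tableaux, carried along `φ` to all tableaux by removing some
chosen descent at each step. -/
noncomputable def transport (φ : ℕ → StdTableau ℓ n → M) (x : StdTableau ℓ n → M) :
    StdTableau ℓ n → M :=
  StdTableau.wellFounded_swap_isDescent.fix fun T e =>
    if h : ∃ k, T.IsDescent k then φ h.choose T * e _ ⟨h.choose, h.choose_spec, rfl⟩ else x T

theorem transport_of_isInitial (φ : ℕ → StdTableau ℓ n → M) (x : StdTableau ℓ n → M)
    (hT : T.IsInitial) : transport φ x T = x T := by
  rw [transport, WellFounded.fix_eq, dif_neg (not_exists.2 hT)]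

theorem exists_transport_eq (φ : ℕ → StdTableau ℓ n → M) (x : StdTableau ℓ n → M)
    (hk : T.IsDescent k) :
    ∃ j, T.IsDescent j ∧ transport φ x T = φ j T * transport φ x (T.swap j) := by
  have h : ∃ k, T.IsDescent k := ⟨k, hk⟩
  refine ⟨h.choose, h.choose_spec, ?_⟩
  rw [transport, WellFounded.fix_eq, dif_pos h]

-- Newman's diamond argument: two descents are joined by a commutation square or a braid hexagon.
theorem IsCoherent.transport_eq {φ : ℕ → StdTableau ℓ n → M} (hφ : IsCoherent φ)
    (x : StdTableau ℓ n → M) (hk : T.IsDescent k) :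
    transport φ x T = φ k T * transport φ x (T.swap k) := by
  suffices h : (∀ k, T.IsDescent k → transport φ x T = φ k T * transport φ x (T.swap k)) ∧
      ∀ j k, T.IsDescent j → (T.swap j).IsDescent k → transport φ x (T.swap j) =
        φ k (T.swap j) * transport φ x ((T.swap j).swap k) from h.1 k hk
  clear hk
  induction T using StdTableau.induction_isDescent with
  | h T ih =>
    have hfar {j k : ℕ} (hj : T.IsDescent j) (hk : T.IsDescent k) (hjk : j + 1 < k) :
        φ j T * transport φ x (T.swap j) = φ k T * transport φ x (T.swap k) := by
      rw [(ih j hj).1 k (hk.swap_of_far (Or.inl hjk)), (ih k hk).1 j (hj.swap_of_far (Or.inr hjk)),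
        hj.swappable.swap_comm hk.swappable (Or.inl hjk), ← mul_assoc, ← mul_assoc,
        hφ.far hj hk hjk]
    have hbraid {j : ℕ} (hj : T.IsDescent j) (hj' : T.IsDescent (j + 1)) :
        φ j T * transport φ x (T.swap j) = φ (j + 1) T * transport φ x (T.swap (j + 1)) := by
      have h₂ := hj.swap_succ hj'
      have h₃ := hj.swap_succ_swap hj'
      have h₂' := hj.succ_swap hj'
      have h₃' := hj.succ_swap_succ hj'
      rw [(ih j hj).1 _ h₂, (ih j hj).2 _ _ h₂ h₃, (ih _ hj').1 _ h₂', (ih _ hj').2 _ _ h₂' h₃',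
        hj.swappable.swap_braid h₂.swappable h₃.swappable hj'.swappable h₂'.swappable
          h₃'.swappable]
      simp only [← mul_assoc, hφ.braid hj hj']
    refine ⟨fun k hk => ?_, fun j k hj => (ih j hj).1 k⟩
    obtain ⟨j, hj, heq⟩ := exists_transport_eq φ x hk
    rw [heq]
    rcases lt_trichotomy j k with h | rfl | h
    · rcases (Nat.succ_le_of_lt h).lt_or_eq with h | rfl
      · exact hfar hj hk h
      · exact hbraid hj hk
    · rfl
    · rcases (Nat.succ_le_of_lt h).lt_or_eq with h | rfl
      · exact (hfar hk hj h).symm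
      · exact (hbraid hk hj).symm

end Coherence

section DiagonalCoefficients

variable {K : Type*} [Field K] {t : Kˣ} {n ℓ : ℕ} {κ : ℕ → ℤ} {T : StdTableau ℓ n} {j k : ℕ}

/-- The coefficient `-1 / [ρ_{k+1}(T)]_t` with which `T_{k+1}` acts diagonally in seminormal form,
see `neg_inv_qint_rhoTab`. -/
noncomputable def diagCoeff (t : Kˣ) (κ : ℕ → ℤ) (k : ℕ) (T : StdTableau ℓ n) : K :=
  intertwinerCoeff (t : K) (qcontent t κ (T.path k)) (qcontent t κ (T.path (k + 1)))

theorem diagCoeff_mul_sub (hs : SeparatesF t n ℓ κ) (T : StdTableau ℓ n) (hk : k + 1 < n) :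
    diagCoeff t κ k T * ((qcontent t κ (T.path (k + 1)) : K) - qcontent t κ (T.path k)) =
      1 + ((t : K) - 1) * qcontent t κ (T.path (k + 1)) :=
  intertwinerCoeff_mul_sub _ (hs.qcontent_path_ne_succ T hk)

theorem StdTableau.Swappable.diagCoeff_swap (h : T.Swappable k) (hs : SeparatesF t n ℓ κ) :
    diagCoeff t κ k (T.swap k) = (t : K) - 1 - diagCoeff t κ k T := by
  rw [diagCoeff, h.path_swap_left, h.path_swap_right,
    intertwinerCoeff_swap _ (hs.qcontent_path_ne_succ T h.1), diagCoeff]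

theorem StdTableau.Swappable.add_diagCoeff_mul_ne_zero (h : T.Swappable k)
    (hs : SeparatesF t n ℓ κ) :
    (t : K) + diagCoeff t κ k T * diagCoeff t κ k (T.swap k) ≠ 0 := by
  rw [diagCoeff, diagCoeff, h.path_swap_left, h.path_swap_right]
  exact hs.add_intertwinerCoeff_mul_ne_zero T.isPath_path le_rfl h.1 h.2

theorem diagCoeff_mul_self_of_not_swappable (hs : SeparatesF t n ℓ κ) (hk : k + 1 < n)
    (h : ¬ T.Swappable k) :
    diagCoeff t κ k T * diagCoeff t κ k T = ((t : K) - 1) * diagCoeff t κ k T + t := by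
  have hsub := diagCoeff_mul_sub hs T hk
  have hne := sub_ne_zero.2 (hs.qcontent_path_ne_succ T hk).symm
  have hadj : Adjacent (T.path k) (T.path (k + 1)) := by_contra fun h' => h ⟨hk, h'⟩
  rcases hadj with hright | hbelow
  · have hxy := qcontent_right t κ (T.path k).1 (T.path k).2.1 (T.path k).2.2
    rw [← hright] at hxy
    have hb : diagCoeff t κ k T = t :=
      mul_right_cancel₀ hne (by linear_combination hsub - hxy)
    rw [hb]
    ring
  · have hxy := qcontent_eq_below t κ (T.path k).1 (T.path k).2.1 (T.path k).2.2
    rw [← hbelow] at hxy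
    have hb : diagCoeff t κ k T = -1 :=
      mul_right_cancel₀ hne (by linear_combination hsub - hxy)
    rw [hb]
    ring

theorem diagCoeff_swap_of_far (T : StdTableau ℓ n) (hk : k + 1 < n)
    (hjk : j + 1 < k ∨ k + 1 < j) : diagCoeff t κ k (T.swap j) = diagCoeff t κ k T := by
  rw [diagCoeff, T.path_swap_of_ne (by omega) (by omega) (by omega),
    T.path_swap_of_ne hk (by omega) (by omega), diagCoeff]

theorem StdTableau.Swappable.diagCoeff_succ (h : T.Swappable j) (hj : j + 2 < n) :
    diagCoeff t κ (j + 1) (T.swap j) =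
      intertwinerCoeff (t : K) (qcontent t κ (T.path j)) (qcontent t κ (T.path (j + 2))) := by
  rw [diagCoeff, h.path_swap_right, T.path_swap_of_ne hj (by omega) (by omega)]

theorem StdTableau.Swappable.diagCoeff_pred (h : T.Swappable (j + 1)) :
    diagCoeff t κ j (T.swap (j + 1)) =
      intertwinerCoeff (t : K) (qcontent t κ (T.path j)) (qcontent t κ (T.path (j + 2))) := by
  have hj := h.1
  rw [diagCoeff, h.path_swap_left, T.path_swap_of_ne (by omega) (by omega) (by omega)]

theorem StdTableau.Swappable.diagCoeff_swap_succ (h : T.Swappable j)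
    (h' : (T.swap j).Swappable (j + 1)) :
    diagCoeff t κ j ((T.swap j).swap (j + 1)) = diagCoeff t κ (j + 1) T := by
  have hj := h'.1
  rw [h'.diagCoeff_pred, h.path_swap_left, T.path_swap_of_ne hj (by omega) (by omega), diagCoeff]

theorem StdTableau.Swappable.diagCoeff_succ_swap (h : T.Swappable (j + 1))
    (h' : (T.swap (j + 1)).Swappable j) :
    diagCoeff t κ (j + 1) ((T.swap (j + 1)).swap j) = diagCoeff t κ j T := by
  have hj := h.1
  rw [h'.diagCoeff_succ hj, h.path_swap_right, T.path_swap_of_ne (by omega) (by omega) (by omega),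
    diagCoeff]

theorem diagCoeff_braid (hs : SeparatesF t n ℓ κ) (T : StdTableau ℓ n) (hk : k + 2 < n) :
    diagCoeff t κ k T * diagCoeff t κ (k + 1) T +
      intertwinerCoeff (t : K) (qcontent t κ (T.path k)) (qcontent t κ (T.path (k + 2))) *
        ((t : K) - 1 - diagCoeff t κ k T - diagCoeff t κ (k + 1) T) = 0 :=
  intertwinerCoeff_braid _ (hs.qcontent_path_ne_succ T (by omega))
    (hs.qcontent_path_ne_succ T hk) (hs.qcontent_path_ne_add_two T hk)

end DiagonalCoefficients

section SeminormalCoefficients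

variable {K : Type*} [Field K] {t : Kˣ} {n ℓ : ℕ} {κ : ℕ → ℤ} {α : ℕ → StdTableau ℓ n → K}
  {T : StdTableau ℓ n} {j k : ℕ}

/-- Seminormal coefficient systems, with `α k T` standing for `α_{k+1}(T)`. As `α k T` vanishes
when `T` is not swappable at `k`, the junk value of `T.swap k` never matters. The right-hand side
of `mul_swap` is the quotient of quantum integers in the usual definition, rewritten in terms of
the diagonal coefficients. -/
structure IsSeminormalCoeff (t : Kˣ) (κ : ℕ → ℤ) (α : ℕ → StdTableau ℓ n → K) : Prop where
  eq_zero : ∀ k T, k + 1 < n → ¬ T.Swappable k → α k T = 0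
  mul_swap : ∀ k T, T.Swappable k →
    α k T * α k (T.swap k) = (t : K) + diagCoeff t κ k T * diagCoeff t κ k (T.swap k)
  far : ∀ j k T, j + 1 < k → k + 1 < n → α j T * α k (T.swap j) = α k T * α j (T.swap k)
  braid : ∀ k T, k + 2 < n →
    α k T * α (k + 1) (T.swap k) * α k ((T.swap k).swap (k + 1)) =
      α (k + 1) T * α k (T.swap (k + 1)) * α (k + 1) ((T.swap (k + 1)).swap k)

namespace IsSeminormalCoeff

theorem ne_zero (hα : IsSeminormalCoeff t κ α) (hs : SeparatesF t n ℓ κ) (h : T.Swappable k) :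
    α k T ≠ 0 :=
  left_ne_zero_of_mul ((hα.mul_swap k T h).trans_ne (h.add_diagCoeff_mul_ne_zero hs))

theorem isCoherent (hα : IsSeminormalCoeff t κ α) : IsCoherent α where
  far _ hk hjk := hα.far _ _ _ hjk hk.1
  braid _ hj' := hα.braid _ _ hj'.1

theorem isCoherent_inv_swap (hα : IsSeminormalCoeff t κ α) :
    IsCoherent fun k T => (α k (T.swap k))⁻¹ where
  far {T j k} hj hk hjk := by
    have hcomm := hj.swappable.swap_comm hk.swappable (Or.inl hjk)
    have hj' := (hj.swap_of_far (Or.inr hjk)).swappable.swap_swap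
    have hk' := (hk.swap_of_far (Or.inl hjk)).swappable.swap_swap
    have hfar := hα.far j k ((T.swap j).swap k) hjk hk.1
    rw [hk', hcomm, hj'] at hfar
    rw [hcomm, ← mul_inv, ← mul_inv, mul_comm, ← hfar, mul_comm]
  braid {T j} hj hj' := by
    have h₂ := (hj.swap_succ hj').swappable
    have h₃ := (hj.swap_succ_swap hj').swappable
    have h₂' := (hj.succ_swap hj').swappable
    have h₃' := (hj.succ_swap_succ hj').swappable
    have hW := hj.swappable.swap_braid h₂ h₃ hj'.swappable h₂' h₃'
    have hbraid := hα.braid j (((T.swap j).swap (j + 1)).swap j) hj'.1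
    rw [h₃.swap_swap, h₂.swap_swap, hW, h₃'.swap_swap, h₂'.swap_swap] at hbraid
    simp only [← mul_inv]
    rw [hW]
    exact congrArg _ (by linear_combination hbraid)

theorem exists_gamma (hα : IsSeminormalCoeff t κ α) (hs : SeparatesF t n ℓ κ)
    (g : StdTableau ℓ n → Kˣ) :
    ∃ γ : StdTableau ℓ n → Kˣ, (∀ T, T.IsInitial → γ T = g T) ∧
      ∀ T k, (γ (T.swap k) : K) * α k T = γ T * α k (T.swap k) := by
  set e : StdTableau ℓ n → K :=
    transport (fun k T => (α k (T.swap k))⁻¹ • α k T) (fun T => (g T : K)) with he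
  have hstep (T : StdTableau ℓ n) {k : ℕ} (hk : T.IsDescent k) :
      e T * α k (T.swap k) = e (T.swap k) * α k T := by
    have hne := hα.ne_zero hs hk.swappable.swappable_swap
    rw [he, (hα.isCoherent_inv_swap.smul hα.isCoherent).transport_eq _ hk, smul_eq_mul]
    field_simp
  have he0 (T : StdTableau ℓ n) : e T ≠ 0 := by
    induction T using StdTableau.induction_isDescent with
    | h T ih =>
      by_cases hT : T.IsInitial
      · rw [he, transport_of_isInitial _ _ hT]
        exact (g T).ne_zero
      · obtain ⟨k, hk⟩ := not_forall_not.1 hT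
        exact left_ne_zero_of_mul ((hstep T hk).trans_ne
          (mul_ne_zero (ih k hk) (hα.ne_zero hs hk.swappable)))
  refine ⟨fun T => Units.mk0 (e T) (he0 T), fun T hT => Units.ext ?_, fun T k => ?_⟩
  · rw [Units.val_mk0, he, transport_of_isInitial _ _ hT]
  by_cases hk : T.Swappable k
  · rcases hk.isDescent_or with h | h
    · exact (hstep T h).symm
    · have := hstep _ h
      rw [hk.swap_swap] at this
      exact this
  · rw [StdTableau.swap_of_not_swappable hk]

end IsSeminormalCoeff

end SeminormalCoefficients

section IntertwinerCoherence

variable {K H : Type*} [Field K] [Ring H] [Algebra K H] {t : Kˣ} {n ℓ : ℕ} {κ : ℕ → ℤ}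
  {L T : ℕ → H} {k : ℕ}

theorem HeckeRelations.intertwiner_braid (hH : HeckeRelations t n ℓ κ L T) (hk : k + 2 < n)
    {p q r : K} (h : r * p + q * ((t : K) - 1 - r - p) = 0) :
    (T k - r • 1) * (T (k + 1) - q • 1) * (T k - p • 1) =
      (T (k + 1) - p • 1) * (T k - q • 1) * (T (k + 1) - r • 1) := by
  have hbraid := hH.braid k hk
  have hquad := hH.T_mul_self k (by omega)
  have hquad' := hH.T_mul_self (k + 1) hk
  simp only [sub_mul, mul_sub, smul_mul_assoc, mul_smul_comm, one_mul, mul_one, hbraid, hquad,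
    hquad', smul_add, smul_sub]
  have hlin := congrArg (· • (T k - T (k + 1))) h
  linear_combination (norm := module) -hlin

theorem HeckeRelations.isCoherent_intertwiner (hs : SeparatesF t n ℓ κ)
    (hH : HeckeRelations t n ℓ κ L T) :
    IsCoherent fun k (S : StdTableau ℓ n) => T k - ((t : K) - 1 - diagCoeff t κ k S) • (1 : H) where
  far {S j k} hj hk hjk := by
    rw [diagCoeff_swap_of_far S hk.1 (Or.inl hjk), diagCoeff_swap_of_far S hj.1 (Or.inr hjk)]
    simp only [sub_mul, mul_sub, smul_mul_assoc, mul_smul_comm, one_mul, mul_one,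
      hH.T_mul_T j k hj.1 hk.1 (Or.inl hjk)]
    module
  braid {S j} hj hj' := by
    have h₂ := (hj.swap_succ hj').swappable
    have h₂' := (hj.succ_swap hj').swappable
    rw [hj.swappable.diagCoeff_succ hj'.1, hj'.swappable.diagCoeff_pred,
      hj.swappable.diagCoeff_swap_succ h₂, hj'.swappable.diagCoeff_succ_swap h₂']
    refine hH.intertwiner_braid hj'.1 ?_
    linear_combination diagCoeff_braid (κ := κ) hs S hj'.1

end IntertwinerCoherence

section SeminormalFamilies

variable {K H : Type*} [Field K] [Ring H] [Algebra K H] {t : Kˣ} {n ℓ : ℕ} {κ : ℕ → ℤ}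
  {L T : ℕ → H} {α : ℕ → StdTableau ℓ n → K} {S : StdTableau ℓ n} {k : ℕ} {w : H}

/-- A family of elements of `H`, indexed by standard tableaux, on which left multiplication by the
`L k` and `T k` is given by the seminormal formulas with coefficients `α`. -/
structure IsSeminormalFamily (t : Kˣ) (κ : ℕ → ℤ) (L T : ℕ → H) (α : ℕ → StdTableau ℓ n → K)
    (e : StdTableau ℓ n → H) : Prop where
  isWeightVector : ∀ S, IsWeightVector t κ L S.path n (e S)
  T_mul : ∀ k S, k + 1 < n → T k * e S = α k S • e (S.swap k) + diagCoeff t κ k S • e S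

theorem IsWeightVector.tableau_intertwiner (hw : IsWeightVector t κ L S.path n w)
    (hs : SeparatesF t n ℓ κ) (hH : HeckeRelations t n ℓ κ L T) (h : S.Swappable k) :
    IsWeightVector t κ L (S.swap k).path n (T k * w - diagCoeff t κ k S • w) :=
  (hw.intertwiner hH h.1 le_rfl (hs.qcontent_path_ne_succ S h.1)).congr
    fun _ hj => (h.path_swap hj).symm

theorem IsWeightVector.T_mul_of_not_swappable (hw : IsWeightVector t κ L S.path n w)
    (hs : SeparatesF t n ℓ κ) (hH : HeckeRelations t n ℓ κ L T) (hk : k + 1 < n)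
    (h : ¬ S.Swappable k) : T k * w = diagCoeff t κ k S • w := by
  have hadj : Adjacent (S.path k) (S.path (k + 1)) := by_contra fun h' => h ⟨hk, h'⟩
  obtain ⟨ε, hε, e⟩ := hadj.exists_nodeContent_eq κ
  have hpath := S.isPath_path
  refine sub_eq_zero.1 ((hH.hasAddableSpectrum hs (by omega : k < n)).eq_zero_of_mul_eq_smul hs
    (by omega) (hpath.mono (by omega)) (fun j hj => ?_) (hpath k (by omega)) hε ?_)
  · exact hH.L_mul_intertwiner_of_ne hk (by omega) (by omega) (by omega) (hw j (by omega))
  · rw [← e]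
    exact hH.L_mul_intertwiner hk (hs.qcontent_path_ne_succ S hk) (hw k (by omega)) (hw _ hk)

theorem StdTableau.Swappable.intertwiner_intertwiner (h : S.Swappable k)
    (hs : SeparatesF t n ℓ κ) (hH : HeckeRelations t n ℓ κ L T) (w : H) :
    T k * (T k * w - diagCoeff t κ k S • w) -
        diagCoeff t κ k (S.swap k) • (T k * w - diagCoeff t κ k S • w) =
      ((t : K) + diagCoeff t κ k S * diagCoeff t κ k (S.swap k)) • w := by
  have hb : diagCoeff t κ k (S.swap k) =
      intertwinerCoeff (t : K) (qcontent t κ (S.path (k + 1))) (qcontent t κ (S.path k)) := by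
    rw [diagCoeff, h.path_swap_left, h.path_swap_right]
  rw [hb]
  exact hH.intertwiner_intertwiner h.1 (hs.qcontent_path_ne_succ S h.1) w

/-- The intertwiners, normalized so that transport along them yields a seminormal family. -/
noncomputable def seminormalStep (t : Kˣ) (κ : ℕ → ℤ) (T : ℕ → H) (α : ℕ → StdTableau ℓ n → K)
    (k : ℕ) (S : StdTableau ℓ n) : H :=
  (α k (S.swap k))⁻¹ • (T k - ((t : K) - 1 - diagCoeff t κ k S) • 1)

theorem IsSeminormalCoeff.isCoherent_seminormalStep (hα : IsSeminormalCoeff t κ α)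
    (hs : SeparatesF t n ℓ κ) (hH : HeckeRelations t n ℓ κ L T) :
    IsCoherent (seminormalStep t κ T α) :=
  hα.isCoherent_inv_swap.smul (hH.isCoherent_intertwiner hs)

theorem StdTableau.IsDescent.seminormalStep_mul (hk : S.IsDescent k) (hs : SeparatesF t n ℓ κ)
    (w : H) : seminormalStep t κ T α k S * w =
      (α k (S.swap k))⁻¹ • (T k * w - diagCoeff t κ k (S.swap k) • w) := by
  rw [seminormalStep, hk.swappable.diagCoeff_swap hs, smul_mul_assoc, sub_mul, smul_mul_assoc,
    one_mul]

theorem HeckeRelations.isWeightVector_transport (hH : HeckeRelations t n ℓ κ L T)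
    (hs : SeparatesF t n ℓ κ) (hα : IsSeminormalCoeff t κ α) {x : StdTableau ℓ n → H}
    (hx : ∀ S, S.IsInitial → IsWeightVector t κ L S.path n (x S)) (S : StdTableau ℓ n) :
    IsWeightVector t κ L S.path n (transport (seminormalStep t κ T α) x S) := by
  induction S using StdTableau.induction_isDescent with
  | h S ih =>
    by_cases hS : S.IsInitial
    · rw [transport_of_isInitial _ _ hS]
      exact hx S hS
    · obtain ⟨k, hk⟩ := not_forall_not.1 hS
      have hw := (ih k hk).tableau_intertwiner hs hH hk.swappable.swappable_swap
      rw [hk.swappable.swap_swap] at hw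
      rw [(hα.isCoherent_seminormalStep hs hH).transport_eq x hk, hk.seminormalStep_mul hs]
      exact hw.smul _

theorem HeckeRelations.isSeminormalFamily_transport (hH : HeckeRelations t n ℓ κ L T)
    (hs : SeparatesF t n ℓ κ) (hα : IsSeminormalCoeff t κ α) {x : StdTableau ℓ n → H}
    (hx : ∀ S, S.IsInitial → IsWeightVector t κ L S.path n (x S)) :
    IsSeminormalFamily t κ L T α (transport (seminormalStep t κ T α) x) := by
  have hweight := hH.isWeightVector_transport hs hα hx
  refine ⟨hweight, fun k S hk => ?_⟩
  set e := transport (seminormalStep t κ T α) x with he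
  have hstep {S : StdTableau ℓ n} (hd : S.IsDescent k) : T k * e (S.swap k) -
      diagCoeff t κ k (S.swap k) • e (S.swap k) = α k (S.swap k) • e S := by
    rw [he, (hα.isCoherent_seminormalStep hs hH).transport_eq x hd, hd.seminormalStep_mul hs,
      smul_inv_smul₀ (hα.ne_zero hs hd.swappable.swappable_swap)]
  by_cases h : S.Swappable k
  · rcases h.isDescent_or with hd | hd
    · have hquad := h.swappable_swap.intertwiner_intertwiner hs hH (e (S.swap k))
      rw [hstep hd, ← hα.mul_swap k _ h.swappable_swap, h.swap_swap] at hquad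
      refine smul_right_injective H (hα.ne_zero hs h.swappable_swap) ?_
      simp only [mul_smul_comm] at hquad ⊢
      linear_combination (norm := module) hquad
    · have := hstep hd
      rw [h.swap_swap] at this
      rw [← this, sub_add_cancel]
  · rw [(hweight S).T_mul_of_not_swappable hs hH hk h, hα.eq_zero k S hk h, zero_smul, zero_add]

end SeminormalFamilies

section SeminormalFormulas

variable {K H : Type*} [Field K] [Ring H] [Algebra K H] {t : Kˣ} {n ℓ : ℕ} {κ : ℕ → ℤ}
  {L T : ℕ → H} {α : ℕ → StdTableau ℓ n → K} {S : StdTableau ℓ n} {j k : ℕ}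
  {e : StdTableau ℓ n → H}

namespace IsSeminormalCoeff

theorem smul_congr {M : Type*} [AddCommGroup M] [Module K M] (hα : IsSeminormalCoeff t κ α)
    (hk : k + 1 < n) {v w : M} (h : S.Swappable k → v = w) : α k S • v = α k S • w := by
  by_cases hS : S.Swappable k
  · rw [h hS]
  · rw [hα.eq_zero k S hk hS, zero_smul, zero_smul]

theorem mul_swap_eq (hα : IsSeminormalCoeff t κ α) (hs : SeparatesF t n ℓ κ) (hk : k + 1 < n)
    (S : StdTableau ℓ n) : α k S * α k (S.swap k) =
      (t : K) + diagCoeff t κ k S * ((t : K) - 1 - diagCoeff t κ k S) := by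
  by_cases hS : S.Swappable k
  · rw [hα.mul_swap k S hS, hS.diagCoeff_swap hs]
  · rw [hα.eq_zero k S hk hS]
    linear_combination diagCoeff_mul_self_of_not_swappable hs hk hS

theorem smul_far {M : Type*} [AddCommGroup M] [Module K M] (hα : IsSeminormalCoeff t κ α)
    (hjk : j + 1 < k) (hk : k + 1 < n) (e : StdTableau ℓ n → M) :
    (α k S * α j (S.swap k)) • e ((S.swap k).swap j) =
      (α j S * α k (S.swap j)) • e ((S.swap j).swap k) := by
  rw [hα.far j k S hjk hk, mul_smul, mul_smul]
  refine hα.smul_congr hk fun hSk => ?_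
  by_cases hSj : S.Swappable j
  · rw [hSj.swap_comm hSk (Or.inl hjk)]
  · have hj := (StdTableau.swappable_swap_iff_of_far S (Or.inr hjk)).not.2 hSj
    rw [hα.eq_zero j (S.swap k) (by omega) hj, zero_smul, zero_smul]

theorem swappable_of_ne_zero (hα : IsSeminormalCoeff t κ α) (hk : k + 1 < n)
    (h : α k S ≠ 0) : S.Swappable k :=
  of_not_not fun hS => h (hα.eq_zero k S hk hS)

theorem smul_braid {M : Type*} [AddCommGroup M] [Module K M] (hα : IsSeminormalCoeff t κ α)
    (hk : k + 2 < n) (e : StdTableau ℓ n → M) :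
    (α k S * α (k + 1) (S.swap k) * α k ((S.swap k).swap (k + 1))) •
        e (((S.swap k).swap (k + 1)).swap k) =
      (α (k + 1) S * α k (S.swap (k + 1)) * α (k + 1) ((S.swap (k + 1)).swap k)) •
        e (((S.swap (k + 1)).swap k).swap (k + 1)) := by
  have hk' : k + 1 < n := by omega
  have hbraid := hα.braid k S hk
  by_cases h : α k S * α (k + 1) (S.swap k) * α k ((S.swap k).swap (k + 1)) = 0
  · rw [← hbraid, h, zero_smul, zero_smul]
  · have h' := hbraid ▸ h
    rw [← hbraid, (hα.swappable_of_ne_zero hk'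
      (left_ne_zero_of_mul (left_ne_zero_of_mul h))).swap_braid
      (hα.swappable_of_ne_zero hk (right_ne_zero_of_mul (left_ne_zero_of_mul h)))
      (hα.swappable_of_ne_zero hk' (right_ne_zero_of_mul h))
      (hα.swappable_of_ne_zero hk (left_ne_zero_of_mul (left_ne_zero_of_mul h')))
      (hα.swappable_of_ne_zero hk' (right_ne_zero_of_mul (left_ne_zero_of_mul h')))
      (hα.swappable_of_ne_zero hk (right_ne_zero_of_mul h'))]

end IsSeminormalCoeff

theorem StdTableau.exists_path_zero_eq (S : StdTableau ℓ n) (hn : 0 < n) :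
    ∃ l < ℓ, S.path 0 = (l, 0, 0) := by
  have hadd := S.isPath_path 0 hn
  rw [show S.path '' Set.Iio 0 = ∅ by simp] at hadd
  generalize S.path 0 = A at hadd ⊢
  obtain ⟨l, r, c⟩ := A
  refine ⟨l, hadd.fst_lt, ?_⟩
  by_contra h
  exact hadd.mem_of_le (Nat.zero_le r) (Nat.zero_le c) fun e => h (congrArg (Prod.mk l) e.symm)

open Polynomial

namespace IsSeminormalFamily

theorem L_mul (he : IsSeminormalFamily t κ L T α e) (hk : k < n) (S : StdTableau ℓ n) :
    L k * e S = (qcontent t κ (S.path k) : K) • e S :=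
  he.isWeightVector S k hk

theorem T_mul_T_self_mul (he : IsSeminormalFamily t κ L T α e) (hα : IsSeminormalCoeff t κ α)
    (hs : SeparatesF t n ℓ κ) (hk : k + 1 < n) :
    T k * (T k * e S) = ((t : K) - 1) • (T k * e S) + (t : K) • e S := by
  have hquad := congrArg (· • e S) (hα.mul_swap_eq hs hk S)
  have hdiag := hα.smul_congr hk (v := diagCoeff t κ k (S.swap k) • e (S.swap k))
    fun h => congrArg (· • e (S.swap k)) (h.diagCoeff_swap hs)
  have hswap := hα.smul_congr hk (v := α k (S.swap k) • e ((S.swap k).swap k))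
    fun h => by rw [h.swap_swap]
  simp only [he.T_mul k _ hk, mul_add, mul_smul_comm]
  linear_combination (norm := module) hquad + hdiag + hswap

theorem T_mul_T_mul_of_lt (he : IsSeminormalFamily t κ L T α e) (hα : IsSeminormalCoeff t κ α)
    (hjk : j + 1 < k) (hk : k + 1 < n) : T j * (T k * e S) = T k * (T j * e S) := by
  have hj : j + 1 < n := by omega
  have hfar := hα.smul_far hjk hk e (S := S)
  simp only [he.T_mul j _ hj, he.T_mul k _ hk, mul_add, mul_smul_comm,
    diagCoeff_swap_of_far S hk (Or.inl hjk), diagCoeff_swap_of_far S hj (Or.inr hjk)]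
  linear_combination (norm := module) hfar

theorem T_mul_L_mul (he : IsSeminormalFamily t κ L T α e) (hk : k + 1 < n) (hj : j < n)
    (h₀ : j ≠ k) (h₁ : j ≠ k + 1) : T k * (L j * e S) = L j * (T k * e S) := by
  simp only [he.L_mul hj, he.T_mul k _ hk, mul_add, mul_smul_comm, S.path_swap_of_ne hj h₀ h₁]
  module

theorem L_succ_mul_T_mul (he : IsSeminormalFamily t κ L T α e) (hα : IsSeminormalCoeff t κ α)
    (hs : SeparatesF t n ℓ κ) (hk : k + 1 < n) : L (k + 1) * (T k * e S) =
      T k * (L k * e S) + e S + ((t : K) - 1) • (L (k + 1) * e S) := by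
  have hsub := congrArg (· • e S) (diagCoeff_mul_sub (κ := κ) hs S hk)
  have hswap := hα.smul_congr hk
    (v := (qcontent t κ ((S.swap k).path (k + 1)) : K) • e (S.swap k))
    fun h => by rw [h.path_swap_right]
  simp only [he.L_mul hk, he.L_mul (Nat.lt_of_succ_lt hk), he.T_mul k _ hk, mul_add,
    mul_smul_comm]
  linear_combination (norm := module) hsub + hswap

theorem smul_T_mul_T_succ_mul (he : IsSeminormalFamily t κ L T α e)
    (hα : IsSeminormalCoeff t κ α) (hs : SeparatesF t n ℓ κ) (hk : k + 2 < n) :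
    α k S • (T k * (T (k + 1) * e (S.swap k))) =
      α k S • (α (k + 1) (S.swap k) • (α k ((S.swap k).swap (k + 1)) •
            e (((S.swap k).swap (k + 1)).swap k) +
          diagCoeff t κ (k + 1) S • e ((S.swap k).swap (k + 1))) +
        intertwinerCoeff (t : K) (qcontent t κ (S.path k)) (qcontent t κ (S.path (k + 2))) •
          (α k (S.swap k) • e S + ((t : K) - 1 - diagCoeff t κ k S) • e (S.swap k))) := by
  have hk' : k + 1 < n := by omega
  refine hα.smul_congr hk' fun h => ?_
  rw [he.T_mul _ _ hk, mul_add, mul_smul_comm, mul_smul_comm, he.T_mul _ _ hk', he.T_mul _ _ hk',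
    h.swap_swap, h.diagCoeff_succ hk, h.diagCoeff_swap hs]
  refine congrArg (· + _) (hα.smul_congr hk fun h' => ?_)
  rw [h.diagCoeff_swap_succ h']

theorem smul_T_succ_mul_T_mul (he : IsSeminormalFamily t κ L T α e)
    (hα : IsSeminormalCoeff t κ α) (hs : SeparatesF t n ℓ κ) (hk : k + 2 < n) :
    α (k + 1) S • (T (k + 1) * (T k * e (S.swap (k + 1)))) =
      α (k + 1) S • (α k (S.swap (k + 1)) • (α (k + 1) ((S.swap (k + 1)).swap k) •
            e (((S.swap (k + 1)).swap k).swap (k + 1)) +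
          diagCoeff t κ k S • e ((S.swap (k + 1)).swap k)) +
        intertwinerCoeff (t : K) (qcontent t κ (S.path k)) (qcontent t κ (S.path (k + 2))) •
          (α (k + 1) (S.swap (k + 1)) • e S +
            ((t : K) - 1 - diagCoeff t κ (k + 1) S) • e (S.swap (k + 1)))) := by
  have hk' : k + 1 < n := by omega
  refine hα.smul_congr hk fun h => ?_
  rw [he.T_mul _ _ hk', mul_add, mul_smul_comm, mul_smul_comm, he.T_mul _ _ hk, he.T_mul _ _ hk,
    h.swap_swap, h.diagCoeff_pred, h.diagCoeff_swap hs]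
  refine congrArg (· + _) (hα.smul_congr hk' fun h' => ?_)
  rw [h.diagCoeff_succ_swap h']

theorem T_mul_T_succ_mul_T_mul (he : IsSeminormalFamily t κ L T α e)
    (hα : IsSeminormalCoeff t κ α) (hs : SeparatesF t n ℓ κ) (hk : k + 2 < n) :
    T k * (T (k + 1) * (T k * e S)) = T (k + 1) * (T k * (T (k + 1) * e S)) := by
  have hk' : k + 1 < n := by omega
  have h₁ := he.smul_T_mul_T_succ_mul hα hs hk (S := S)
  have h₂ := he.smul_T_succ_mul_T_mul hα hs hk (S := S)
  have h₃ := hα.smul_braid hk e (S := S)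
  have hdiag := diagCoeff_braid (κ := κ) hs S hk
  have h₄ := hα.smul_congr hk' fun h : S.Swappable k =>
    congrArg (· • e (S.swap k)) (h.diagCoeff_succ (t := t) (κ := κ) hk)
  have h₅ := hα.smul_congr hk fun h : S.Swappable (k + 1) =>
    congrArg (· • e (S.swap (k + 1))) (h.diagCoeff_pred (t := t) (κ := κ))
  rw [he.T_mul k S hk', he.T_mul (k + 1) S hk]
  simp only [mul_add, mul_smul_comm, h₁, h₂]
  rw [he.T_mul (k + 1) S hk, he.T_mul k S hk']
  simp only [mul_add, mul_smul_comm, he.T_mul k _ hk', he.T_mul (k + 1) _ hk]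
  set q := intertwinerCoeff (t : K) (qcontent t κ (S.path k)) (qcontent t κ (S.path (k + 2)))
  set b := diagCoeff t κ k S
  set d := diagCoeff t κ (k + 1) S
  have hscalar : q * (α k S * α k (S.swap k)) + b * b * d =
      q * (α (k + 1) S * α (k + 1) (S.swap (k + 1))) + d * d * b := by
    rw [hα.mul_swap_eq hs hk', hα.mul_swap_eq hs hk]
    linear_combination (b - d) * hdiag
  linear_combination (norm := module) h₃ - d • h₄ + b • h₅ + congrArg (· • e S) hscalar +
    congrArg (fun x => (α k S * x) • e (S.swap k)) hdiag -
    congrArg (fun x => (α (k + 1) S * x) • e (S.swap (k + 1))) hdiag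

theorem cyclotomic_mul (he : IsSeminormalFamily t κ L T α e) (hn : 0 < n)
    (S : StdTableau ℓ n) :
    aeval (L 0) (∏ l ∈ Finset.range ℓ, (X - C (qint (t : K) (κ l)))) * e S = 0 := by
  obtain ⟨l, hl, hpath⟩ := S.exists_path_zero_eq hn
  rw [aeval_mul_of_mul_eq_smul (he.L_mul hn S), eval_prod,
    Finset.prod_eq_zero (Finset.mem_range.2 hl) (by simp [hpath, qcontent, nodeContent]), zero_smul]

end IsSeminormalFamily

end SeminormalFormulas

section SeminormalMatrices

open Matrix

variable {K : Type*} [Field K] {t : Kˣ} {n ℓ : ℕ} {κ : ℕ → ℤ}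
  {α : ℕ → StdTableau ℓ n → K} {j k : ℕ}

/-- The matrix of `L_{k+1}` in seminormal form. -/
noncomputable def seminormalL (t : Kˣ) (κ : ℕ → ℤ) (k : ℕ) :
    Matrix (StdTableau ℓ n) (StdTableau ℓ n) K :=
  diagonal fun S => qcontent t κ (S.path k)

/-- The matrix of `T_{k+1}` in seminormal form; its columns are given by left multiplication on a
seminormal family. -/
noncomputable def seminormalT (t : Kˣ) (κ : ℕ → ℤ) (α : ℕ → StdTableau ℓ n → K) (k : ℕ) :
    Matrix (StdTableau ℓ n) (StdTableau ℓ n) K :=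
  .of fun U V => (if U = V.swap k then α k V else 0) + if U = V then diagCoeff t κ k V else 0

theorem StdTableau.eq_swap_comm {S T : StdTableau ℓ n} : S = T.swap k ↔ T = S.swap k := by
  have hinv (T : StdTableau ℓ n) : (T.swap k).swap k = T := by
    by_cases h : T.Swappable k
    · exact h.swap_swap
    · rw [swap_of_not_swappable h, swap_of_not_swappable h]
  exact ⟨fun h => by rw [h, hinv], fun h => by rw [h, hinv]⟩

theorem seminormalL_mul_single (S T : StdTableau ℓ n) :
    (seminormalL t κ k * single S T 1 : Matrix _ _ K) =
      (qcontent t κ (S.path k) : K) • single S T 1 := by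
  ext U V
  simp only [seminormalL, diagonal_mul, single_apply, Matrix.smul_apply, smul_eq_mul]
  grind

theorem single_mul_seminormalL (S T : StdTableau ℓ n) :
    (single S T 1 * seminormalL t κ k : Matrix _ _ K) =
      (qcontent t κ (T.path k) : K) • single S T 1 := by
  ext U V
  simp only [seminormalL, mul_diagonal, single_apply, Matrix.smul_apply, smul_eq_mul]
  grind

theorem seminormalT_mul_single (S T : StdTableau ℓ n) :
    (seminormalT t κ α k * single S T 1 : Matrix _ _ K) =
      α k S • single (S.swap k) T 1 + diagCoeff t κ k S • single S T 1 := by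
  ext U V
  by_cases hV : T = V
  · subst hV
    simp [seminormalT, single_apply, eq_comm]
  · simp [hV, Ne.symm hV]

theorem single_mul_seminormalT (S T : StdTableau ℓ n) :
    (single S T 1 * seminormalT t κ α k : Matrix _ _ K) =
      α k (T.swap k) • single S (T.swap k) 1 + diagCoeff t κ k T • single S T 1 := by
  ext U V
  by_cases hU : S = U
  · subst hU
    simp only [seminormalT, single_mul_apply_same, of_apply, one_mul, Matrix.add_apply,
      Matrix.smul_apply, single_apply, true_and, smul_eq_mul, StdTableau.eq_swap_comm (S := T)]
    grind
  · simp [hU, Ne.symm hU]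

theorem isSeminormalFamily_single (T : StdTableau ℓ n) :
    IsSeminormalFamily t κ (seminormalL t κ) (seminormalT t κ α) α fun S => single S T (1 : K) where
  isWeightVector S _ _ := seminormalL_mul_single S T
  T_mul _ S _ := seminormalT_mul_single S T

theorem matrix_eq_of_forall_mul_single_eq {ι R : Type*} [Fintype ι] [Semiring R]
    {A B : Matrix ι ι R} (h : ∀ i, A * single i i 1 = B * single i i 1) : A = B := by
  ext i j
  simpa using congrFun₂ (h j) i j

theorem heckeRelations_seminormal (hα : IsSeminormalCoeff t κ α) (hs : SeparatesF t n ℓ κ) :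
    HeckeRelations t n ℓ κ (seminormalL t κ) (seminormalT t κ α) := by
  have he (S : StdTableau ℓ n) := isSeminormalFamily_single (t := t) (κ := κ) (α := α) S
  refine ⟨fun j k _ _ => ?_, fun k hk => ?_, fun j k hj hk hjk => ?_, fun k hk => ?_,
    fun k j hk hj h₀ h₁ => ?_, fun k hk => ?_, fun hn => ?_⟩ <;>
    refine matrix_eq_of_forall_mul_single_eq fun S => ?_
  · simp only [seminormalL, diagonal_mul_diagonal, mul_comm]
  · rw [mul_assoc, (he S).T_mul_T_self_mul hα hs hk, add_mul, smul_mul_assoc, smul_mul_assoc,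
      one_mul]
  · rw [mul_assoc, mul_assoc]
    rcases hjk with h | h
    · exact (he S).T_mul_T_mul_of_lt hα h hk
    · exact ((he S).T_mul_T_mul_of_lt hα h hj).symm
  · simpa only [mul_assoc] using (he S).T_mul_T_succ_mul_T_mul hα hs hk
  · simpa only [mul_assoc] using (he S).T_mul_L_mul hk hj h₀ h₁
  · rw [mul_assoc, (he S).L_succ_mul_T_mul hα hs hk, add_mul, add_mul, mul_assoc, one_mul,
      smul_mul_assoc]
  · rw [(he S).cyclotomic_mul hn, zero_mul]

end SeminormalMatrices

section SeminormalRepresentations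

open Matrix

variable {K H : Type*} [Field K] [Ring H] [Algebra K H] {t : Kˣ} {n ℓ : ℕ} {κ : ℕ → ℤ}
  {L T : ℕ → H} {α : ℕ → StdTableau ℓ n → K}
  {ρ : H →ₐ[K] Matrix (StdTableau ℓ n) (StdTableau ℓ n) K}

/-- The elements `L_1, …, L_n` and `T_1, …, T_{n-1}`. -/
def heckeGenerators (n : ℕ) (L T : ℕ → H) : Set H := L '' {k | k < n} ∪ T '' {k | k + 1 < n}

/-- The homomorphism `ρ` sends the `L k` and `T k` to the seminormal matrices. -/
structure IsSeminormalRep (t : Kˣ) (κ : ℕ → ℤ) (L T : ℕ → H) (α : ℕ → StdTableau ℓ n → K)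
    (ρ : H →ₐ[K] Matrix (StdTableau ℓ n) (StdTableau ℓ n) K) : Prop where
  map_L : ∀ k < n, ρ (L k) = seminormalL t κ k
  map_T : ∀ k, k + 1 < n → ρ (T k) = seminormalT t κ α k

theorem IsSeminormalFamily.mul_eq_sum {e : StdTableau ℓ n → H}
    (he : IsSeminormalFamily t κ L T α e) (hρ : IsSeminormalRep t κ L T α ρ) {h : H}
    (hh : h ∈ Algebra.adjoin K (heckeGenerators n L T)) (V : StdTableau ℓ n) :
    h * e V = ∑ U, ρ h U V • e U := by
  induction hh using Algebra.adjoin_induction generalizing V with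
  | mem h hh =>
    obtain ⟨k, hk, rfl⟩ | ⟨k, hk, rfl⟩ := hh
    · simp [hρ.map_L k hk, seminormalL, diagonal_apply, he.isWeightVector V k hk]
    · simp [hρ.map_T k hk, seminormalT, add_smul, Finset.sum_add_distrib, he.T_mul k V hk]
  | algebraMap c => simp [algebraMap_matrix_apply, ← Algebra.smul_def]
  | add x y _ _ hx hy =>
    simp only [add_mul, hx, hy, map_add, Matrix.add_apply, add_smul, Finset.sum_add_distrib]
  | mul x y _ _ hx hy =>
    simp only [mul_assoc, hy, Finset.mul_sum, mul_smul_comm, hx, map_mul, mul_apply,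
      Finset.sum_smul, Finset.smul_sum, smul_smul]
    rw [Finset.sum_comm]
    simp only [mul_comm]

theorem IsSeminormalRep.apply_eq_zero_of_shape_ne (hρ : IsSeminormalRep t κ L T α ρ)
    (hα : IsSeminormalCoeff t κ α) {h : H} (hh : h ∈ Algebra.adjoin K (heckeGenerators n L T))
    {U V : StdTableau ℓ n} (hUV : U.shape ≠ V.shape) : ρ h U V = 0 := by
  induction hh using Algebra.adjoin_induction generalizing U V with
  | mem h hh =>
    have hne : U ≠ V := fun h => hUV (congrArg _ h)
    obtain ⟨k, hk, rfl⟩ | ⟨k, hk, rfl⟩ := hh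
    · rw [hρ.map_L k hk, seminormalL, diagonal_apply_ne _ hne]
    · rw [hρ.map_T k hk, seminormalT, of_apply, if_neg hne, add_zero, ite_eq_right_iff]
      rintro rfl
      exact hα.eq_zero k V hk fun _ => hUV (V.shape_swap k)
  | algebraMap c =>
    rw [AlgHom.commutes, algebraMap_matrix_apply, if_neg fun h => hUV (congrArg _ h)]
  | add x y _ _ hx hy => rw [map_add, Matrix.add_apply, hx hUV, hy hUV, add_zero]
  | mul x y _ _ hx hy =>
    rw [map_mul, mul_apply]
    refine Finset.sum_eq_zero fun W _ => ?_
    by_cases hW : U.shape = W.shape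
    · rw [hy (hW ▸ hUV), mul_zero]
    · rw [hx hW, zero_mul]

namespace IsSeminormalRep

variable (hρ : IsSeminormalRep t κ L T α ρ) (hH : HeckeRelations t n ℓ κ L T)
  (hs : SeparatesF t n ℓ κ) (hα : IsSeminormalCoeff t κ α)

include hρ hH hs hα

theorem mul_eq_zero_of_isInitial {I : StdTableau ℓ n} (hI : I.IsInitial) {h w : H}
    (hh : h ∈ Algebra.adjoin K (heckeGenerators n L T)) (hh0 : ρ h = 0)
    (hw : IsWeightVector t κ L I.path n w) : h * w = 0 := by
  have he : IsSeminormalFamily t κ L T α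
      (transport (seminormalStep t κ T α) (Pi.single I w)) :=
    hH.isSeminormalFamily_transport hs hα fun S _ => by
      rcases eq_or_ne S I with rfl | hS
      · rwa [Pi.single_eq_same]
      · rw [Pi.single_eq_of_ne hS]
        exact .zero
  have hsum := he.mul_eq_sum hρ hh I
  simpa only [transport_of_isInitial _ _ hI, Pi.single_eq_same, hh0, Matrix.zero_apply, zero_smul,
    Finset.sum_const_zero] using hsum

theorem mul_eq_zero_of_isWeightVector (hgen : Algebra.adjoin K (heckeGenerators n L T) = ⊤)
    {S : StdTableau ℓ n} {h w : H} (hh0 : ρ h = 0) (hw : IsWeightVector t κ L S.path n w) :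
    h * w = 0 := by
  induction S using StdTableau.induction_isDescent generalizing h w with
  | h S ih =>
    by_cases hS : S.IsInitial
    · exact hρ.mul_eq_zero_of_isInitial hH hs hα hS (hgen ▸ Algebra.mem_top) hh0 hw
    · obtain ⟨k, hk⟩ := not_forall_not.1 hS
      have hker : ρ (h * (T k - diagCoeff t κ k (S.swap k) • 1)) = 0 := by
        rw [map_mul, hh0, zero_mul]
      have hmul := ih k hk hker (hw.tableau_intertwiner hs hH hk.swappable)
      rw [mul_assoc, sub_mul, smul_mul_assoc, one_mul,
        hk.swappable.intertwiner_intertwiner hs hH, mul_smul_comm] at hmul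
      exact (smul_eq_zero.1 hmul).resolve_left (hk.swappable.add_diagCoeff_mul_ne_zero hs)

theorem injective (hgen : Algebra.adjoin K (heckeGenerators n L T) = ⊤) :
    Function.Injective ρ := by
  refine (injective_iff_map_eq_zero ρ).2 fun h hh0 => ?_
  obtain ⟨F, hF, hsum⟩ := hH.exists_eq_sum_isWeightVector hs (1 : H)
  rw [← mul_one h, hsum, Finset.mul_sum]
  exact Finset.sum_eq_zero fun S _ =>
    hρ.mul_eq_zero_of_isWeightVector hH hs hα hgen hh0 (hF S)

end IsSeminormalRep

end SeminormalRepresentations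

section SeminormalBases

open Matrix

variable {K H : Type*} [Field K] [Ring H] [Algebra K H] {t : Kˣ} {n ℓ : ℕ} {κ : ℕ → ℤ}
  {L T : ℕ → H} {α : ℕ → StdTableau ℓ n → K} {γ γ' : StdTableau ℓ n → Kˣ}
  {ρ : H →ₐ[K] Matrix (StdTableau ℓ n) (StdTableau ℓ n) K}
  {f : StdTableau ℓ n → StdTableau ℓ n → H} {S U V W : StdTableau ℓ n} {k : ℕ}

theorem apply_eq_zero_of_seminormalL_mul (hs : SeparatesF t n ℓ κ)
    {A : Matrix (StdTableau ℓ n) (StdTableau ℓ n) K}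
    (hA : ∀ k < n, seminormalL t κ k * A = (qcontent t κ (S.path k) : K) • A) (h : V ≠ S) :
    A V W = 0 := by
  by_contra hne
  refine h (hs.eq_of_qcontent_path_eq fun k hk => mul_right_cancel₀ hne ?_)
  simpa [seminormalL, diagonal_mul] using congrFun₂ (hA k hk) V W

theorem apply_eq_zero_of_mul_seminormalL (hs : SeparatesF t n ℓ κ)
    {A : Matrix (StdTableau ℓ n) (StdTableau ℓ n) K}
    (hA : ∀ k < n, A * seminormalL t κ k = (qcontent t κ (U.path k) : K) • A) (h : W ≠ U) :
    A V W = 0 := by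
  by_contra hne
  refine h (hs.eq_of_qcontent_path_eq fun k hk => mul_left_cancel₀ hne ?_)
  simpa [seminormalL, mul_diagonal, mul_comm] using congrFun₂ (hA k hk) V W

namespace IsSeminormalRep

theorem exists_map_eq_single_self (hρ : IsSeminormalRep t κ L T α ρ)
    (hH : HeckeRelations t n ℓ κ L T) (hs : SeparatesF t n ℓ κ) (S : StdTableau ℓ n) :
    ∃ h, ρ h = single S S 1 := by
  obtain ⟨F, hF, hsum⟩ := hH.exists_eq_sum_isWeightVector hs (1 : H)
  have hzero {V W S : StdTableau ℓ n} (h : V ≠ S) : ρ (F S) V W = 0 :=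
    apply_eq_zero_of_seminormalL_mul hs
      (fun k hk => by rw [← hρ.map_L k hk, ← map_mul, hF S k hk, map_smul]) h
  refine ⟨F S, ?_⟩
  ext V W
  rcases eq_or_ne V S with rfl | hV
  · have h := congrFun₂ (congrArg ρ hsum) V W
    rw [map_one, map_sum, Matrix.sum_apply,
      Finset.sum_eq_single V (fun U _ hU => hzero hU.symm) (by simp)] at h
    rw [← h, one_apply, single_apply]
    simp only [true_and]
  · rw [hzero hV, single_apply_of_row_ne hV.symm]

theorem exists_map_eq_single (hρ : IsSeminormalRep t κ L T α ρ)
    (hH : HeckeRelations t n ℓ κ L T) (hs : SeparatesF t n ℓ κ) (hα : IsSeminormalCoeff t κ α)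
    (h : S.shape = U.shape) : ∃ x, ρ x = single S U 1 := by
  refine StdTableau.swap_induction (p := fun V => ∃ x, ρ x = single V U 1) h.symm
    (hρ.exists_map_eq_single_self hH hs U) fun V k hV _ ⟨x, hx⟩ => ?_
  refine ⟨(α k V)⁻¹ • (T k * x - diagCoeff t κ k V • x), ?_⟩
  rw [map_smul, map_sub, map_mul, map_smul, hx, hρ.map_T k hV.1, seminormalT_mul_single,
    add_sub_cancel_right, inv_smul_smul₀ (hα.ne_zero hs hV)]

theorem exists_map_eq_smul_single (hρ : IsSeminormalRep t κ L T α ρ)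
    (hH : HeckeRelations t n ℓ κ L T) (hs : SeparatesF t n ℓ κ) (hα : IsSeminormalCoeff t κ α)
    (γ : StdTableau ℓ n → Kˣ) : ∃ f : StdTableau ℓ n → StdTableau ℓ n → H,
      ∀ S U, S.shape = U.shape → ρ (f S U) = (γ U : K) • single S U 1 := by
  have h (S U : StdTableau ℓ n) :
      ∃ x, S.shape = U.shape → ρ x = (γ U : K) • single S U 1 := by
    by_cases hSU : S.shape = U.shape
    · obtain ⟨x, hx⟩ := hρ.exists_map_eq_single hH hs hα hSU
      exact ⟨(γ U : K) • x, fun _ => by rw [map_smul, hx]⟩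
    · exact ⟨0, fun h => absurd h hSU⟩
  choose f hf using h
  exact ⟨f, hf⟩

end IsSeminormalRep

/-- The pairs of standard tableaux of the same shape, which index a seminormal basis. -/
abbrev StdPair (ℓ n : ℕ) : Type :=
  {p : StdTableau ℓ n × StdTableau ℓ n // p.1.shape = p.2.shape}

/-- The family `f` is a seminormal basis of `H` with structure constants given by `α` and `γ`. Only
the values `f S U` for tableaux `S` and `U` of the same shape matter. -/
structure IsSeminormalBasis (t : Kˣ) (κ : ℕ → ℤ) (L T : ℕ → H) (α : ℕ → StdTableau ℓ n → K)
    (γ : StdTableau ℓ n → Kˣ) (f : StdTableau ℓ n → StdTableau ℓ n → H) : Prop where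
  linearIndependent : LinearIndependent K fun p : StdPair ℓ n => f p.1.1 p.1.2
  span_eq_top : Submodule.span K (Set.range fun p : StdPair ℓ n => f p.1.1 p.1.2) = ⊤
  mul_L : ∀ S U, S.shape = U.shape → ∀ k < n, f S U * L k = (qcontent t κ (U.path k) : K) • f S U
  L_mul : ∀ S U, S.shape = U.shape → ∀ k < n, L k * f S U = (qcontent t κ (S.path k) : K) • f S U
  mul_T : ∀ S U, S.shape = U.shape → ∀ k, k + 1 < n →
    f S U * T k = α k U • f S (U.swap k) + diagCoeff t κ k U • f S U
  T_mul : ∀ S U, S.shape = U.shape → ∀ k, k + 1 < n →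
    T k * f S U = α k S • f (S.swap k) U + diagCoeff t κ k S • f S U
  mul : ∀ S U V W, S.shape = U.shape → V.shape = W.shape →
    f S U * f V W = if U = V then (γ U : K) • f S W else 0

section Existence

variable (hf : ∀ S U, S.shape = U.shape → ρ (f S U) = (γ U : K) • single S U 1)

include hf

theorem linearIndependent_of_map_eq_smul_single :
    LinearIndependent K fun p : StdPair ℓ n => f p.1.1 p.1.2 := by
  have hsingle := ((stdBasis K (StdTableau ℓ n) (StdTableau ℓ n)).linearIndependent.comp
    (Subtype.val : StdPair ℓ n → _) Subtype.val_injective).units_smul fun p : StdPair ℓ n => γ p.1.2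
  have hmap : ((fun p : StdPair ℓ n => γ p.1.2) •
      (⇑(stdBasis K (StdTableau ℓ n) (StdTableau ℓ n)) ∘ (Subtype.val : StdPair ℓ n → _))) =
        ρ.toLinearMap ∘ fun p : StdPair ℓ n => f p.1.1 p.1.2 := by
    ext1 p
    rw [Function.comp_apply, AlgHom.toLinearMap_apply, hf _ _ p.2, Pi.smul_apply',
      Function.comp_apply, stdBasis_eq_single, Units.smul_def]
  rw [hmap] at hsingle
  exact .of_comp ρ.toLinearMap hsingle

theorem span_eq_top_of_map_eq_smul_single (hinj : Function.Injective ρ)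
    (hblock : ∀ h S U, S.shape ≠ U.shape → ρ h S U = 0) :
    Submodule.span K (Set.range fun p : StdPair ℓ n => f p.1.1 p.1.2) = ⊤ := by
  refine eq_top_iff.2 fun h _ => ?_
  rw [← Submodule.comap_map_eq_of_injective (f := ρ.toLinearMap) hinj (Submodule.span K _),
    Submodule.mem_comap, AlgHom.toLinearMap_apply, matrix_eq_sum_single (ρ h)]
  refine Submodule.sum_mem _ fun S _ => Submodule.sum_mem _ fun U _ => ?_
  by_cases hSU : S.shape = U.shape
  · refine ⟨(ρ h S U * (γ U : K)⁻¹) • f S U,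
      Submodule.smul_mem _ _ (Submodule.subset_span ⟨⟨(S, U), hSU⟩, rfl⟩), ?_⟩
    rw [AlgHom.toLinearMap_apply, map_smul, hf S U hSU, smul_smul,
      inv_mul_cancel_right₀ (γ U).ne_zero, smul_single, smul_eq_mul, mul_one]
  · rw [hblock h S U hSU, single_zero]
    exact Submodule.zero_mem _

theorem isSeminormalBasis_of_map_eq_smul_single (hρ : IsSeminormalRep t κ L T α ρ)
    (hinj : Function.Injective ρ) (hblock : ∀ h S U, S.shape ≠ U.shape → ρ h S U = 0)
    (hγ : ∀ S k, (γ (S.swap k) : K) * α k S = γ S * α k (S.swap k)) :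
    IsSeminormalBasis t κ L T α γ f where
  linearIndependent := linearIndependent_of_map_eq_smul_single hf
  span_eq_top := span_eq_top_of_map_eq_smul_single hf hinj hblock
  mul_L S U h k hk := hinj <| by
    rw [map_mul, map_smul, hf S U h, hρ.map_L k hk, smul_mul_assoc, single_mul_seminormalL,
      smul_comm]
  L_mul S U h k hk := hinj <| by
    rw [map_mul, map_smul, hf S U h, hρ.map_L k hk, mul_smul_comm, seminormalL_mul_single,
      smul_comm]
  mul_T S U h k hk := hinj <| by
    rw [map_mul, map_add, map_smul, map_smul, hf S U h, hf S _ (h.trans (U.shape_swap k).symm),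
      hρ.map_T k hk, smul_mul_assoc, single_mul_seminormalT, smul_add, smul_smul, smul_smul,
      ← hγ U k, smul_smul, smul_smul, mul_comm, mul_comm (γ U : K)]
  T_mul S U h k hk := hinj <| by
    rw [map_mul, map_add, map_smul, map_smul, hf S U h, hf _ U ((S.shape_swap k).trans h),
      hρ.map_T k hk, mul_smul_comm, seminormalT_mul_single, smul_add, smul_comm,
      smul_comm (γ U : K)]
  mul S U V W h h' := hinj <| by
    rw [map_mul, hf S U h, hf V W h']
    split_ifs with hUV
    · subst hUV
      rw [map_smul, hf S W (h.trans h'), smul_mul_smul_comm, single_mul_single_same, mul_one,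
        mul_smul]
    · rw [smul_mul_smul_comm, single_mul_single_of_ne _ _ _ _ hUV, smul_zero, map_zero]

end Existence

namespace IsSeminormalBasis

theorem map_eq_smul_single (hf : IsSeminormalBasis t κ L T α γ f)
    (hρ : IsSeminormalRep t κ L T α ρ) (hs : SeparatesF t n ℓ κ) (h : S.shape = U.shape) :
    ρ (f S U) = ρ (f S U) S U • single S U 1 := by
  ext V W
  rw [Matrix.smul_apply, smul_eq_mul]
  rcases ne_or_eq V S with hV | rfl
  · rw [single_apply_of_row_ne hV.symm, mul_zero]
    exact apply_eq_zero_of_seminormalL_mul hs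
      (fun k hk => by rw [← hρ.map_L k hk, ← map_mul, hf.L_mul S U h k hk, map_smul]) hV
  rcases ne_or_eq W U with hW | rfl
  · rw [single_apply_of_col_ne _ _ hW.symm, mul_zero]
    exact apply_eq_zero_of_mul_seminormalL hs
      (fun k hk => by rw [← hρ.map_L k hk, ← map_mul, hf.mul_L V U h k hk, map_smul]) hW
  · rw [single_apply_same, mul_one]

theorem map_apply_swap_right (hf : IsSeminormalBasis t κ L T α γ f)
    (hρ : IsSeminormalRep t κ L T α ρ) (hs : SeparatesF t n ℓ κ) (h : S.shape = U.shape)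
    (hk : k + 1 < n) :
    α k U * ρ (f S (U.swap k)) S (U.swap k) = ρ (f S U) S U * α k (U.swap k) := by
  have hT := congrArg ρ (hf.mul_T S U h k hk)
  rw [map_mul, map_add, map_smul, map_smul, hf.map_eq_smul_single hρ hs h,
    hf.map_eq_smul_single hρ hs (h.trans (U.shape_swap k).symm), hρ.map_T k hk, smul_mul_assoc,
    single_mul_seminormalT, smul_add, smul_comm _ (diagCoeff t κ k U), add_left_inj] at hT
  simpa using (congrFun₂ hT S (U.swap k)).symm

theorem map_apply_swap_left (hf : IsSeminormalBasis t κ L T α γ f)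
    (hρ : IsSeminormalRep t κ L T α ρ) (hs : SeparatesF t n ℓ κ) (h : S.shape = U.shape)
    (hk : k + 1 < n) :
    α k S * ρ (f (S.swap k) U) (S.swap k) U = ρ (f S U) S U * α k S := by
  have hT := congrArg ρ (hf.T_mul S U h k hk)
  rw [map_mul, map_add, map_smul, map_smul, hf.map_eq_smul_single hρ hs h,
    hf.map_eq_smul_single hρ hs ((S.shape_swap k).trans h), hρ.map_T k hk, mul_smul_comm,
    seminormalT_mul_single, smul_add, smul_comm _ (diagCoeff t κ k S), add_left_inj] at hT
  simpa using (congrFun₂ hT (S.swap k) U).symm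

theorem map_apply_self (hf : IsSeminormalBasis t κ L T α γ f)
    (hρ : IsSeminormalRep t κ L T α ρ) (hs : SeparatesF t n ℓ κ) (hinj : Function.Injective ρ)
    (S : StdTableau ℓ n) : ρ (f S S) S S = γ S := by
  have hmap := hf.map_eq_smul_single hρ hs (rfl : S.shape = S.shape)
  have hne : ρ (f S S) S S ≠ 0 := fun h0 => by
    rw [h0, zero_smul, map_eq_zero_iff ρ hinj] at hmap
    exact hf.linearIndependent.ne_zero ⟨(S, S), rfl⟩ hmap
  have hmul := congrArg ρ (hf.mul S S S S rfl rfl)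
  rw [if_pos rfl, map_mul, map_smul, hmap, smul_mul_smul_comm, single_mul_single_same, mul_one,
    smul_smul] at hmul
  exact mul_right_cancel₀ hne (by simpa using congrFun₂ hmul S S)

theorem map_eq_smul_single_of_isInitial (hf : IsSeminormalBasis t κ L T α γ' f)
    (hρ : IsSeminormalRep t κ L T α ρ) (hs : SeparatesF t n ℓ κ) (hinj : Function.Injective ρ)
    (hα : IsSeminormalCoeff t κ α)
    (hγ : ∀ S k, (γ (S.swap k) : K) * α k S = γ S * α k (S.swap k))
    (hinit : ∀ I : StdTableau ℓ n, I.IsInitial → γ' I = γ I) (h : S.shape = U.shape) :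
    ρ (f S U) = (γ U : K) • single S U 1 := by
  obtain ⟨I, hIS, hI⟩ := S.exists_isInitial
  have hright : ρ (f I U) I U = γ U := by
    refine StdTableau.swap_induction (p := fun V => ρ (f I V) I V = γ V) (hIS.trans h)
      ((hf.map_apply_self hρ hs hinj I).trans (by rw [hinit I hI])) fun V k hk hV hp => ?_
    refine mul_left_cancel₀ (hα.ne_zero hs hk) ?_
    rw [hf.map_apply_swap_right hρ hs hV.symm hk.1, hp, ← hγ, mul_comm]
  have hleft : ρ (f S U) S U = γ U := by
    refine StdTableau.swap_induction (p := fun V => ρ (f V U) V U = γ U) hIS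
      hright fun V k hk hV hp => ?_
    refine mul_left_cancel₀ (hα.ne_zero hs hk) ?_
    rw [hf.map_apply_swap_left hρ hs (hV.trans (hIS.trans h)) hk.1, hp, mul_comm]
  rw [hf.map_eq_smul_single hρ hs h, hleft]

end IsSeminormalBasis

end SeminormalBases

section Presentation

open Polynomial

variable {K : Type*} [Field K] {t : Kˣ} {n ℓ : ℕ} {κ : ℕ → ℤ}

section Relations

variable {H : Type*} [Ring H] [Algebra K H] {a : K} {x y z : H}

theorem add_one_mul_sub_algebraMap_eq_zero_iff :
    (x + 1) * (x - algebraMap K H a) = 0 ↔ x * x = (a - 1) • x + a • 1 := by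
  have h : (x + 1) * (x - algebraMap K H a) = x * x - ((a - 1) • x + a • 1) := by
    rw [add_mul, mul_sub, one_mul, ← Algebra.commutes, ← Algebra.smul_def,
      Algebra.algebraMap_eq_smul_one]
    module
  rw [h, sub_eq_zero]

theorem mul_sub_algebraMap_add_one_eq_iff :
    y * (x - algebraMap K H a + 1) = z + 1 ↔ y * x = z + 1 + (a - 1) • y := by
  have h : y * (x - algebraMap K H a + 1) = y * x - (a - 1) • y := by
    rw [mul_add, mul_sub, mul_one, ← Algebra.commutes, ← Algebra.smul_def]
    module
  rw [h, sub_eq_iff_eq_add]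

theorem list_prod_map_range_sub_algebraMap (x : H) (q : ℕ → K) (m : ℕ) :
    ((List.range m).map fun l => x - algebraMap K H (q l)).prod =
      aeval x (∏ l ∈ Finset.range m, (X - C (q l))) := by
  induction m with
  | zero => simp
  | succ m ih => simp [List.prod_range_succ, Finset.prod_range_succ, ih]

end Relations

variable {B : Type*} [Ring B] [Algebra K B] {L T : ℕ → B}
  {φ : FreeAlgebra K (HeckeGen n) →ₐ[K] B}

theorem HeckeRelations.map_eq_of_heckeRel (hH : HeckeRelations t n ℓ κ L T)
    (hL : ∀ k : Fin n, φ (hL K k) = L k) (hT : ∀ k : Fin (n - 1), φ (hT K k) = T k)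
    {x y : FreeAlgebra K (HeckeGen n)} (hxy : HeckeRel K t n ℓ κ x y) : φ x = φ y := by
  cases hxy with
  | cyc hn =>
    simp only [qintU_eq_qint, list_prod_map_range_sub_algebraMap, ← aeval_algHom_apply, hL,
      hH.cyclotomic hn, map_zero]
  | quad r =>
    simp only [map_mul, map_add, map_sub, map_one, map_zero, AlgHom.commutes, hT]
    exact add_one_mul_sub_algebraMap_eq_zero_iff.2 (hH.T_mul_self r (by omega))
  | LL k m => simpa only [map_mul, hL] using hH.L_mul_L k m k.2 m.2
  | TTfar r s h => simpa only [map_mul, hT] using hH.T_mul_T r s (by omega) (by omega) h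
  | braid r s h => simpa only [map_mul, hT, h] using hH.braid r (by omega)
  | TL r k h => simpa only [map_mul, hT, hL] using hH.T_mul_L r k (by omega) k.2 h.1 h.2
  | LT r =>
    simp only [map_mul, map_add, map_sub, map_one, AlgHom.commutes, hT, hL]
    exact mul_sub_algebraMap_add_one_eq_iff.2 (hH.L_succ_mul_T r (by omega))

theorem HeckeRelations.of_heckeRel
    (hφ : ∀ x y : FreeAlgebra K (HeckeGen n), HeckeRel K t n ℓ κ x y → φ x = φ y)
    (hL : ∀ k : Fin n, φ (hL K k) = L k) (hT : ∀ k : Fin (n - 1), φ (hT K k) = T k) :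
    HeckeRelations t n ℓ κ L T where
  L_mul_L j k hj hk := by
    simpa only [map_mul, hL] using hφ _ _ (.LL ⟨j, hj⟩ ⟨k, hk⟩)
  T_mul_self k hk := by
    have h := hφ _ _ (.quad ⟨k, by omega⟩)
    simp only [map_mul, map_add, map_sub, map_one, map_zero, AlgHom.commutes, hT] at h
    exact add_one_mul_sub_algebraMap_eq_zero_iff.1 h
  T_mul_T j k hj hk hjk := by
    simpa only [map_mul, hT] using hφ _ _ (.TTfar ⟨j, by omega⟩ ⟨k, by omega⟩ hjk)
  braid k hk := by
    simpa only [map_mul, hT] using hφ _ _ (.braid ⟨k, by omega⟩ ⟨k + 1, by omega⟩ rfl)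
  T_mul_L k j hk hj hjk hjk' := by
    simpa only [map_mul, hL, hT] using hφ _ _ (.TL ⟨k, by omega⟩ ⟨j, hj⟩ ⟨hjk, hjk'⟩)
  L_succ_mul_T k hk := by
    have h := hφ _ _ (.LT ⟨k, by omega⟩)
    simp only [map_mul, map_add, map_sub, map_one, AlgHom.commutes, hL, hT] at h
    exact mul_sub_algebraMap_add_one_eq_iff.1 h
  cyclotomic hn := by
    simpa only [qintU_eq_qint, list_prod_map_range_sub_algebraMap, ← aeval_algHom_apply, hL,
      map_zero] using hφ _ _ (.cyc hn)

variable (K t n ℓ κ)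

/-- The generators `L_1, L_2, …` of `H_n(K, t, κ)` as a sequence, with the convention `L_k = 0`
for `n < k`. -/
noncomputable def heckeL (k : ℕ) : CycHecke K t n ℓ κ :=
  if hk : k < n then Lgen K t n ℓ κ ⟨k, hk⟩ else 0

/-- The generators `T_1, T_2, …` of `H_n(K, t, κ)` as a sequence, with the convention `T_k = 0`
for `n ≤ k`. -/
noncomputable def heckeT (k : ℕ) : CycHecke K t n ℓ κ :=
  if hk : k < n - 1 then Tgen K t n ℓ κ ⟨k, hk⟩ else 0

theorem heckeL_val (k : Fin n) : heckeL K t n ℓ κ k = Lgen K t n ℓ κ k := dif_pos k.2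

theorem heckeT_val (k : Fin (n - 1)) : heckeT K t n ℓ κ k = Tgen K t n ℓ κ k := dif_pos k.2

theorem heckeRelations_cycHecke :
    HeckeRelations t n ℓ κ (heckeL K t n ℓ κ) (heckeT K t n ℓ κ) :=
  .of_heckeRel (fun _ _ h => RingQuot.mkAlgHom_rel K h) (fun k => (heckeL_val K t n ℓ κ k).symm)
    fun k => (heckeT_val K t n ℓ κ k).symm

theorem adjoin_heckeGenerators :
    Algebra.adjoin K (heckeGenerators n (heckeL K t n ℓ κ) (heckeT K t n ℓ κ)) = ⊤ := by
  refine Algebra.eq_top_iff.2 fun x => ?_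
  obtain ⟨x, rfl⟩ := RingQuot.mkAlgHom_surjective K (HeckeRel K t n ℓ κ) x
  induction x using FreeAlgebra.induction with
  | grade0 a => simpa only [AlgHom.commutes] using Subalgebra.algebraMap_mem _ a
  | grade1 g =>
    refine Algebra.subset_adjoin ?_
    cases g with
    | L k => exact .inl ⟨k, k.2, heckeL_val K t n ℓ κ k⟩
    | T k => exact .inr ⟨k, Nat.add_lt_of_lt_sub k.2, heckeT_val K t n ℓ κ k⟩
  | mul x y hx hy => simpa only [map_mul] using mul_mem hx hy
  | add x y hx hy => simpa only [map_add] using add_mem hx hy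

variable {K t n ℓ κ}

theorem HeckeRelations.exists_algHom (hH : HeckeRelations t n ℓ κ L T) :
    ∃ ψ : CycHecke K t n ℓ κ →ₐ[K] B,
      (∀ k < n, ψ (heckeL K t n ℓ κ k) = L k) ∧
        ∀ k, k + 1 < n → ψ (heckeT K t n ℓ κ k) = T k := by
  let φ : FreeAlgebra K (HeckeGen n) →ₐ[K] B := FreeAlgebra.lift K fun
    | .L k => L k
    | .T k => T k
  have hL (k : Fin n) : φ (hL K k) = L k := FreeAlgebra.lift_ι_apply _ _
  have hT (k : Fin (n - 1)) : φ (hT K k) = T k := FreeAlgebra.lift_ι_apply _ _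
  refine ⟨RingQuot.liftAlgHom K ⟨φ, fun _ _ => hH.map_eq_of_heckeRel hL hT⟩, fun k hk => ?_,
    fun k hk => ?_⟩
  · rw [heckeL_val K t n ℓ κ ⟨k, hk⟩, Lgen, RingQuot.liftAlgHom_mkAlgHom_apply, hL]
  · rw [heckeT_val K t n ℓ κ ⟨k, Nat.lt_sub_of_add_lt hk⟩, Tgen,
      RingQuot.liftAlgHom_mkAlgHom_apply, hT]

end Presentation

section AxialDistances

variable {K : Type*} [Field K] {t : Kˣ} {n ℓ : ℕ} {κ : ℕ → ℤ} {T : StdTableau ℓ n} {k : ℕ}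

theorem intertwinerCoeff_qint (t : Kˣ) (c d : ℤ) :
    intertwinerCoeff (t : K) (qint t c) (qint t d) = -(qint (t : K) (c - d))⁻¹ := by
  rw [intertwinerCoeff, ← zpow_eq_one_add_mul_qint t.ne_zero, ← neg_sub, div_neg,
    qint_sub_qint t.ne_zero, div_mul_cancel_left₀ (zpow_ne_zero d t.ne_zero)]

theorem neg_inv_qint_rhoTab (t : Kˣ) (κ : ℕ → ℤ) (T : StdTableau ℓ n) (k : ℕ) :
    -(qint (t : K) (rhoTab κ T (k + 1)))⁻¹ = diagCoeff t κ k T :=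
  (intertwinerCoeff_qint t _ _).symm

theorem SeparatesF.qint_rhoTab_ne_zero (hs : SeparatesF t n ℓ κ) (T : StdTableau ℓ n)
    (hk : k + 1 < n) : qint (t : K) (rhoTab κ T (k + 1)) ≠ 0 :=
  fun h => hs.qcontent_path_ne_succ T hk ((qint_eq_qint_iff t.ne_zero).2 h)

theorem SeparatesF.qint_one_add_rhoTab_div (hs : SeparatesF t n ℓ κ) (T : StdTableau ℓ n)
    (hk : k + 1 < n) :
    qint (t : K) (1 + rhoTab κ T (k + 1)) / qint (t : K) (rhoTab κ T (k + 1)) =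
      t - diagCoeff t κ k T := by
  rw [add_comm, qint_add_one' t.ne_zero, add_div, one_div,
    mul_div_cancel_right₀ _ (hs.qint_rhoTab_ne_zero T hk), ← neg_inv_qint_rhoTab, sub_neg_eq_add]

theorem StdTableau.Swappable.qint_quotient_eq (h : T.Swappable k) (hs : SeparatesF t n ℓ κ) :
    qint (t : K) (1 + rhoTab κ T (k + 1)) * qint (t : K) (1 + rhoTab κ (T.swap k) (k + 1)) /
        (qint (t : K) (rhoTab κ T (k + 1)) * qint (t : K) (rhoTab κ (T.swap k) (k + 1))) =
      t + diagCoeff t κ k T * diagCoeff t κ k (T.swap k) := by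
  rw [mul_div_mul_comm, hs.qint_one_add_rhoTab_div T h.1, hs.qint_one_add_rhoTab_div _ h.1,
    h.diagCoeff_swap hs]
  ring

end AxialDistances

section OptionalTableaux

variable {K : Type*} [Field K] {t : Kˣ} {n ℓ : ℕ} {κ : ℕ → ℤ} {α : ℕ → StdTableau ℓ n → K}

theorem forall_oSwapO_iff {M : Type*} [AddCommGroup M] [Module K M] {a : K} {x y : M} {k : ℕ}
    {U : StdTableau ℓ n} (g : StdTableau ℓ n → M) (hk : k + 1 < n)
    (ha : ¬ U.Swappable k → a = 0) :
    ((∀ V, oSwapO U (k + 1) = some V →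
        x = a • g V - (qint (t : K) (rhoTab κ U (k + 1)))⁻¹ • y) ∧
      (oSwapO U (k + 1) = none → x = -((qint (t : K) (rhoTab κ U (k + 1)))⁻¹ • y))) ↔
      x = a • g (U.swap k) + diagCoeff t κ k U • y := by
  rw [← neg_inv_qint_rhoTab, neg_smul, ← sub_eq_add_neg]
  by_cases h : U.Swappable k
  · simp [h.oSwapO_eq_some]
  · simp [StdTableau.oSwapO_eq_none hk h, ha h]

theorem mul_aE_oSwap (h0 : ∀ k T, k + 1 < n → ¬ T.Swappable k → α (k + 1) T = 0) {j k : ℕ}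
    (hk : k + 1 < n) (T : StdTableau ℓ n) :
    α (k + 1) T * aE α j (oSwap (some T) (k + 1)) = α (k + 1) T * α j (T.swap k) := by
  by_cases h : T.Swappable k
  · rw [oSwap, Option.bind_some, h.oSwapO_eq_some, aE, Option.elim_some]
  · rw [h0 k T hk h, zero_mul, zero_mul]

theorem mul_aE_oSwap_mul_aE_oSwap_oSwap
    (h0 : ∀ k T, k + 1 < n → ¬ T.Swappable k → α (k + 1) T = 0) {i j k : ℕ} (hj : j + 1 < n)
    (hk : k + 1 < n) (T : StdTableau ℓ n) :
    α (k + 1) T * aE α (j + 1) (oSwap (some T) (k + 1)) *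
        aE α i (oSwap (oSwap (some T) (k + 1)) (j + 1)) =
      α (k + 1) T * α (j + 1) (T.swap k) * α i ((T.swap k).swap j) := by
  by_cases h : T.Swappable k
  · have hT : oSwap (some T) (k + 1) = some (T.swap k) := h.oSwapO_eq_some
    rw [hT, mul_assoc, mul_assoc, ← mul_aE_oSwap h0 hj, aE, Option.elim_some]
  · simp only [h0 k T hk h, zero_mul]

theorem IsSeminormalCoeff.of_oSwapO (hs : SeparatesF t n ℓ κ)
    (hzero : ∀ (r : ℕ) (T : StdTableau ℓ n), 1 ≤ r → r < n → oSwapO T r = none → α r T = 0)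
    (hmul : ∀ (r : ℕ) (T V : StdTableau ℓ n), 1 ≤ r → r < n → oSwapO T r = some V →
      α r T * α r V =
        qint (t : K) (1 + rhoTab κ T r) * qint (t : K) (1 + rhoTab κ V r) /
          (qint (t : K) (rhoTab κ T r) * qint (t : K) (rhoTab κ V r)))
    (hbraid : ∀ (r : ℕ) (T : StdTableau ℓ n), 1 ≤ r → r + 1 < n →
      aE α r (some T) * aE α (r + 1) (oSwap (some T) r) *
          aE α r (oSwap (oSwap (some T) r) (r + 1)) =
        aE α (r + 1) (some T) * aE α r (oSwap (some T) (r + 1)) *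
          aE α (r + 1) (oSwap (oSwap (some T) (r + 1)) r))
    (hfar : ∀ (r k : ℕ) (T : StdTableau ℓ n), 1 ≤ r → r + 1 < k → k < n →
      α r T * aE α k (oSwapO T r) = α k T * aE α r (oSwapO T k)) :
    IsSeminormalCoeff t κ fun k => α (k + 1) := by
  have h0 (k : ℕ) (T : StdTableau ℓ n) (hk : k + 1 < n) (h : ¬ T.Swappable k) :
      α (k + 1) T = 0 :=
    hzero (k + 1) T (by omega) hk (StdTableau.oSwapO_eq_none hk h)
  refine ⟨h0, fun k T h => ?_, fun j k T hjk hk => ?_, fun k T hk => ?_⟩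
  · rw [hmul (k + 1) T _ (by omega) h.1 h.oSwapO_eq_some, h.qint_quotient_eq hs]
  · rw [← mul_aE_oSwap h0 (by omega), ← mul_aE_oSwap h0 hk]
    exact hfar (j + 1) (k + 1) T (by omega) (by omega) hk
  · rw [← mul_aE_oSwap_mul_aE_oSwap_oSwap h0 (by omega) (by omega),
      ← mul_aE_oSwap_mul_aE_oSwap_oSwap h0 (by omega) (by omega)]
    exact hbraid (k + 1) T (by omega) (by omega)

end OptionalTableaux

section Translation

variable {K : Type} [Field K] {t : Kˣ} {n ℓ : ℕ} {κ : ℕ → ℤ} {α : ℕ → StdTableau ℓ n → K}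
  {γ0 : Multipartition ℓ n → Kˣ} {f : StdTableau ℓ n → StdTableau ℓ n → CycHecke K t n ℓ κ}
  {γ : StdTableau ℓ n → Kˣ}

theorem seminormalProps_iff (hα : IsSeminormalCoeff t κ fun k => α (k + 1)) :
    SeminormalProps K t n ℓ κ α γ0 f γ ↔
      IsSeminormalBasis t κ (heckeL K t n ℓ κ) (heckeT K t n ℓ κ) (fun k => α (k + 1)) γ f ∧
        ∀ I : StdTableau ℓ n, I.IsInitial → γ I = γ0 I.shape := by
  have hright (S U : StdTableau ℓ n) {k : ℕ} (hk : k + 1 < n) :=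
    forall_oSwapO_iff (t := t) (κ := κ) (x := f S U * heckeT K t n ℓ κ k) (y := f S U) (f S) hk
      (hα.eq_zero k U hk)
  have hleft (S U : StdTableau ℓ n) {k : ℕ} (hk : k + 1 < n) :=
    forall_oSwapO_iff (t := t) (κ := κ) (x := heckeT K t n ℓ κ k * f S U) (y := f S U) (f · U) hk
      (hα.eq_zero k S hk)
  simp only [SeminormalProps, StdTableau.entry_eq_tlamEntry_iff, ← heckeL_val, ← heckeT_val]
  constructor
  · rintro ⟨⟨hlin, hspan⟩, hL, hT, hT', hmul, hγ⟩
    refine ⟨⟨hlin, hspan, fun S U h k hk => (hL S U h ⟨k, hk⟩).1,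
      fun S U h k hk => (hL S U h ⟨k, hk⟩).2,
      fun S U h k hk => (hright S U hk).1 (hT S U h ⟨k, by omega⟩),
      fun S U h k hk => (hleft S U hk).1 (hT' S U h ⟨k, by omega⟩), fun S U V W h h' => ?_⟩, hγ⟩
    split_ifs with hUV
    exacts [(hmul S U V W h h').1 hUV, (hmul S U V W h h').2 hUV]
  · rintro ⟨hf, hγ⟩
    exact ⟨⟨hf.linearIndependent, hf.span_eq_top⟩,
      fun S U h k => ⟨hf.mul_L S U h k k.2, hf.L_mul S U h k k.2⟩,
      fun S U h r => (hright S U (by omega)).2 (hf.mul_T S U h r (by omega)),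
      fun S U h r => (hleft S U (by omega)).2 (hf.T_mul S U h r (by omega)),
      fun S U V W h h' => ⟨fun hUV => (hf.mul S U V W h h').trans (if_pos hUV),
        fun hUV => (hf.mul S U V W h h').trans (if_neg hUV)⟩, hγ⟩

end Translation

/-- the Seminormal Basis Theorem: if `(K, t)` separates `Std(P_n)`
then every seminormal coefficient system `α`, together with any choice of nonzero
scalars `γ₀(λ)` for the initial tableaux `t^λ`, determines a unique seminormal basis
`{f_{S,T}}` of `H_n(K, t, κ)` with the properties (i)–(iv). -/
theorem seminormal_basis_theorem (K : Type) [Field K] (t : Kˣ) (n ℓ : ℕ) (hℓ : 1 ≤ ℓ)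
    (κ : ℕ → ℤ) (hsep : SeparatesF t n ℓ κ)
    (α : ℕ → StdTableau ℓ n → K)
    (hα0 : ∀ (r : ℕ) (T : StdTableau ℓ n), 1 ≤ r → r < n →
      oSwapO T r = none → α r T = 0)
    (hαc : ∀ (r : ℕ) (T V : StdTableau ℓ n), 1 ≤ r → r < n → oSwapO T r = some V →
      α r T * α r V =
        qint (t : K) (1 + rhoTab κ T r) * qint (t : K) (1 + rhoTab κ V r) /
          (qint (t : K) (rhoTab κ T r) * qint (t : K) (rhoTab κ V r)))
    (hαa : ∀ (r : ℕ) (T : StdTableau ℓ n), 1 ≤ r → r + 1 < n →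
      aE α r (some T) * aE α (r + 1) (oSwap (some T) r) *
          aE α r (oSwap (oSwap (some T) r) (r + 1)) =
        aE α (r + 1) (some T) * aE α r (oSwap (some T) (r + 1)) *
          aE α (r + 1) (oSwap (oSwap (some T) (r + 1)) r))
    (hαb : ∀ (r k : ℕ) (T : StdTableau ℓ n), 1 ≤ r → r < n → 1 ≤ k → k < n →
      (r + 1 < k ∨ k + 1 < r) →
      α r T * aE α k (oSwapO T r) = α k T * aE α r (oSwapO T k))
    (γ0 : Multipartition ℓ n → Kˣ) :
    ∃ (f : StdTableau ℓ n → StdTableau ℓ n → CycHecke K t n ℓ κ)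
      (γ : StdTableau ℓ n → Kˣ),
      SeminormalProps K t n ℓ κ α γ0 f γ ∧
      ∀ (f' : StdTableau ℓ n → StdTableau ℓ n → CycHecke K t n ℓ κ)
        (γ' : StdTableau ℓ n → Kˣ),
        SeminormalProps K t n ℓ κ α γ0 f' γ' →
        ∀ S T : StdTableau ℓ n, S.shape = T.shape → f' S T = f S T := by
  have hα := IsSeminormalCoeff.of_oSwapO hsep hα0 hαc hαa fun r k T hr hrk hk =>
    hαb r k T hr (by omega) (by omega) hk (.inl hrk)
  have hH := heckeRelations_cycHecke K t n ℓ κ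
  have hgen := adjoin_heckeGenerators K t n ℓ κ
  obtain ⟨ρ, hL, hT⟩ := (heckeRelations_seminormal hα hsep).exists_algHom
  have hρ : IsSeminormalRep t κ (heckeL K t n ℓ κ) (heckeT K t n ℓ κ) (fun k => α (k + 1)) ρ :=
    ⟨hL, hT⟩
  have hinj := hρ.injective hH hsep hα hgen
  obtain ⟨γ, hinit, hγ⟩ := hα.exists_gamma hsep fun I => γ0 I.shape
  obtain ⟨f, hf⟩ := hρ.exists_map_eq_smul_single hH hsep hα γ
  have hbasis := isSeminormalBasis_of_map_eq_smul_single hf hρ hinj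
    (fun _ _ _ => hρ.apply_eq_zero_of_shape_ne hα (hgen ▸ Algebra.mem_top)) hγ
  refine ⟨f, γ, (seminormalProps_iff hα).2 ⟨hbasis, hinit⟩, fun f' γ' hf' S T h => hinj ?_⟩
  obtain ⟨hf', hinit'⟩ := (seminormalProps_iff hα).1 hf'
  rw [hf S T h, hf'.map_eq_smul_single_of_isInitial hρ hsep hinj hα hγ
    (fun I hI => (hinit' I hI).trans (hinit I hI).symm) h]

end Paper
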